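/- arXiv:0710.2767 — 3 statements merged into one kernel-verified Lean document; each statement's English description precedes it below -/
import Mathlib

section
/- Let m > 3 be a prime number, s = 3 and q = p ≡ 1 (mod 3). Then P_m(0,3,h) = (1/3)·(p^{p−2} − 1) if m = p, and P_m(0,3,h) = (1/(3m))·(p^{m−1} − 1) if m ≠ p. For a ≠ 0: if m = p then P_m(a,3,h) = (1/(3p))·( p^{p−1} + 2·p^{(p−1)/3}·Re(π_3^{(p−1)/3}·χ_3(a)·ζ^{2h}) ); if m ≠ p then P_m(a,3,h) = (1/(3m))·( p^{m−1} − 1 + 2·Re L_m ), where L_m = ( (p·π_3)^{(m−1)/3} − χ̄_3(m) )·χ_3(a)·ζ^{2h} if m ≡ 1 (mod 3), and L_m = ( p^{(m−2)/3}·π_3^{(m+1)/3}·χ_3(a)·ζ^h − χ̄_3(m) )·χ_3(a)·ζ^h if m ≡ 2 (mod 3). -/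
noncomputable section

open Complex Polynomial Classical

/-- `P_m(a,s,h)`: the number of monic irreducible `f = x^m − a x^{m-1} + ⋯ + (−1)^m b`
of degree `m` over `F` with `b ∈ g^h·⟨g^s⟩`. -/
def PP (F : Type*) [Field F] [Fintype F] (g : F) (m s h : ℕ) (a : F) : ℕ :=
  Nat.card {f : Polynomial F // f.Monic ∧ f.natDegree = m ∧ Irreducible f ∧
    f.coeff (m - 1) = -a ∧ ∃ k : ℕ, (-1 : F) ^ m * f.coeff 0 = g ^ (h + s * k)}

set_option linter.unusedSectionVars false


section PolyPart
variable {F : Type*} [Field F] [Fintype F]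

def toP (n : ℕ) (c : Fin n → F) : F[X] := X ^ n + ∑ i : Fin n, C (c i) * X ^ (i : ℕ)

lemma toP_deg (n : ℕ) (c : Fin n → F) : (∑ i : Fin n, C (c i) * X ^ (i : ℕ) : F[X]).degree < n := by
  refine (Polynomial.degree_sum_le _ _).trans_lt ?_
  refine (Finset.sup_lt_iff (WithBot.bot_lt_coe n)).2 ?_
  intro i _
  exact (degree_C_mul_X_pow_le _ _).trans_lt (Nat.cast_lt.2 i.2)

lemma toP_monic (n : ℕ) (c : Fin n → F) : (toP n c).Monic :=
  monic_X_pow_add (toP_deg n c)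

lemma toP_natDegree (n : ℕ) (c : Fin n → F) : (toP n c).natDegree = n := by
  apply natDegree_eq_of_degree_eq_some
  rw [toP, degree_add_eq_left_of_degree_lt, degree_X_pow]
  rw [degree_X_pow]; exact toP_deg n c

lemma toP_coeff (n : ℕ) (c : Fin n → F) (i : Fin n) : (toP n c).coeff i = c i := by
  have h : ∀ x : Fin n, ((i : ℕ) = x) = (i = x) := fun x => by simp [Fin.ext_iff]
  simp [toP, coeff_X_pow, coeff_C_mul, h, (i.2.ne)]

lemma toP_inj (n : ℕ) : Function.Injective (toP (F := F) n) := by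
  intro c d h
  ext i
  rw [← toP_coeff n c i, h, toP_coeff]

/-- monic polynomials of degree n -/
def MM (F : Type*) [Field F] [Fintype F] (n : ℕ) : Finset F[X] := Finset.univ.map ⟨toP n, toP_inj n⟩

lemma mem_MM (n : ℕ) (f : F[X]) : f ∈ MM F n ↔ f.Monic ∧ f.natDegree = n := by
  simp only [MM, Finset.mem_map, Finset.mem_univ, true_and, Function.Embedding.coeFn_mk]
  constructor
  · rintro ⟨c, rfl⟩
    exact ⟨toP_monic n c, toP_natDegree n c⟩
  · rintro ⟨h1, h2⟩
    refine ⟨fun i => f.coeff i, ?_⟩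
    subst h2
    conv_rhs => rw [h1.as_sum]
    rw [toP, Finset.sum_range]

lemma sum_MM (n : ℕ) (w : F[X] → ℂ) : ∑ f ∈ MM F n, w f = ∑ c : Fin n → F, w (toP n c) := by
  simp [MM]

/-- monic irreducible polynomials of degree n -/
def IR (F : Type*) [Field F] [Fintype F] (n : ℕ) : Finset F[X] := (MM F n).filter Irreducible

lemma mem_IR (n : ℕ) (f : F[X]) : f ∈ IR F n ↔ f.Monic ∧ f.natDegree = n ∧ Irreducible f := by
  simp [IR, mem_MM, and_assoc]

open UniqueFactorizationMonoid in
lemma deg_decomp (n : ℕ) (f : F[X]) (hf : f ∈ MM F n) :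
    n = ∑ d ∈ Finset.range (n+1), ∑ P ∈ IR F d, ∑ k ∈ Finset.Icc 1 n, if P ^ k ∣ f then d else 0 := by
  rw [mem_MM] at hf
  obtain ⟨hf, hn⟩ := hf
  have hf0 : f ≠ 0 := hf.ne_zero
  set s := normalizedFactors f with hs
  have hirr : ∀ P ∈ s, Irreducible P := fun P hP => irreducible_of_normalized_factor P hP
  have hmon : ∀ P ∈ s, P.Monic := fun P hP => by
    have := normalize_normalized_factor P hP
    rw [← this]; exact monic_normalize (hirr P hP).ne_zero
  have hprod : s.prod = f := by
    rw [hs, prod_normalizedFactors_eq hf0, hf.normalize_eq_self]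
  have hdeg : n = (s.map natDegree).sum := by
    rw [← hn, ← hprod, natDegree_multiset_prod_of_monic _ hmon]
  have hcount : ∀ d, ∀ P ∈ IR F d, ∑ k ∈ Finset.Icc 1 n, (if P ^ k ∣ f then d else 0) = s.count P * d := by
    intro d P hP
    rw [mem_IR] at hP
    have h1 : ∀ k, P ^ k ∣ f ↔ k ≤ s.count P := by
      intro k
      rw [pow_dvd_iff_le_emultiplicity, emultiplicity_eq_count_normalizedFactors hP.2.2 hf0,
        hP.1.normalize_eq_self, Nat.cast_le]
    have h2 : s.count P ≤ n := by
      have := natDegree_le_of_dvd ((h1 _).2 le_rfl) hf0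
      rw [natDegree_pow, hn] at this
      have := hP.2.2.natDegree_pos
      nlinarith
    simp only [h1]
    rw [← Finset.sum_filter, Finset.sum_const]
    have : (Finset.Icc 1 n).filter (fun k => k ≤ s.count P) = Finset.Icc 1 (s.count P) := by
      ext k; simp; omega
    rw [this]; simp
  rw [Finset.sum_congr rfl fun d _ => Finset.sum_congr rfl (hcount d)]
  conv_lhs => rw [hdeg, Finset.sum_multiset_map_count]
  rw [← Finset.sum_fiberwise_of_maps_to (s := s.toFinset) (t := Finset.range (n+1)) (g := natDegree)]
  · refine Finset.sum_congr rfl fun d _ => ?_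
    have hsub : {P ∈ s.toFinset | P.natDegree = d} ⊆ IR F d := by
      intro P hP
      simp at hP
      rw [mem_IR]
      exact ⟨hmon P hP.1, hP.2, hirr P hP.1⟩
    rw [← Finset.sum_subset hsub]
    · refine Finset.sum_congr rfl fun P hP => ?_
      simp at hP
      simp [hP.2]
    · intro P hP hP'
      rw [mem_IR] at hP
      have : P ∉ s := by
        intro h; apply hP'; simp [h, hP.2.1]
      simp [Multiset.count_eq_zero_of_notMem this]
  · intro P hP
    simp at hP
    have := natDegree_le_of_dvd (dvd_of_mem_normalizedFactors hP) hf0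
    simp; omega

lemma sum_dvd (n d k : ℕ) (P : F[X]) (hP : P ∈ IR F d) (l : F[X] → ℂ)  (h1 : l 1 = 1)
    (hl : ∀ f g : F[X], f.Monic → g.Monic → l (f * g) = l f * l g) :
    (∑ f ∈ MM F n, if P ^ k ∣ f then l f else 0) =
      if d * k ≤ n then l P ^ k * ∑ f ∈ MM F (n - d * k), l f else 0 := by
  rw [mem_IR] at hP
  have hPk : (P ^ k).natDegree = d * k := by rw [natDegree_pow, hP.2.1, mul_comm]
  have hlk : l (P ^ k) = l P ^ k := by
    induction k with
    | zero => simp [h1]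
    | succ k ih => rw [pow_succ, hl _ _ (hP.1.pow k) hP.1, ih (by rw [natDegree_pow, hP.2.1, mul_comm]), pow_succ]
  have hm := hP.1.pow k
  split_ifs with h
  · rw [Finset.mul_sum, ← Finset.sum_filter]
    symm
    refine Finset.sum_bij (fun f _ => P ^ k * f) ?_ ?_ ?_ ?_
    · intro f hf
      rw [mem_MM] at hf
      rw [Finset.mem_filter, mem_MM]
      refine ⟨⟨hm.mul hf.1, ?_⟩, dvd_mul_right _ _⟩
      rw [hm.natDegree_mul hf.1, hPk, hf.2]; omega
    · intro f _ g _ e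
      exact mul_left_cancel₀ hm.ne_zero e
    · intro f hf
      rw [Finset.mem_filter, mem_MM] at hf
      obtain ⟨⟨hf1, hf2⟩, g, rfl⟩ := hf
      have hg := hm.of_mul_monic_left hf1
      refine ⟨g, ?_, rfl⟩
      rw [mem_MM]
      rw [hm.natDegree_mul hg, hPk] at hf2
      exact ⟨hg, by omega⟩
    · intro f hf
      rw [mem_MM] at hf
      rw [hl _ _ hm hf.1, hlk]
  · apply Finset.sum_eq_zero
    intro f hf
    rw [mem_MM] at hf
    rw [if_neg]
    intro hd
    have := natDegree_le_of_dvd hd hf.1.ne_zero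
    omega

/-- power sums -/
def SS (F : Type*) [Field F] [Fintype F] (l : F[X] → ℂ) (n : ℕ) : ℂ :=
  ∑ x ∈ n.divisorsAntidiagonal, x.1 * ∑ P ∈ IR F x.1, l P ^ x.2

def AA (F : Type*) [Field F] [Fintype F] (l : F[X] → ℂ) (n : ℕ) : ℂ := ∑ f ∈ MM F n, l f

lemma newton (l : F[X] → ℂ) (h1 : l 1 = 1)
    (hl : ∀ f g : F[X], f.Monic → g.Monic → l (f * g) = l f * l g) (n : ℕ) :
    n * AA F l n = ∑ j ∈ Finset.Icc 1 n, SS F l j * AA F l (n - j) := by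
  have e1 : n * AA F l n = ∑ d ∈ Finset.range (n+1), ∑ k ∈ Finset.Icc 1 n,
      if d * k ≤ n then (d * ∑ P ∈ IR F d, l P ^ k) * AA F l (n - d * k) else 0 := by
    calc n * AA F l n = ∑ f ∈ MM F n, (n : ℂ) * l f := by rw [AA, Finset.mul_sum]
      _ = ∑ f ∈ MM F n, ∑ d ∈ Finset.range (n+1), ∑ P ∈ IR F d, ∑ k ∈ Finset.Icc 1 n,
            (d : ℂ) * if P ^ k ∣ f then l f else 0 := by
          refine Finset.sum_congr rfl fun f hf => ?_
          conv_lhs => rw [deg_decomp n f hf]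
          push_cast
          simp only [Finset.sum_mul]
          refine Finset.sum_congr rfl fun d _ => Finset.sum_congr rfl fun P _ =>
            Finset.sum_congr rfl fun k _ => ?_
          split_ifs <;> simp
      _ = ∑ d ∈ Finset.range (n+1), ∑ k ∈ Finset.Icc 1 n, ∑ P ∈ IR F d, 
            (d : ℂ) * ∑ f ∈ MM F n, if P ^ k ∣ f then l f else 0 := by
          rw [Finset.sum_comm]
          refine Finset.sum_congr rfl fun d _ => ?_
          rw [Finset.sum_comm, Finset.sum_comm (s := Finset.Icc 1 n)]
          refine Finset.sum_congr rfl fun P _ => ?_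
          rw [Finset.sum_comm]
          simp only [Finset.mul_sum]
      _ = _ := by
          refine Finset.sum_congr rfl fun d _ => Finset.sum_congr rfl fun k _ => ?_
          rw [Finset.sum_congr rfl fun P hP => by rw [sum_dvd n d k P hP l h1 hl]]
          split_ifs
          · rw [Finset.mul_sum, Finset.sum_mul]
            exact Finset.sum_congr rfl fun P _ => by rw [AA, mul_assoc]
          · simp
  rw [e1]
  rw [← Finset.sum_product', ← Finset.sum_filter]
  simp only [SS, Finset.sum_mul]
  have hz : ∀ x ∈ {x ∈ Finset.range (n+1) ×ˢ Finset.Icc 1 n | x.1 * x.2 ≤ n},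
      x ∉ {x ∈ Finset.Icc 1 n ×ˢ Finset.Icc 1 n | x.1 * x.2 ≤ n} → 
      (x.1 * ∑ P ∈ IR F x.1, l P ^ x.2) * AA F l (n - x.1 * x.2) = 0 := by
    intro x hx hx'
    have : x.1 = 0 := by
      simp at hx hx'
      by_contra h0
      have := hx' (by omega) (by omega) (by omega) (by omega)
      omega
    simp [this]
  rw [← Finset.sum_subset _ hz]
  · rw [← Finset.sum_fiberwise_of_maps_to (t := Finset.Icc 1 n) (g := fun x => x.1 * x.2)]
    · refine Finset.sum_congr rfl fun j hj => ?_
      simp at hj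
      refine Finset.sum_congr ?_ ?_
      · ext ⟨d, k⟩
        simp only [Finset.mem_filter, Finset.mem_product, Finset.mem_Icc, Nat.mem_divisorsAntidiagonal]
        constructor
        · rintro ⟨⟨⟨h1, h2⟩, h3⟩, h4⟩
          exact ⟨h4, by omega⟩
        · rintro ⟨h4, h5⟩
          have hd : d ≠ 0 := by rintro rfl; simp at h4; omega
          have hk : k ≠ 0 := by rintro rfl; simp at h4; omega
          have : d ≤ d * k := Nat.le_mul_of_pos_right _ (by omega)
          have : k ≤ d * k := Nat.le_mul_of_pos_left _ (by omega)
          omega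
      · intro x hx
        rw [Nat.mem_divisorsAntidiagonal] at hx
        rw [hx.1]
    · intro x hx
      simp at hx ⊢
      refine ⟨?_, hx.2⟩
      have := Nat.mul_pos (Nat.pos_of_ne_zero (by omega : x.1 ≠ 0)) (Nat.pos_of_ne_zero (by omega : x.2 ≠ 0))
      omega
  · intro x hx
    simp at hx ⊢
    omega

lemma SS_of_AA (l : F[X] → ℂ) (h1 : l 1 = 1)
    (hl : ∀ f g : F[X], f.Monic → g.Monic → l (f * g) = l f * l g)
    (h0 : AA F l 0 = 1) (h2 : ∀ n, 2 ≤ n → AA F l n = 0) (n : ℕ) :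
    SS F l (n+1) = (-1)^n * AA F l 1 ^ (n+1) := by
  induction n with
  | zero => have := newton l h1 hl 1; simp [h0] at this; simp [this]
  | succ n ih =>
    have := newton l h1 hl (n+2)
    rw [h2 (n+2) (by omega), Finset.sum_Icc_succ_top (by omega), Finset.sum_Icc_succ_top (by omega)] at this
    rw [Finset.sum_eq_zero (s := Finset.Icc 1 n)] at this
    · rw [show n + 2 - (n+1) = 1 by omega, show n + 1 + 1 = n + 2 by omega, Nat.sub_self, h0, ih] at this
      rw [show n + 1 + 1 = n + 2 by omega]
      linear_combination -this
    · intro j hj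
      simp at hj
      rw [h2 _ (by omega), mul_zero]

lemma SS_of_AA' (l : F[X] → ℂ) (h1 : l 1 = 1) (q : ℂ)
    (hl : ∀ f g : F[X], f.Monic → g.Monic → l (f * g) = l f * l g)
    (h0 : AA F l 0 = 1) (h2 : ∀ n, AA F l (n+1) = (q - 1) * q ^ n) (n : ℕ) (hn : 1 ≤ n) :
    SS F l n = q ^ n - 1 := by
  induction n using Nat.strong_induction_on with
  | _ n ih =>
    obtain ⟨n, rfl⟩ : ∃ k, n = k + 1 := ⟨n-1, by omega⟩
    have key := newton l h1 hl (n+1)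
    rw [h2, Finset.sum_Icc_succ_top (by omega), Nat.sub_self, h0] at key
    have e : ∀ N, N ≤ n → ∑ j ∈ Finset.Icc 1 N, SS F l j * AA F l (n + 1 - j) = 
       N * (q - 1) * q ^ n - (q ^ n - q ^ (n - N)) := by
      intro N hN
      induction N with
      | zero => simp
      | succ N ihN =>
        rw [Finset.sum_Icc_succ_top (by omega), ihN (by omega), ih (N+1) (by omega) (by omega)]
        obtain ⟨r, rfl⟩ : ∃ r, n = N + 1 + r := ⟨n - (N+1), by omega⟩
        rw [show N + 1 + r + 1 - (N + 1) = r + 1 by omega, h2, show N + 1 + r - N = r + 1 by omega,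
          show N + 1 + r - (N + 1) = r by omega]
        push_cast
        ring
    rw [e n le_rfl, Nat.sub_self] at key
    push_cast at key
    linear_combination -key
end PolyPart


section CharPart
variable {F : Type*} [Field F] [Fintype F]

def lam (χ : MulChar F ℂ) (ψ : AddChar F ℂ) (f : F[X]) : ℂ :=
  χ ((-1) ^ f.natDegree * f.coeff 0) * ψ (- f.nextCoeff)

variable (χ : MulChar F ℂ) (ψ : AddChar F ℂ)

lemma lam_one : lam χ ψ 1 = 1 := by
  simp [lam, nextCoeff]

lemma lam_mul (f g : F[X]) (hf : f.Monic) (hg : g.Monic) :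
    lam χ ψ (f * g) = lam χ ψ f * lam χ ψ g := by
  rw [lam, lam, lam, hf.natDegree_mul hg, mul_coeff_zero, hf.nextCoeff_mul hg, neg_add,
    AddChar.map_add_eq_mul, pow_add,
    show ((-1 : F)) ^ f.natDegree * (-1) ^ g.natDegree * (f.coeff 0 * g.coeff 0) =
      ((-1) ^ f.natDegree * f.coeff 0) * ((-1) ^ g.natDegree * g.coeff 0) by ring, map_mul]
  ring

lemma AA_zero : AA F (lam χ ψ) 0 = 1 := by
  rw [AA, sum_MM]
  simp [toP, lam_one]

lemma AA_one : AA F (lam χ ψ) 1 = gaussSum χ ψ := by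
  rw [AA, sum_MM, gaussSum]
  refine Fintype.sum_equiv ((Equiv.funUnique (Fin 1) F).trans (Equiv.neg F)) _ _ ?_
  intro c
  have h0 := toP_coeff 1 c 0
  simp at h0
  simp [lam, toP_natDegree, nextCoeff, h0]

lemma AA_ge (n : ℕ) : AA F (lam χ ψ) (n + 2) =
    (∑ x, χ x) * (∑ x, ψ x) * (Fintype.card F : ℂ) ^ n := by
  rw [AA, sum_MM]
  have h : ∀ c : Fin (n+2) → F, lam χ ψ (toP (n+2) c) = 
      ∏ i : Fin (n+2), (if i = 0 then χ ((-1)^(n+2) * c i) else if i = Fin.last (n+1) then ψ (- c i) else 1) := by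
    intro c
    have h0 := toP_coeff (n+2) c 0
    have h1 := toP_coeff (n+2) c (Fin.last (n+1))
    simp at h0 h1
    rw [Fin.prod_univ_succ, Fin.prod_univ_castSucc]
    have : ∀ x : Fin n, (Fin.castSucc x).succ ≠ Fin.last (n+1) := by
      intro x; rw [Ne, Fin.ext_iff]; simp; omega
    simp [lam, toP_natDegree, nextCoeff, h0, h1, this]
  simp only [h]
  have := Finset.sum_prod_piFinset (Finset.univ : Finset F) 
    (fun (i : Fin (n+2)) x => (if i = 0 then χ ((-1)^(n+2) * x) else if i = Fin.last (n+1) then ψ (- x) else 1))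
  rw [Fintype.piFinset_univ] at this
  rw [this]
  rw [Fin.prod_univ_succ, Fin.prod_univ_castSucc]
  have h3 : ∀ x : Fin n, (Fin.castSucc x).succ ≠ Fin.last (n+1) := by
    intro x; rw [Ne, Fin.ext_iff]; simp; omega
  have e1 : ∑ x, χ ((-1)^(n+2) * x) = ∑ x, χ x := 
    Fintype.sum_equiv (Equiv.mulLeft₀ ((-1)^(n+2)) (by simp)) _ _ (fun x => rfl)
  have e2 : ∑ x, ψ (-x) = ∑ x, ψ x := Fintype.sum_equiv (Equiv.neg F) _ _ (fun x => rfl)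
  simp only [h3, Fin.succ_ne_zero, if_true, if_false, Fin.succ_last, e1]
  simp
  rw [e2]
  ring

lemma SS_ne (h : χ ≠ 1 ∨ ψ ≠ 1) (n : ℕ) (hn : Odd n) : SS F (lam χ ψ) n = gaussSum χ ψ ^ n := by
  obtain ⟨k, rfl⟩ := hn
  rw [SS_of_AA _ (lam_one χ ψ) (lam_mul χ ψ) (AA_zero χ ψ), AA_one]
  · simp [pow_mul]
  · intro n hn
    obtain ⟨n, rfl⟩ : ∃ k, n = k + 2 := ⟨n-2, by omega⟩
    rw [AA_ge]
    rcases h with h | h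
    · rw [MulChar.sum_eq_zero_of_ne_one h]; simp
    · rw [AddChar.sum_eq_zero_of_ne_one h]; simp

lemma SS_one (n : ℕ) (hn : 1 ≤ n) : SS F (lam (1 : MulChar F ℂ) 1) n = (Fintype.card F : ℂ) ^ n - 1 := by
  have hc : (Nat.card Fˣ : ℂ) = Fintype.card F - 1 := by
    rw [Nat.card_eq_fintype_card, Fintype.card_units, Nat.cast_sub Fintype.card_pos]; simp
  have hs : ∑ x : F, (1 : MulChar F ℂ) x = Fintype.card F - 1 := by
    rw [MulChar.sum_one_eq_card_units, ← hc, Nat.card_eq_fintype_card]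
  apply SS_of_AA' _ (lam_one 1 1) _ (lam_mul 1 1) (AA_zero 1 1) _ _ hn
  intro n
  cases n with
  | zero => rw [AA_one, gaussSum_one_one, hc]; simp
  | succ n => rw [AA_ge, hs]; simp; ring

lemma sum_IR_one (w : F[X] → ℂ) : ∑ P ∈ IR F 1, w P = ∑ c : F, w (X - C c) := by
  symm
  refine Finset.sum_bij (fun c _ => X - C c) ?_ ?_ ?_ ?_
  · intro c _
    rw [mem_IR]
    exact ⟨monic_X_sub_C c, natDegree_X_sub_C c, irreducible_X_sub_C c⟩
  · intro c _ d _ h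
    simpa using h
  · intro P hP
    rw [mem_IR] at hP
    refine ⟨- P.coeff 0, Finset.mem_univ _, ?_⟩
    rw [hP.1.eq_X_add_C hP.2.1]
    simp
  · intros; rfl

lemma SS_prime (m : ℕ) (hm : m.Prime) : SS F (lam χ ψ) m =
    (∑ c : F, χ (c ^ m) * ψ (m * c)) + m * ∑ P ∈ IR F m, lam χ ψ P := by
  rw [SS, Nat.sum_divisorsAntidiagonal (f := fun a b => (a : ℂ) * ∑ P ∈ IR F a, lam χ ψ P ^ b),
    hm.sum_divisors]
  rw [add_comm]
  simp only [Nat.div_one, Nat.div_self hm.pos, sum_IR_one, pow_one, Nat.cast_one, one_mul]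
  congr 1
  refine Finset.sum_congr rfl fun c _ => ?_
  have : lam χ ψ (X - C c) = χ c * ψ c := by
    simp [lam, nextCoeff]
  rw [this, mul_pow, ← map_pow, ← AddChar.map_nsmul_eq_pow, nsmul_eq_mul]

def QQ (m : ℕ) (a : F) : ℂ := (∑ c : F, if m * c = a then χ (c ^ m) else 0) +
  m * ∑ P ∈ IR F m, if - P.nextCoeff = a then χ ((-1) ^ m * P.coeff 0) else 0

lemma card_mul_QQ (hψ : ψ.IsPrimitive) (m : ℕ) (hm : m.Prime) (a : F) :
    (Fintype.card F : ℂ) * QQ χ m a = ∑ t : F, ψ (- (t * a)) * SS F (lam χ (ψ.mulShift t)) m := by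
  have key : ∀ x : F, ∑ t : F, ψ (-(t * a)) * ψ (t * x) = if x = a then (Fintype.card F : ℂ) else 0 := by
    intro x
    have := AddChar.sum_mulShift (x - a) hψ
    simp only [sub_eq_zero, Nat.cast_ite, Nat.cast_zero] at this
    rw [← this]
    refine Finset.sum_congr rfl fun t _ => ?_
    rw [← AddChar.map_add_eq_mul]; congr 1; ring
  simp only [SS_prime _ _ m hm, mul_add, Finset.sum_add_distrib, QQ]
  congr 1
  · simp only [Finset.mul_sum]
    rw [Finset.sum_comm]
    refine Finset.sum_congr rfl fun c _ => ?_
    have := key (m * c)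
    simp only [AddChar.mulShift_apply]
    rw [Finset.sum_congr rfl fun t _ => mul_left_comm _ _ _, ← Finset.mul_sum, this]
    split_ifs <;> ring
  · simp only [Finset.mul_sum]
    rw [Finset.sum_comm]
    refine Finset.sum_congr rfl fun P hP => ?_
    have := key (- P.nextCoeff)
    rw [mem_IR] at hP
    simp only [AddChar.mulShift_apply, lam, hP.2.1]
    rw [Finset.sum_congr rfl fun t _ => show _ = (m * χ ((-1) ^ m * P.coeff 0)) * (ψ (-(t * a)) * ψ (t * -P.nextCoeff)) by ring, ← Finset.mul_sum, this]
    split_ifs <;> ring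

lemma QQ_one (hψ : ψ.IsPrimitive) (m : ℕ) (hm : m.Prime) (hodd : Odd m) (a : F) :
    QQ (1 : MulChar F ℂ) m a = (Fintype.card F : ℂ) ^ (m - 1) - if a = 0 then 1 else 0 := by
  have hc : (Fintype.card F : ℂ) ≠ 0 := by simp
  apply mul_left_cancel₀ hc
  rw [card_mul_QQ 1 ψ hψ m hm]
  have : ∀ t : F, ψ (-(t * a)) * SS F (lam 1 (ψ.mulShift t)) m =
     (if t = 0 then (Fintype.card F : ℂ) ^ m else 0) - ψ (t * -a) := by
    intro t
    split_ifs with h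
    · subst h
      simp [AddChar.mulShift_zero, SS_one m hm.one_le]
    · have h1 : ψ.mulShift t ≠ 1 := hψ h
      rw [SS_ne _ _ (Or.inr h1) m hodd, gaussSum_one_left h1, hodd.neg_one_pow]
      simp
  simp only [this, Finset.sum_sub_distrib]
  rw [AddChar.sum_mulShift _ hψ]
  simp
  rw [mul_sub, ← pow_succ', Nat.sub_add_cancel hm.one_le]
  simp

lemma gauss_shift (hχ : χ ≠ 1) (t : F) : gaussSum χ (ψ.mulShift t) = χ⁻¹ t * gaussSum χ ψ := by
  by_cases ht : t = 0
  · subst ht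
    rw [AddChar.mulShift_zero, gaussSum_one_right hχ, MulChar.map_zero, zero_mul]
  · exact gaussSum_mulShift_eq χ ψ (Units.mk0 t ht)

lemma QQ_ne (hχ : χ ≠ 1) (hψ : ψ.IsPrimitive) (m : ℕ) (hm : m.Prime) (hodd : Odd m) (a : F)
    (hχm : χ ^ m ≠ 1) :
    (Fintype.card F : ℂ) * QQ χ m a = gaussSum χ ψ ^ m * ((χ ^ m) (-a) * gaussSum (χ⁻¹ ^ m) ψ) := by
  have h2 := gauss_shift (χ⁻¹ ^ m) ψ (by simpa using hχm) (-a)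
  rw [inv_pow, inv_inv, ← inv_pow] at h2
  rw [card_mul_QQ χ ψ hψ m hm, ← h2, gaussSum.eq_def (χ⁻¹ ^ m), Finset.mul_sum]
  refine Finset.sum_congr rfl fun t _ => ?_
  rw [SS_ne _ _ (Or.inl hχ) m hodd, gauss_shift χ ψ hχ, mul_pow, MulChar.pow_apply' _ hm.ne_zero,
    AddChar.mulShift_apply]
  rw [show -(t * a) = -a * t by ring]
  ring
end CharPart


lemma uniq_rep (p a b a3 b3 : ℤ) (hp : 0 < p) (h1 : a ^ 2 + 3 * b ^ 2 = p) (h2 : a3 ^ 2 + 3 * b3 ^ 2 = p)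
    (ha : a ≡ -1 [ZMOD 3]) (ha3 : a3 ≡ -1 [ZMOD 3]) (hd : p ∣ a * b3 - a3 * b) : a = a3 ∧ b = b3 := by
  obtain ⟨c, hc⟩ := hd
  have e : (a * a3 + 3 * b * b3) ^ 2 + 3 * (p * c) ^ 2 = p ^ 2 := by
    rw [← hc]
    calc _ = (a ^ 2 + 3 * b ^ 2) * (a3 ^ 2 + 3 * b3 ^ 2) := by ring
      _ = _ := by rw [h1, h2]; ring
  have hc0 : c = 0 := by
    by_contra h
    have : 1 ≤ c ^ 2 := by have := sq_pos_of_ne_zero (pow_ne_zero 1 h); simp at this; nlinarith [sq_pos_of_ne_zero h]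
    nlinarith [sq_nonneg (a * a3 + 3 * b * b3), sq_pos_of_ne_zero hp.ne']
  subst hc0
  have hc' : a * b3 = a3 * b := by linarith
  have e2 : (a * a3 + 3 * b * b3) ^ 2 = p ^ 2 := by simpa using e
  rcases sq_eq_sq_iff_eq_or_eq_neg.1 e2 with e3 | e3
  · constructor
    · apply mul_left_cancel₀ hp.ne'
      linear_combination (-a) * e3 + 3 * b * hc' + a3 * h1
    · apply mul_left_cancel₀ hp.ne'
      linear_combination (-b) * e3  - a * hc' + b3 * h1
  · exfalso
    have : a = - a3 := by
      apply mul_left_cancel₀ hp.ne'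
      linear_combination (a) * e3 - 3 * b * hc' - a3 * h1
    subst this
    have := ha.add ha3
    simp at this
    exact absurd this (by decide)

section Jac
variable (p : ℕ) [Fact p.Prime]   (hp : p % 3 = 1)
    (g : (ZMod p)ˣ) (hg : ∀ u : (ZMod p)ˣ, u ∈ Subgroup.zpowers g)
    (ζ : ℂ) (hζ : ζ = Complex.exp (2 * Real.pi * Complex.I / 3))
    (χ3 : MulChar (ZMod p) ℂ) (hχ3g : χ3 (g : ZMod p) = ζ)

include hζ in
lemma zeta_val : ζ = (-1 + Complex.I * (Real.sqrt 3 : ℂ)) / 2 := by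
  have : (2 * Real.pi * Complex.I / 3 : ℂ) = ((2 * Real.pi / 3 : ℝ) : ℂ) * Complex.I := by
    push_cast; ring
  rw [hζ, this, Complex.exp_mul_I, ← Complex.ofReal_cos, ← Complex.ofReal_sin]
  have h : (2 * Real.pi / 3 : ℝ) = Real.pi - Real.pi / 3 := by ring
  rw [h, Real.cos_pi_sub, Real.sin_pi_sub, Real.cos_pi_div_three, Real.sin_pi_div_three]
  push_cast; ring

include hζ in
lemma zeta_prim : IsPrimitiveRoot ζ 3 := by
  rw [hζ]; exact_mod_cast Complex.isPrimitiveRoot_exp 3 (by norm_num)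

include hg in
lemma exists_npow (x : ZMod p) (hx : x ≠ 0) : ∃ k : ℕ, x = (g : ZMod p) ^ k := by
  have := hg (Units.mk0 x hx)
  rw [← mem_powers_iff_mem_zpowers] at this
  obtain ⟨k, hk⟩ := this
  refine ⟨k, ?_⟩
  have := congrArg (fun u : (ZMod p)ˣ => (u : ZMod p)) hk
  simpa using this.symm

include hg hp in
lemma w_facts : ((g : ZMod p) ^ ((p - 1) / 3)) ^ 3 = 1 ∧
    1 + (g : ZMod p) ^ ((p - 1) / 3) + ((g : ZMod p) ^ ((p - 1) / 3)) ^ 2 = 0 := by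
  have hpp : p.Prime := Fact.out
  have h3 : (p - 1) / 3 * 3 = p - 1 := by have := hpp.two_le; omega
  have e1 : ((g : ZMod p) ^ ((p - 1) / 3)) ^ 3 = 1 := by
    rw [← pow_mul, h3]; exact ZMod.pow_card_sub_one_eq_one g.ne_zero
  refine ⟨e1, ?_⟩
  have ho : orderOf g = p - 1 := by
    rw [orderOf_eq_card_of_forall_mem_zpowers hg, Nat.card_eq_fintype_card, ZMod.card_units]
  have hne : (g : ZMod p) ^ ((p - 1) / 3) - 1 ≠ 0 := by
    intro h
    rw [sub_eq_zero] at h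
    have h' : g ^ ((p-1)/3) = 1 := by ext; simpa using h
    have := orderOf_dvd_of_pow_eq_one h'
    rw [ho] at this
    have := Nat.le_of_dvd (by have := hpp.two_le; omega) this
    have := hpp.two_le; omega
  apply mul_left_cancel₀ hne
  linear_combination e1

include hg hp hζ hχ3g in
lemma kappa (x : ZMod p) (hx : x ≠ 0) : ∃ k : ℕ, k < 3 ∧ χ3 x = ζ ^ k ∧
    x ^ ((p - 1) / 3) = ((g : ZMod p) ^ ((p - 1) / 3)) ^ k := by
  obtain ⟨k, rfl⟩ := exists_npow p g hg x hx
  refine ⟨k % 3, Nat.mod_lt _ (by norm_num), ?_, ?_⟩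
  · rw [map_pow, hχ3g, ← pow_mod_orderOf, (zeta_prim ζ hζ).eq_orderOf.symm]
  · rw [← pow_mul, mul_comm, pow_mul]
    conv_lhs => rw [← Nat.div_add_mod k 3, pow_add, pow_mul, (w_facts p hp g hg).1, one_pow, one_mul]

include hp in
lemma sum_Fp : ∑ y : ZMod p, (1 - y ^ 2) ^ ((p - 1) / 3) = 0 := by
  have hpp : p.Prime := Fact.out
  have := hpp.two_le
  have : ∀ y : ZMod p, (1 - y ^ 2) ^ ((p - 1) / 3) = ∑ i ∈ Finset.range ((p - 1) / 3 + 1),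
      ((-1) ^ i * (((p - 1) / 3).choose i : ZMod p)) * y ^ (2 * i) := by
    intro y
    rw [show (1 - y ^ 2) = (- y ^ 2) + 1 by ring, add_pow]
    refine Finset.sum_congr rfl fun i _ => ?_
    rw [neg_pow, pow_mul]; simp; ring
  simp only [this]
  rw [Finset.sum_comm]
  apply Finset.sum_eq_zero
  intro i hi
  simp at hi
  rw [← Finset.mul_sum, FiniteField.sum_pow_lt_card_sub_one, mul_zero]
  rw [ZMod.card]; omega

include hp in
lemma two_ne : (2 : ZMod p) ≠ 0 := by
  have hpp : p.Prime := Fact.out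
  intro h
  have h' : ((2 : ℕ) : ZMod p) = 0 := by exact_mod_cast h
  rw [ZMod.natCast_eq_zero_iff] at h'
  have := (Nat.prime_dvd_prime_iff_eq hpp Nat.prime_two).1 h'
  omega

include hp in
lemma three_ne : (3 : ZMod p) ≠ 0 := by
  have hpp : p.Prime := Fact.out
  intro h
  have h' : ((3 : ℕ) : ZMod p) = 0 := by exact_mod_cast h
  rw [ZMod.natCast_eq_zero_iff] at h'
  have := (Nat.prime_dvd_prime_iff_eq hpp Nat.prime_three).1 h'
  omega

include hp in
lemma K_eq : χ3 4 * jacobiSum χ3 χ3 = ∑ y : ZMod p, χ3 (1 - y ^ 2) := by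
  rw [jacobiSum, Finset.mul_sum]
  refine Fintype.sum_equiv ((Equiv.mulLeft₀ (2 : ZMod p) (two_ne p hp)).trans (Equiv.subLeft 1)) _ _ ?_
  intro x
  rw [← map_mul, ← map_mul]
  congr 1
  simp
  ring

include hp hg hζ hχ3g in
lemma K_form : ∃ N0 n1 n2 : ℕ, ∑ y : ZMod p, χ3 (1 - y ^ 2) = N0 + 2 * n1 * ζ + 2 * n2 * ζ ^ 2 ∧
    (N0 + 2 * n1 * (g : ZMod p) ^ ((p - 1) / 3) + 2 * n2 * ((g : ZMod p) ^ ((p - 1) / 3)) ^ 2 : ZMod p) = 0 ∧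
    N0 + 2 * n1 + 2 * n2 + 2 = p := by
  have hpp : p.Prime := Fact.out
  have hp2 := hpp.two_le
  choose! κ hκ using kappa p hp g hg ζ hζ χ3 hχ3g
  set w := (g : ZMod p) ^ ((p - 1) / 3) with hw
  set T : Finset (ZMod p) := Finset.univ.filter (fun y => 1 - y ^ 2 ≠ 0) with hT
  set N : ℕ → ℕ := fun k => (T.filter (fun y => κ (1 - y ^ 2) = k)).card with hN
  have fib : ∀ {R : Type} [CommRing R] (f : ZMod p → R) (z : R), f 0 = 0 →
      (∀ x, x ≠ 0 → f x = z ^ κ x) → ∑ y : ZMod p, f (1 - y ^ 2) = N 0 + N 1 * z + N 2 * z ^ 2 := by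
    intro R _ f z h0 hf
    have e1 : ∑ y : ZMod p, f (1 - y ^ 2) = ∑ y ∈ T, z ^ κ (1 - y ^ 2) := by
      rw [hT, Finset.sum_filter]
      refine Finset.sum_congr rfl fun y _ => ?_
      split_ifs with h
      · exact hf _ h
      · rw [not_not.1 h, h0]
    rw [e1, ← Finset.sum_fiberwise_of_maps_to (t := Finset.range 3) (g := fun y => κ (1 - y ^ 2))]
    · have : ∀ k, ∑ y ∈ T with κ (1 - y ^ 2) = k, z ^ κ (1 - y ^ 2) = N k * z ^ k := by
        intro k
        rw [Finset.sum_congr rfl (g := fun _ => z ^ k), Finset.sum_const, nsmul_eq_mul]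
        intro y hy
        simp only [Finset.mem_filter] at hy
        rw [hy.2]
      simp only [this, Finset.sum_range_succ]
      simp
    · intro y hy
      simp [hT] at hy
      simp [(hκ _ hy).1]
  have k1 : κ 1 = 0 := by
    have h := hκ 1 one_ne_zero
    rw [map_one] at h
    have h2 := (zeta_prim ζ hζ).dvd_of_pow_eq_one _ h.2.1.symm
    omega
  have hev : ∀ k, k ≠ 0 → ∃ n, N k = 2 * n := by
    intro k hk
    have : (N k : ZMod 2) = 0 := by
      simp only [hN]
      rw [Finset.card_eq_sum_ones]
      push_cast
      refine Finset.sum_involution (fun y _ => -y) ?_ ?_ ?_ ?_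
      · intro y _; decide
      · intro y hy _ he
        have h0 : y = 0 := by
          have : (2 : ZMod p) * y = 0 := by linear_combination - he
          exact (mul_eq_zero.1 this).resolve_left (two_ne p hp)
        subst h0
        simp [k1] at hy
        exact hk hy.2.symm
      · intro y hy
        simpa [hT] using hy
      · intro y hy; simp
    rw [ZMod.natCast_eq_zero_iff] at this
    exact this
  obtain ⟨n1, h1⟩ := hev 1 one_ne_zero
  obtain ⟨n2, h2⟩ := hev 2 two_ne_zero
  refine ⟨N 0, n1, n2, ?_, ?_, ?_⟩
  · rw [fib (fun x => χ3 x) ζ (MulChar.map_zero _) (fun x hx => (hκ x hx).2.1), h1, h2]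
    push_cast; ring
  · have := fib (fun x => x ^ ((p - 1)/3)) w (zero_pow (by have := hpp.two_le; omega)) (fun x hx => (hκ x hx).2.2)
    rw [sum_Fp p hp, h1, h2] at this
    rw [this]; push_cast; ring
  · have := fib (R := ℤ) (fun x => if x = 0 then 0 else 1) 1 (by simp) (fun x hx => by simp [hx])
    have hTc : T.card + 2 = p := by
      have : Finset.univ.filter (fun y : ZMod p => ¬ (1 - y ^ 2 ≠ 0)) = {1, -1} := by
        ext y
        simp only [Finset.mem_filter, Finset.mem_univ, true_and, not_not, Finset.mem_insert, Finset.mem_singleton]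
        rw [show 1 - y ^ 2 = - ((y - 1) * (y + 1)) by ring, neg_eq_zero, mul_eq_zero, sub_eq_zero, add_eq_zero_iff_eq_neg]
      have h3 := Finset.card_filter_add_card_filter_not (s := (Finset.univ : Finset (ZMod p))) (fun y : ZMod p => 1 - y ^ 2 ≠ 0)
      rw [this, Finset.card_pair, Finset.card_univ, ZMod.card] at h3
      · exact h3
      · intro h
        apply two_ne p hp
        linear_combination h
    have h4 : (∑ y : ZMod p, if 1 - y ^ 2 = 0 then (0 : ℤ) else 1) = T.card := by
      rw [hT, Finset.card_filter]; push_cast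
      refine Finset.sum_congr rfl fun y _ => ?_
      by_cases h : 1 - y ^ 2 = 0
      · rw [if_pos h, if_neg (not_not.2 h)]
      · rw [if_neg h, if_pos h]
    rw [h4, h1, h2] at this
    push_cast at this
    omega

include hp hg hζ hχ3g in
theorem jac_eval (hχ3o : orderOf χ3 = 3)
    (a3 b3 : ℤ) (hab : a3 ^ 2 + 3 * b3 ^ 2 = (p : ℤ))
    (ha3 : a3 ≡ -1 [ZMOD 3])
    (hb3 : ((3 * b3 : ℤ) : ZMod p) = (2 * (g : ZMod p) ^ ((p - 1) / 3) + 1) * (a3 : ZMod p)) :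
    χ3 (2 : ZMod p) * ((a3 : ℂ) + Complex.I * (b3 : ℂ) * (Real.sqrt 3 : ℂ)) = jacobiSum χ3 χ3 := by
  have hpp : p.Prime := Fact.out
  obtain ⟨N0, n1, n2, hK, hw, hN⟩ := K_form p hp g hg ζ hζ χ3 hχ3g
  have hs3 : (Real.sqrt 3 : ℂ) ^ 2 = 3 := by
    rw [← Complex.ofReal_pow, Real.sq_sqrt (by norm_num)]; norm_num
  have hc3 : χ3 ^ 3 = 1 := by rw [← hχ3o]; exact pow_orderOf_eq_one χ3
  have hχ2 : χ3 2 ^ 3 = 1 := by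
    rw [← MulChar.pow_apply' _ (by norm_num), hc3, MulChar.one_apply (two_ne p hp).isUnit]
  have hχ4 : χ3 4 = χ3 2 ^ 2 := by rw [← map_pow]; norm_num
  have hK2 : ∑ y : ZMod p, χ3 (1 - y ^ 2) = ((N0 - n1 - n2 : ℤ) : ℂ) + Complex.I * ((n1 - n2 : ℤ) : ℂ) * (Real.sqrt 3 : ℂ) := by
    rw [hK, zeta_val ζ hζ]
    push_cast
    linear_combination (n2 / 2 : ℂ) * Complex.I ^ 2 * hs3 + (3 * n2 / 2 : ℂ) * Complex.I_sq
  have h1 : χ3 ≠ 1 := by rintro rfl; simp at hχ3o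
  have h2 : χ3 * χ3 ≠ 1 := by
    intro h
    have := orderOf_dvd_of_pow_eq_one (show χ3 ^ 2 = 1 by rw [sq, h])
    rw [hχ3o] at this; omega
  have hJ := jacobiSum_mul_jacobiSum_inv (F := ZMod p) (F' := ℂ) (by
    rw [ringChar.eq_zero, ZMod.ringChar_zmod_n]; exact hpp.ne_zero.symm) h1 h1 h2
  have hstar : star (jacobiSum χ3 χ3) = jacobiSum χ3⁻¹ χ3⁻¹ := by
    simp [jacobiSum, MulChar.star_apply', star_sum, -RCLike.star_def]
  have hnorm : Complex.normSq (jacobiSum χ3 χ3) = p := by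
    have : ((Complex.normSq (jacobiSum χ3 χ3) : ℝ) : ℂ) = (p : ℝ) := by
      rw [Complex.normSq_eq_conj_mul_self, mul_comm]
      change _ * star _ = _
      rw [hstar, hJ, ZMod.card]; simp
    exact_mod_cast this
  have hn4 : Complex.normSq (χ3 4) = 1 := by
    have : Complex.normSq (χ3 4) ^ 3 = 1 := by
      rw [hχ4, ← map_pow, ← pow_mul, mul_comm, pow_mul, hχ2]; simp
    have h0 := Complex.normSq_nonneg (χ3 4)
    exact (pow_eq_one_iff_of_nonneg h0 (by norm_num)).1 this
  have hr := K_eq p hp χ3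
  have habn : (N0 - n1 - n2 : ℤ) ^ 2 + 3 * (n1 - n2 : ℤ) ^ 2 = p := by
    have := congrArg Complex.normSq hr
    rw [map_mul, hn4, hnorm, hK2, Complex.normSq_apply] at this
    simp at this
    have h3 : Real.sqrt 3 * Real.sqrt 3 = 3 := Real.mul_self_sqrt (by norm_num)
    have : (((N0 - n1 - n2 : ℤ) ^ 2 + 3 * (n1 - n2 : ℤ) ^ 2 : ℤ) : ℝ) = ((p : ℤ) : ℝ) := by
      push_cast
      rw [this]
      linear_combination (-(n1 - n2 : ℝ)^2) * h3
    exact_mod_cast this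
  have hw1 := (w_facts p hp g hg).2
  obtain ⟨ea, eb⟩ := uniq_rep p (N0 - n1 - n2) (n1 - n2) a3 b3 (by exact_mod_cast hpp.pos) habn hab (by
      rw [Int.modEq_iff_dvd]; omega) ha3 (by
      rw [← ZMod.intCast_zmod_eq_zero_iff_dvd]
      set w := (g : ZMod p) ^ ((p - 1) / 3)
      have t1 : (a3 : ZMod p) + b3 * (1 + 2 * w) = 0 := by
        apply mul_left_cancel₀ (three_ne p hp)
        push_cast at hb3
        linear_combination (1 + 2 * w) * hb3 + 4 * a3 * hw1
      push_cast
      linear_combination b3 * hw - 2 * n2 * b3 * hw1 - (n1 - n2 : ZMod p) * t1)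
  rw [ea, eb, ← hr, hχ4] at hK2
  rw [← hK2]
  linear_combination jacobiSum χ3 χ3 * hχ2
end Jac

section Final
variable (p : ℕ) [Fact p.Prime]   (hp : p % 3 = 1)
    (g : (ZMod p)ˣ) (hg : ∀ u : (ZMod p)ˣ, u ∈ Subgroup.zpowers g)
    (ζ : ℂ) (hζ : ζ = Complex.exp (2 * Real.pi * Complex.I / 3))
    (χ3 : MulChar (ZMod p) ℂ) (hχ3g : χ3 (g : ZMod p) = ζ) (h : ℕ) (hh : h < 3)

def cl (b : ZMod p) : ℂ := if ∃ k : ℕ, b = (g : ZMod p) ^ (h + 3 * k) then 1 else 0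

lemma re_two (v : ℂ) (hv : v ^ 3 = 1) : (v ^ 2).re = v.re := by
  have h1 : ‖v‖ = 1 := Complex.norm_eq_one_of_pow_eq_one hv (by norm_num)
  have h2 : v * (starRingEnd ℂ) v = 1 := by
    rw [Complex.mul_conj, Complex.normSq_eq_norm_sq, h1]; simp
  have : v ^ 2 = (starRingEnd ℂ) v := by
    linear_combination (starRingEnd ℂ) v * hv - v ^ 2 * h2
  rw [this]; simp

include hζ in
lemma zeta_re : ζ.re = -1/2 := by
  rw [zeta_val ζ hζ]; simp

include hg hζ hχ3g hh in
lemma cl_eq (b : ZMod p) :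
    3 * cl p g h b = (1 : MulChar (ZMod p) ℂ) b + 2 * ((ζ ^ (2 * h) * χ3 b).re : ℂ) := by
  have hz := zeta_prim ζ hζ
  by_cases hb : b = 0
  · subst hb
    rw [cl, if_neg]
    · simp [MulChar.map_zero]
    · rintro ⟨k, hk⟩
      exact pow_ne_zero _ g.ne_zero hk.symm
  · rw [MulChar.one_apply (Ne.isUnit hb)]
    obtain ⟨j, rfl⟩ := exists_npow p g hg b hb
    rw [map_pow, hχ3g, ← pow_add]
    have hiff : (∃ k : ℕ, (g : ZMod p) ^ j = (g : ZMod p) ^ (h + 3 * k)) ↔ 3 ∣ 2 * h + j := by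
      constructor
      · rintro ⟨k, hk⟩
        have := congrArg χ3 hk
        rw [map_pow, map_pow, hχ3g] at this
        rw [← hz.pow_eq_one_iff_dvd, pow_add, this, ← pow_add, hz.pow_eq_one_iff_dvd]
        omega
      · intro hd
        exact ⟨j / 3, by congr 1; omega⟩
    rw [cl]
    simp only [hiff]
    have hmod : ζ ^ (2 * h + j) = ζ ^ ((2 * h + j) % 3) := by
      conv_lhs => rw [← pow_mod_orderOf, ← hz.eq_orderOf]
    rw [hmod]
    have : (2 * h + j) % 3 < 3 := Nat.mod_lt _ (by norm_num)
    split_ifs with hd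
    · rw [Nat.mod_eq_zero_of_dvd hd]; simp; norm_num
    · have h3 : (2 * h + j) % 3 = 1 ∨ (2 * h + j) % 3 = 2 := by omega
      rcases h3 with h3 | h3
      · rw [h3, pow_one, zeta_re ζ hζ]; push_cast; norm_num
      · rw [h3, re_two ζ hz.pow_eq_one, zeta_re ζ hζ]; push_cast; norm_num

def rho (u : ℂ) : ℂ →+ ℂ :=
  (Complex.ofRealHom.toAddMonoidHom.comp Complex.reAddGroupHom).comp (AddMonoidHom.mulLeft u)

lemma rho_apply (u z : ℂ) : rho u z = ((u * z).re : ℂ) := rfl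

lemma rho_natMul (u : ℂ) (m : ℕ) (z : ℂ) : rho u (m * z) = m * rho u z := by
  rw [← nsmul_eq_mul, map_nsmul, nsmul_eq_mul]

lemma PP_eq (m : ℕ) (hm : 0 < m) (a : ZMod p) : (PP (ZMod p) (g : ZMod p) m 3 h a : ℂ) =
    ∑ P ∈ IR (ZMod p) m, if - P.nextCoeff = a then cl p g h ((-1) ^ m * P.coeff 0) else 0 := by
  have hnc : ∀ P ∈ IR (ZMod p) m, P.nextCoeff = P.coeff (m - 1) := by
    intro P hP
    rw [mem_IR] at hP
    rw [nextCoeff, hP.2.1, if_neg (by omega)]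
  have e : PP (ZMod p) (g : ZMod p) m 3 h a = ((IR (ZMod p) m).filter (fun P => - P.nextCoeff = a ∧
      ∃ k : ℕ, (-1) ^ m * P.coeff 0 = (g : ZMod p) ^ (h + 3 * k))).card := by
    rw [PP]
    refine Nat.subtype_card _ ?_
    intro P
    rw [Finset.mem_filter]
    constructor
    · rintro ⟨h1, h2, h3⟩
      rw [hnc P h1] at h2
      rw [mem_IR] at h1
      exact ⟨h1.1, h1.2.1, h1.2.2, by rw [← h2, neg_neg], h3⟩
    · rintro ⟨h1, h2, h3, h4, h5⟩
      have hI : P ∈ IR (ZMod p) m := (mem_IR _ _).2 ⟨h1, h2, h3⟩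
      refine ⟨hI, ?_, h5⟩
      rw [hnc P hI, h4, neg_neg]
  rw [e, Finset.card_filter]
  push_cast
  refine Finset.sum_congr rfl fun P _ => ?_
  rw [cl, ite_and]

include hg hζ hχ3g hh in
lemma main_eq (m : ℕ) (hm : 0 < m) (a : ZMod p) :
    3 * (m * (PP (ZMod p) (g : ZMod p) m 3 h a : ℂ)) +
      3 * (∑ c : ZMod p, if m * c = a then cl p g h (c ^ m) else 0) =
    QQ 1 m a + 2 * ((ζ ^ (2 * h) * QQ χ3 m a).re : ℂ) := by
  have hc := cl_eq p g hg ζ hζ χ3 hχ3g h hh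
  have e0 : ∀ χ : MulChar (ZMod p) ℂ, QQ χ m a =
      m * (∑ P ∈ IR (ZMod p) m, if - P.nextCoeff = a then χ ((-1) ^ m * P.coeff 0) else 0) +
      ∑ c : ZMod p, if m * c = a then χ (c ^ m) else 0 := by
    intro χ
    rw [QQ, add_comm]
    congr!
  rw [← rho_apply, e0, e0, map_add, rho_natMul, map_sum, map_sum, PP_eq p g h m hm]
  simp only [← rho_apply] at hc
  have e1 : ∀ (q : Prop) [Decidable q] (b : ZMod p), 3 * (if q then cl p g h b else 0) = 
     (if q then (1 : MulChar (ZMod p) ℂ) b else 0) + 2 * rho (ζ ^ (2 * h)) (if q then χ3 b else 0) := by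
    intro q _ b
    split_ifs
    · exact hc b
    · simp
  have e2 : 3 * (∑ c : ZMod p, if m * c = a then cl p g h (c ^ m) else 0) = 
    ∑ c : ZMod p, (if m * c = a then (1 : MulChar (ZMod p) ℂ) (c ^ m) else 0) + 2 * ∑ c : ZMod p, rho (ζ ^ (2 * h)) (if m * c = a then χ3 (c ^ m) else 0) := by
    rw [Finset.mul_sum, Finset.mul_sum, ← Finset.sum_add_distrib]
    exact Finset.sum_congr rfl fun c _ => e1 _ _
  have e3 : 3 * (∑ P ∈ IR (ZMod p) m, if - P.nextCoeff = a then cl p g h ((-1) ^ m * P.coeff 0) else 0) = 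
    ∑ P ∈ IR (ZMod p) m, (if - P.nextCoeff = a then (1 : MulChar (ZMod p) ℂ) ((-1) ^ m * P.coeff 0) else 0) + 2 * ∑ P ∈ IR (ZMod p) m, rho (ζ ^ (2 * h)) (if - P.nextCoeff = a then χ3 ((-1) ^ m * P.coeff 0) else 0) := by
    rw [Finset.mul_sum, Finset.mul_sum, ← Finset.sum_add_distrib]
    exact Finset.sum_congr rfl fun c _ => e1 _ _
  linear_combination e2 + m * e3

include hp in
lemma QQ_vals (hχ3o : orderOf χ3 = 3) (m : ℕ) (hm : m.Prime) (hm3 : 3 < m) (a : ZMod p) :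
    (m % 3 = 1 → QQ χ3 m a = (p * jacobiSum χ3 χ3) ^ ((m - 1) / 3) * χ3 a) ∧
    (m % 3 = 2 → QQ χ3 m a = p ^ ((m - 2) / 3) * jacobiSum χ3 χ3 ^ ((m + 1) / 3) * χ3 a ^ 2) := by
  have hpp : p.Prime := Fact.out
  have hc3 : χ3 ^ 3 = 1 := by rw [← hχ3o]; exact pow_orderOf_eq_one χ3
  have h1 : χ3 ≠ 1 := by rintro rfl; simp at hχ3o
  have h2 : χ3 ^ 2 ≠ 1 := by
    intro h
    have := orderOf_dvd_of_pow_eq_one h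
    rw [hχ3o] at this; omega
  have hinv : χ3⁻¹ = χ3 ^ 2 := by
    rw [inv_eq_iff_mul_eq_one, ← pow_succ', hc3]
  have hm1 : χ3 (-1) = 1 := by
    have a1 : χ3 (-1) ^ 2 = 1 := by rw [← map_pow]; simp
    have a2 : χ3 (-1) ^ 3 = 1 := by
      rw [← MulChar.pow_apply' _ (by norm_num), hc3, MulChar.one_apply (isUnit_one.neg)]
    linear_combination a2 - χ3 (-1) * a1
  have hodd : Odd m := hm.odd_of_ne_two (by omega)
  have hψ := ZMod.isPrimitive_stdAddChar p
  set ψ : AddChar (ZMod p) ℂ := ZMod.stdAddChar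
  have hG1 := gaussSum_mul_gaussSum_pow_orderOf_sub_one h1 hψ
  have hG2 := gaussSum_pow_eq_prod_jacobiSum (χ := χ3) (by omega) hψ
  rw [hχ3o] at hG1 hG2
  simp [hm1] at hG1 hG2
  have hpc : (p : ℂ) ≠ 0 := by exact_mod_cast hpp.ne_zero
  have hna : χ3 (-a) = χ3 a := by rw [neg_eq_neg_one_mul, map_mul, hm1, one_mul]
  constructor
  · intro hmod
    obtain ⟨k, rfl⟩ : ∃ k, m = 3 * k + 1 := ⟨m / 3, by omega⟩
    have em : χ3 ^ (3 * k + 1) = χ3 := by rw [pow_succ, pow_mul, hc3]; simp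
    have := QQ_ne χ3 ψ h1 hψ _ hm hodd a (by rw [em]; exact h1)
    rw [inv_pow, em, hinv, hna, ZMod.card, pow_succ, pow_mul, hG2] at this
    apply mul_left_cancel₀ hpc
    rw [this, show (3 * k + 1 - 1) / 3 = k by omega]
    linear_combination (p * jacobiSum χ3 χ3) ^ k * χ3 a * hG1
  · intro hmod
    obtain ⟨k, rfl⟩ : ∃ k, m = 3 * k + 2 := ⟨m / 3, by omega⟩
    have em : χ3 ^ (3 * k + 2) = χ3 ^ 2 := by rw [pow_add, pow_mul, hc3]; simp
    have := QQ_ne χ3 ψ h1 hψ _ hm hodd a (by rw [em]; exact h2)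
    rw [inv_pow, em, ← hinv, inv_inv, hinv, MulChar.pow_apply' _ (by norm_num), hna, ZMod.card, pow_add, pow_mul, hG2] at this
    apply mul_left_cancel₀ hpc
    rw [this, show (3 * k + 2 - 2) / 3 = k by omega, show (3 * k + 2 + 1) / 3 = k + 1 by omega]
    linear_combination (p * jacobiSum χ3 χ3) ^ k * χ3 a ^ 2 * hG2
end Final


/-- The values of `P_m(a,3,h)` for a prime `m > 3`, `s = 3` and `q = p ≡ 1 (mod 3)`,
in terms of `π_3 = χ_3(2)·(a_3 + i·b_3·√3)`, `ζ = e^{2πi/3}` and `L_m`. -/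
theorem stmt16 (p m h : ℕ) [Fact p.Prime] (hm : m.Prime) (hm3 : 3 < m)
    (hp : p % 3 = 1)
    (g : (ZMod p)ˣ) (hg : ∀ u : (ZMod p)ˣ, u ∈ Subgroup.zpowers g)
    (hh : h < 3)
    (ζ : ℂ) (hζ : ζ = Complex.exp (2 * Real.pi * Complex.I / 3))
    (χ3 : MulChar (ZMod p) ℂ) (hχ3o : orderOf χ3 = 3) (hχ3g : χ3 (g : ZMod p) = ζ)
    (a3 b3 : ℤ) (hab : a3 ^ 2 + 3 * b3 ^ 2 = (p : ℤ))
    (ha3 : a3 ≡ -1 [ZMOD 3])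
    (hb3 : ((3 * b3 : ℤ) : ZMod p) = (2 * (g : ZMod p) ^ ((p - 1) / 3) + 1) * (a3 : ZMod p))
    (π3 : ℂ) (hπ3 : π3 = χ3 (2 : ZMod p) * ((a3 : ℂ) + Complex.I * (b3 : ℂ) * (Real.sqrt 3 : ℂ)))
    (a : ZMod p) :
    (a = 0 → m = p →
      (PP (ZMod p) (g : ZMod p) m 3 h a : ℂ) = (1 / 3) * ((p : ℂ) ^ (p - 2) - 1)) ∧
    (a = 0 → m ≠ p →
      (PP (ZMod p) (g : ZMod p) m 3 h a : ℂ) =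
        (1 / (3 * (m : ℂ))) * ((p : ℂ) ^ (m - 1) - 1)) ∧
    (a ≠ 0 → m = p →
      (PP (ZMod p) (g : ZMod p) m 3 h a : ℂ) =
        (1 / (3 * (p : ℂ))) * ((p : ℂ) ^ (p - 1) +
          2 * (p : ℂ) ^ ((p - 1) / 3) *
            ((π3 ^ ((p - 1) / 3) * χ3 a * ζ ^ (2 * h)).re : ℂ))) ∧
    (a ≠ 0 → m ≠ p → m % 3 = 1 →
      (PP (ZMod p) (g : ZMod p) m 3 h a : ℂ) =
        (1 / (3 * (m : ℂ))) * ((p : ℂ) ^ (m - 1) - 1 +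
          2 * (((((p : ℂ) * π3) ^ ((m - 1) / 3) - χ3⁻¹ (m : ZMod p)) *
            χ3 a * ζ ^ (2 * h)).re : ℂ))) ∧
    (a ≠ 0 → m ≠ p → m % 3 = 2 →
      (PP (ZMod p) (g : ZMod p) m 3 h a : ℂ) =
        (1 / (3 * (m : ℂ))) * ((p : ℂ) ^ (m - 1) - 1 +
          2 * ((((p : ℂ) ^ ((m - 2) / 3) * π3 ^ ((m + 1) / 3) * χ3 a * ζ ^ h -
            χ3⁻¹ (m : ZMod p)) * χ3 a * ζ ^ h).re : ℂ))) := by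
  have hpp : p.Prime := Fact.out
  have hπ : π3 = jacobiSum χ3 χ3 := by
    rw [hπ3]; exact jac_eval p hp g hg ζ hζ χ3 hχ3g hχ3o a3 b3 hab ha3 hb3
  have hodd : Odd m := hm.odd_of_ne_two (by omega)
  have hpc : (p : ℂ) ≠ 0 := by exact_mod_cast hpp.ne_zero
  have hmc : (m : ℂ) ≠ 0 := by exact_mod_cast hm.ne_zero
  have main := main_eq p g hg ζ hζ χ3 hχ3g h hh m hm.pos a
  have hQ1 := QQ_one (F := ZMod p) _ (ZMod.isPrimitive_stdAddChar p) m hm hodd a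
  rw [ZMod.card] at hQ1
  obtain ⟨hQm1, hQm2⟩ := QQ_vals p hp χ3 hχ3o m hm hm3 a
  rw [hQ1] at main
  have hc3 : χ3 ^ 3 = 1 := by rw [← hχ3o]; exact pow_orderOf_eq_one χ3
  have h1 : χ3 ≠ 1 := by rintro rfl; simp at hχ3o
  have hm3' : m % 3 = 1 ∨ m % 3 = 2 := by
    have : ¬ 3 ∣ m := fun h => by
      have := (Nat.prime_dvd_prime_iff_eq Nat.prime_three hm).1 h; omega
    omega
  have hmz : m ≠ p → (m : ZMod p) ≠ 0 := by
    intro hne h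
    rw [ZMod.natCast_eq_zero_iff] at h
    exact hne ((Nat.prime_dvd_prime_iff_eq hpp hm).1 h).symm
  have hclz : cl p g h 0 = 0 := by
    rw [cl, if_neg]
    rintro ⟨k, hk⟩
    exact pow_ne_zero _ g.ne_zero hk.symm
  have hQz : a = 0 → QQ χ3 m a = 0 := by
    intro ha
    have hz : χ3 a = 0 := by rw [ha]; exact MulChar.map_zero _
    rcases hm3' with h' | h'
    · rw [hQm1 h', hz, mul_zero]
    · rw [hQm2 h', hz]; simp
  have hcor : m ≠ p → 3 * (∑ c : ZMod p, if m * c = a then cl p g h (c ^ m) else 0) =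
      3 * cl p g h ((a / m) ^ m) := by
    intro hne
    have hz := hmz hne
    congr 1
    rw [Finset.sum_eq_single (a / m)]
    · rw [if_pos (mul_div_cancel₀ a hz)]
    · intro c _ hc
      rw [if_neg]
      intro h; apply hc; rw [← h]; field_simp
    · simp
  refine ⟨?_, ?_, ?_, ?_, ?_⟩
  · intro ha hmp
    rw [hQz ha, if_pos ha] at main
    have hz : (m : ZMod p) = 0 := by rw [hmp]; simp
    have hcr : 3 * (∑ c : ZMod p, if m * c = a then cl p g h (c ^ m) else 0) = p - 1 := by
      have : ∀ c : ZMod p, (if m * c = a then cl p g h (c ^ m) else 0) = cl p g h c := by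
        intro c
        rw [hz, ha, zero_mul, if_pos rfl, hmp, ZMod.pow_card]
      simp only [this]
      rw [Finset.mul_sum]
      simp only [cl_eq p g hg ζ hζ χ3 hχ3g h hh, ← rho_apply]
      rw [Finset.sum_add_distrib, ← Finset.mul_sum, ← map_sum (rho (ζ ^ (2 * h))), MulChar.sum_eq_zero_of_ne_one h1,
        MulChar.sum_one_eq_card_units]
      simp [Nat.totient_prime hpp, Nat.cast_sub hpp.one_le]
    rw [hcr, hmp] at main
    rw [hmp]
    simp at main
    have e : (p : ℂ) ^ (p - 1) = p * p ^ (p - 2) := by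
      rw [← pow_succ']; congr 1; have := hpp.two_le; omega
    apply mul_left_cancel₀ hpc
    rw [e] at main
    linear_combination (1/3) * main
  · intro ha hmp
    rw [hQz ha, if_pos ha, hcor hmp, ha, zero_div, zero_pow hm.ne_zero, hclz] at main
    simp at main
    rw [ha]
    field_simp
    linear_combination main
  · intro ha hmp
    have hz : (m : ZMod p) = 0 := by rw [hmp]; simp
    have : ∀ c : ZMod p, (if m * c = a then cl p g h (c ^ m) else 0) = 0 := by
      intro c
      rw [hz, zero_mul, if_neg (Ne.symm ha)]
    simp only [this] at main
    rw [hQm1 (by rw [hmp]; exact hp), if_neg ha, hmp, ← hπ] at main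
    have e : ζ ^ (2 * h) * ((p * π3) ^ ((p - 1) / 3) * χ3 a) = 
       (((p : ℝ) ^ ((p - 1) / 3) : ℝ) : ℂ) * (π3 ^ ((p - 1) / 3) * χ3 a * ζ ^ (2 * h)) := by
      push_cast; ring
    rw [e, Complex.re_ofReal_mul] at main
    push_cast at main
    rw [hmp]
    rw [one_div, inv_mul_eq_div, eq_div_iff (mul_ne_zero three_ne_zero hpc)]
    simp only [Finset.sum_const_zero, mul_zero, add_zero, sub_zero] at main
    linear_combination main
  · intro ha hmp hmod
    have hz := hmz hmp
    have ham : a / m ≠ 0 := div_ne_zero ha hz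
    rw [hQm1 hmod, if_neg ha, hcor hmp, cl_eq p g hg ζ hζ χ3 hχ3g h hh, ← hπ,
      MulChar.one_apply (pow_ne_zero m ham).isUnit] at main
    have hpm : χ3 ^ m = χ3 := by
      conv_lhs => rw [← pow_mod_orderOf, hχ3o, hmod, pow_one]
    have e : χ3 ((a / m) ^ m) = χ3 a * χ3⁻¹ (m : ZMod p) := by
      rw [map_pow, ← MulChar.pow_apply' _ hm.ne_zero, hpm, div_eq_mul_inv, map_mul, MulChar.inv_apply']
    rw [e] at main
    have e2 : (((p : ℂ) * π3) ^ ((m - 1) / 3) - χ3⁻¹ (m : ZMod p)) * χ3 a * ζ ^ (2 * h) =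
      ζ ^ (2 * h) * (((p : ℂ) * π3) ^ ((m - 1) / 3) * χ3 a) - ζ ^ (2 * h) * (χ3 a * χ3⁻¹ (m : ZMod p)) := by ring
    rw [e2, Complex.sub_re, Complex.ofReal_sub]
    rw [one_div, inv_mul_eq_div, eq_div_iff (mul_ne_zero three_ne_zero hmc)]
    linear_combination main
  · intro ha hmp hmod
    have hz := hmz hmp
    have ham : a / m ≠ 0 := div_ne_zero ha hz
    rw [hQm2 hmod, if_neg ha, hcor hmp, cl_eq p g hg ζ hζ χ3 hχ3g h hh, ← hπ,
      MulChar.one_apply (pow_ne_zero m ham).isUnit] at main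
    have hpm : χ3 ^ m = χ3 ^ 2 := by
      conv_lhs => rw [← pow_mod_orderOf, hχ3o, hmod]
    have e : χ3 ((a / m) ^ m) = (χ3 a * χ3⁻¹ (m : ZMod p)) ^ 2 := by
      rw [map_pow, ← MulChar.pow_apply' _ hm.ne_zero, hpm, div_eq_mul_inv,
        MulChar.pow_apply' _ two_ne_zero, map_mul, MulChar.inv_apply']
    have hcube : ∀ x : ZMod p, x ≠ 0 → χ3 x ^ 3 = 1 := fun x hx => by
      rw [← MulChar.pow_apply' _ (by norm_num), hc3, MulChar.one_apply hx.isUnit]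
    have e3 : (ζ ^ (2 * h) * (χ3 a * χ3⁻¹ (m : ZMod p)) ^ 2).re = (ζ ^ h * (χ3 a * χ3⁻¹ (m : ZMod p))).re := by
      rw [← re_two (ζ ^ h * (χ3 a * χ3⁻¹ (m : ZMod p)))]
      · congr 1; ring
      · rw [mul_pow, mul_pow, hcube a ha, MulChar.inv_apply', hcube _ (inv_ne_zero hz), ← pow_mul, mul_comm,
          mul_comm h 3, pow_mul, (zeta_prim ζ hζ).pow_eq_one]
        simp
    rw [e, e3] at main
    have e2 : ((p : ℂ) ^ ((m - 2) / 3) * π3 ^ ((m + 1) / 3) * χ3 a * ζ ^ h -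
            χ3⁻¹ (m : ZMod p)) * χ3 a * ζ ^ h =
      ζ ^ (2 * h) * ((p : ℂ) ^ ((m - 2) / 3) * π3 ^ ((m + 1) / 3) * χ3 a ^ 2) - ζ ^ h * (χ3 a * χ3⁻¹ (m : ZMod p)) := by ring
    rw [e2, Complex.sub_re, Complex.ofReal_sub]
    rw [one_div, inv_mul_eq_div, eq_div_iff (mul_ne_zero three_ne_zero hmc)]
    linear_combination main

end
end

section
/- Let e, n be positive integers with r = 2en and let s ≥ 1 be a divisor of p^e + 1. Then for every integer i, Σ_{x ∈ F_{q^t}^*} e_t(γ_t^i·x^s) = (−1)^{nt}·√(q^t) − 1 if i ≢ k_s (mod s), and Σ_{x ∈ F_{q^t}^*} e_t(γ_t^i·x^s) = (−1)^{nt−1}·(s−1)·√(q^t) − 1 if i ≡ k_s (mod s), where k_s = s/2 if p > 2, nt is odd and (p^e+1)/s is odd, and k_s = 0 otherwise. -/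
noncomputable section

open Complex Polynomial Classical

/-- The canonical additive character `x ↦ exp(2πi·tr(x)/p)` of a finite field `E`
of characteristic `p` (the prime field being `ZMod p`). -/
def eChar (p : ℕ) (E : Type*) [Field E] [Fintype E] [Algebra (ZMod p) E] (x : E) : ℂ :=
  Complex.exp (2 * Real.pi * Complex.I * ((Algebra.trace (ZMod p) E x).val : ℂ) / (p : ℂ))

lemma aux_sum_block {A : Type*} [AddCommMonoid A] (f : ℕ → A) (a b : ℕ) :
    ∑ j ∈ Finset.range (a * b), f j =
      ∑ i ∈ Finset.range a, ∑ j ∈ Finset.range b, f (i * b + j) := by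
  induction a with
  | zero => simp
  | succ a ih => rw [Nat.succ_mul, Finset.sum_range_add, ih, Finset.sum_range_succ]

lemma aux_sum_gen {G : Type*} [Group G] [Fintype G] (γ : G)
    (hγ : ∀ u : G, u ∈ Subgroup.zpowers γ) (F : G → ℂ) :
    ∑ x : G, F x = ∑ j ∈ Finset.range (Fintype.card G), F (γ ^ j) := by
  have ho : orderOf γ = Fintype.card G := orderOf_eq_card_of_forall_mem_zpowers hγ |>.trans
    Nat.card_eq_fintype_card
  classical
  rw [← IsCyclic.image_range_card hγ, Finset.sum_image, Nat.card_eq_fintype_card]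
  rw [Nat.card_eq_fintype_card, ← ho]
  intro i hi j hj h
  exact pow_injOn_Iio_orderOf (by simpa using hi) (by simpa using hj) h

lemma aux_sum_pow {G : Type*} [Group G] [Fintype G] (γ : G)
    (hγ : ∀ u : G, u ∈ Subgroup.zpowers γ) (s k : ℕ) (h : Fintype.card G = s * k) (F : G → ℂ) :
    ∑ x : G, F (x ^ s) = s * ∑ j ∈ Finset.range k, F (γ ^ (s * j)) := by
  rw [aux_sum_gen γ hγ, h, aux_sum_block]
  have : ∀ i ∈ Finset.range s, ∑ j ∈ Finset.range k, F ((γ ^ (i * k + j)) ^ s)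
      = ∑ j ∈ Finset.range k, F (γ ^ (s * j)) := by
    intro i _
    refine Finset.sum_congr rfl fun j _ => ?_
    congr 1
    rw [← pow_mul, show (i * k + j) * s = (s * k) * i + s * j by ring, pow_add, pow_mul γ (s * k),
      ← h, pow_card_eq_one, one_pow, one_mul]
  rw [Finset.sum_congr rfl this]
  simp

lemma aux_sum_reduce {G : Type*} [CommGroup G] [Fintype G] (γ : G)
    (hγ : ∀ u : G, u ∈ Subgroup.zpowers γ) (s d k : ℕ) (hd : d ≠ 0)
    (h : Fintype.card G = s * d * k) (F : G → ℂ) :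
    ∑ x : G, F (x ^ s) = (d : ℂ)⁻¹ *
      ∑ j ∈ Finset.range d, ∑ x : G, F (γ ^ (s * j) * x ^ (s * d)) := by
  have h1 : ∀ j ∈ Finset.range d, ∑ x : G, F (γ ^ (s * j) * x ^ (s * d)) =
      ((s * d : ℕ) : ℂ) * ∑ l ∈ Finset.range k, F (γ ^ (s * (l * d + j))) := by
    intro j _
    rw [aux_sum_pow γ hγ (s * d) k h (fun y => F (γ ^ (s * j) * y))]
    congr 1
    refine Finset.sum_congr rfl fun l _ => ?_
    rw [← pow_add]
    ring_nf
  rw [Finset.sum_congr rfl h1, ← Finset.mul_sum, Finset.sum_comm,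
    ← aux_sum_block (fun j => F (γ ^ (s * j))),
    aux_sum_pow γ hγ s (k * d) (by rw [h]; ring)]
  have : (d : ℂ) ≠ 0 := by exact_mod_cast hd
  push_cast
  field_simp

lemma aux_sign (Q l : ℕ) (hQ : 2 ≤ Q) (S T : ℂ) (hS : S ^ 2 = ((Q : ℂ) ^ l) ^ 2)
    (hST : S = 1 + (Q + 1 : ℂ) * T) (hT : IsIntegral ℤ T) : S = (-1) ^ l * (Q : ℂ) ^ l := by
  have hN : (Q + 1 : ℂ) ≠ 0 := by exact_mod_cast Nat.succ_ne_zero Q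
  -- S = c * (-1)^l * Q^l with c = ±1
  obtain ⟨c, hc, hSc⟩ : ∃ c : ℤ, (c = 1 ∨ c = -1) ∧ S = c * ((-1) ^ l * (Q : ℂ) ^ l) := by
    have h2 : S ^ 2 = ((-1) ^ l * (Q : ℂ) ^ l) ^ 2 := by
      rw [mul_pow, ← pow_mul, mul_comm l 2, pow_mul]; simpa using hS
    rcases sq_eq_sq_iff_eq_or_eq_neg.mp h2 with h | h
    · exact ⟨1, Or.inl rfl, by simpa using h⟩
    · exact ⟨-1, Or.inr rfl, by simpa using h⟩
  have hTq : ∃ q : ℚ, T = q := by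
    refine ⟨((c : ℚ) * ((-1) ^ l * (Q : ℚ) ^ l) - 1) / (Q + 1), ?_⟩
    push_cast
    rw [← hSc, hST]
    field_simp
    ring
  obtain ⟨k, hk⟩ := (hT.exists_int_iff_exists_rat).1 hTq
  have hZ : c * ((-1) ^ l * (Q : ℤ) ^ l) = 1 + (Q + 1) * k := by
    have : S = 1 + (Q + 1 : ℂ) * k := by rw [← hk]; exact hST
    rw [hSc] at this
    exact_mod_cast this
  have hm : (-1) ^ l * (Q : ℤ) ^ l ≡ 1 [ZMOD (Q + 1 : ℤ)] := by
    have h0 : (-1) * (Q : ℤ) ≡ 1 [ZMOD (Q + 1 : ℤ)] := by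
      rw [Int.modEq_iff_dvd]; exact ⟨1, by ring⟩
    have h1 := h0.pow l
    rwa [mul_pow, one_pow] at h1
  have hm2 : c ≡ 1 [ZMOD (Q + 1 : ℤ)] := by
    have h1 := hm.mul_left c
    rw [hZ, mul_one] at h1
    refine h1.symm.trans ?_
    rw [Int.modEq_iff_dvd]; exact ⟨-k, by ring⟩
  rcases hc with rfl | rfl
  · simpa using hSc
  · exfalso
    rw [Int.modEq_iff_dvd] at hm2
    have := Int.le_of_dvd (by norm_num) hm2
    omega

lemma aux_char (p e m : ℕ) [Fact p.Prime]
    (E : Type*) [Field E] [Fintype E] [Algebra (ZMod p) E]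
    (hE : Fintype.card E = p ^ (2 * e * m)) :
    ∃ ψ : AddChar E ℂ, (∀ x, ψ x = eChar p E x) ∧ ψ.IsPrimitive ∧ (∀ z, ψ (z ^ p) = ψ z) ∧
      (∀ z, z ^ (p ^ e) = -z → ψ z = 1) ∧ (∀ z, IsIntegral ℤ (ψ z)) := by
  have hp := (Fact.out : p.Prime)
  have : CharP E p := charP_of_injective_algebraMap (algebraMap (ZMod p) E).injective p
  have hfr : Module.finrank (ZMod p) E = 2 * e * m := by
    have h := Module.card_eq_pow_finrank (K := ZMod p) (V := E)
    rw [hE, ZMod.card] at h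
    exact (Nat.pow_right_injective hp.two_le h).symm
  let ψ : AddChar E ℂ :=
    (ZMod.stdAddChar (N := p)).compAddMonoidHom (Algebra.trace (ZMod p) E).toAddMonoidHom
  have hψ : ∀ x, ψ x = ZMod.stdAddChar (N := p) (Algebra.trace (ZMod p) E x) := fun x => rfl
  refine ⟨ψ, ?_, ?_, ?_, ?_, ?_⟩
  · intro x
    rw [hψ, eChar]
    have := ZMod.stdAddChar_coe (N := p) ((Algebra.trace (ZMod p) E x).val : ℤ)
    simpa using this
  · apply AddChar.IsPrimitive.of_ne_one
    intro h
    obtain ⟨x, hx⟩ := Algebra.trace_surjective (ZMod p) E 1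
    have h1 : ψ x = 1 := by rw [h]; rfl
    rw [hψ, hx, ← AddChar.map_zero_eq_one (ZMod.stdAddChar (N := p))] at h1
    exact one_ne_zero (ZMod.injective_stdAddChar h1)
  · intro z
    rw [hψ, hψ]
    congr 1
    have := Algebra.trace_eq_of_algEquiv (FiniteField.frobeniusAlgEquivOfAlgebraic (ZMod p) E) z
    simpa [ZMod.card] using this
  · intro z hz
    have h0 : Algebra.trace (ZMod p) E z = 0 := by
      apply (algebraMap (ZMod p) E).injective
      rw [FiniteField.algebraMap_trace_eq_sum_pow, map_zero, hfr, Nat.card_eq_fintype_card,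
        ZMod.card, mul_comm (2 * e), aux_sum_block]
      have h2 : z ^ (p ^ (2 * e)) = z := by
        rw [two_mul, pow_add, pow_mul, hz, ← one_mul z, neg_mul_eq_neg_mul, mul_pow, one_mul, hz]
        have := neg_one_pow_expChar_pow E p e
        rw [this]; ring
      have h3 : ∀ i, z ^ (p ^ (i * (2 * e))) = z := by
        intro i
        induction i with
        | zero => simp
        | succ i ih => rw [Nat.succ_mul, pow_add, pow_mul, ih, h2]
      refine Finset.sum_eq_zero fun i _ => ?_
      rw [two_mul, Finset.sum_range_add, ← Finset.sum_add_distrib, ← two_mul]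
      refine Finset.sum_eq_zero fun j _ => ?_
      rw [pow_add, pow_mul, h3, pow_add, pow_mul, h3, pow_add, pow_mul, hz]
      rw [← neg_one_mul z, mul_pow, neg_one_pow_expChar_pow E p j]
      ring
    rw [hψ, h0, AddChar.map_zero_eq_one]
  · intro z
    refine IsIntegral.of_pow hp.pos ?_
    rw [← AddChar.map_nsmul_eq_pow]
    simp [isIntegral_one]

lemma aux_frob (p e : ℕ) [Fact p.Prime] (E : Type*) [Field E] (ψ : AddChar E ℂ)
    (h : ∀ z, ψ (z ^ p) = ψ z) (z : E) : ψ (z ^ (p ^ e)) = ψ z := by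
  induction e with
  | zero => simp
  | succ e ih => rw [pow_succ, pow_mul, h, ih]

lemma aux_normsq (p e : ℕ) [Fact p.Prime] (E : Type*) [Field E] [Fintype E] [CharP E p]
    (ψ : AddChar E ℂ) (hprim : ψ.IsPrimitive) (hfrob : ∀ z, ψ (z ^ p) = ψ z)
    (hneg : ∀ z, z ^ (p ^ e) = -z → ψ z = 1) (a : E) :
    (∑ x : E, ψ (a * x ^ (p ^ e + 1))) * (∑ x : E, ψ (-a * x ^ (p ^ e + 1))) =
      Fintype.card E *
        ((Finset.univ.filter fun x : E => a ^ (p ^ e) * x ^ (p ^ e * p ^ e) + a * x = 0).card : ℂ)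
      := by
  have hadd : ∀ x y : E, (x + y) ^ (p ^ e) = x ^ (p ^ e) + y ^ (p ^ e) :=
    fun x y => add_pow_char_pow x y p e
  have hbij : Function.Bijective (fun y : E => y ^ (p ^ e)) := by
    have := bijective_iterateFrobenius E p e
    exact this
  have key : ∀ x : E, ∑ y : E, ψ (a * (x + y) ^ (p ^ e + 1)) * ψ (-a * y ^ (p ^ e + 1)) =
      if a ^ (p ^ e) * x ^ (p ^ e * p ^ e) + a * x = 0 then (Fintype.card E : ℂ) else 0 := by
    intro x
    have h1 : ∀ y : E, ψ (a * (x + y) ^ (p ^ e + 1)) * ψ (-a * y ^ (p ^ e + 1)) =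
        ψ (a * x ^ (p ^ e + 1)) *
          ψ (y ^ (p ^ e) * (a ^ (p ^ e) * x ^ (p ^ e * p ^ e) + a * x)) := by
      intro y
      have h2 : ψ (y ^ (p ^ e) * (a ^ (p ^ e) * x ^ (p ^ e * p ^ e) + a * x)) =
          ψ (a * x ^ (p ^ e) * y) * ψ (a * x * y ^ (p ^ e)) := by
        rw [← aux_frob p e E ψ hfrob (a * x ^ (p ^ e) * y), ← AddChar.map_add_eq_mul]
        congr 1
        rw [mul_pow, mul_pow, ← pow_mul]
        ring
      rw [h2, ← AddChar.map_add_eq_mul, ← AddChar.map_add_eq_mul, ← AddChar.map_add_eq_mul]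
      congr 1
      rw [pow_succ, hadd]
      ring
    rw [Finset.sum_congr rfl fun y _ => h1 y, ← Finset.mul_sum,
      hbij.sum_comp (fun y => ψ (y * (a ^ (p ^ e) * x ^ (p ^ e * p ^ e) + a * x))),
      AddChar.sum_mulShift _ hprim]
    split_ifs with h
    · rw [hneg, one_mul]
      rw [mul_pow, ← pow_mul, add_mul, pow_add, one_mul, ← mul_assoc,
        eq_neg_of_add_eq_zero_left h]
      ring
    · simp
  have h3 : (∑ x : E, ψ (a * x ^ (p ^ e + 1))) * (∑ x : E, ψ (-a * x ^ (p ^ e + 1))) =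
      ∑ x : E, ∑ y : E, ψ (a * (x + y) ^ (p ^ e + 1)) * ψ (-a * y ^ (p ^ e + 1)) := by
    rw [Finset.sum_comm, Finset.mul_sum]
    refine Finset.sum_congr rfl fun y _ => ?_
    rw [← Finset.sum_mul]
    congr 1
    exact (Equiv.sum_comp (Equiv.addRight y) fun x => ψ (a * x ^ (p ^ e + 1))).symm
  rw [h3, Finset.sum_congr rfl fun x _ => key x, Finset.sum_ite]
  simp [mul_comm]

lemma aux_count {G : Type*} [CommGroup G] [Fintype G] (γ : G)
    (hγ : ∀ u : G, u ∈ Subgroup.zpowers γ) (d k : ℕ) (h : Fintype.card G = d * k) (l : ℤ) :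
    ((Finset.univ.filter fun u : G => u ^ d = γ ^ l).card : ℂ) = if (d : ℤ) ∣ l then (d : ℂ) else 0
      := by
  have ho : orderOf γ = d * k := (orderOf_eq_card_of_forall_mem_zpowers hγ).trans
    (Nat.card_eq_fintype_card.trans h)
  have hpos : 0 < d * k := h ▸ Fintype.card_pos
  have hd : 0 < d := Nat.pos_of_mul_pos_right hpos
  have hk : 0 < k := Nat.pos_of_mul_pos_left hpos
  split_ifs with hl
  · obtain ⟨l', rfl⟩ := hl
    have h1 : ((Finset.univ.filter fun u : G => u ^ d = γ ^ ((d : ℤ) * l')).card : ℂ) =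
        ∑ u : G, (if (u * (γ ^ l')⁻¹) ^ d = 1 then (1 : ℂ) else 0) := by
      rw [Finset.natCast_card_filter]
      refine Finset.sum_congr rfl fun u _ => ?_
      congr 1
      rw [mul_pow, inv_pow, mul_inv_eq_one, mul_comm, zpow_mul, zpow_natCast]
    have h2 : ∑ u : G, (if (u * (γ ^ l')⁻¹) ^ d = 1 then (1 : ℂ) else 0) =
        ∑ u : G, (if u ^ d = 1 then (1 : ℂ) else 0) :=
      Equiv.sum_comp (Equiv.mulRight (γ ^ l')⁻¹)
        (fun u : G => if u ^ d = 1 then (1 : ℂ) else 0)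
    rw [h1, h2,
      aux_sum_pow γ hγ d k h (fun u => if u = 1 then (1 : ℂ) else 0)]
    rw [Finset.sum_eq_single_of_mem 0 (by simpa using hk)]
    · simp
    · intro j hj hj0
      rw [if_neg]
      intro hj1
      have := orderOf_dvd_of_pow_eq_one hj1
      rw [ho] at this
      have := Nat.le_of_dvd (Nat.pos_of_ne_zero hj0) (Nat.dvd_of_mul_dvd_mul_left hd this)
      have := Finset.mem_range.1 hj
      omega
  · rw [Nat.cast_eq_zero, Finset.card_eq_zero, Finset.filter_eq_empty_iff]
    intro u _ hu
    apply hl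
    obtain ⟨j, rfl⟩ := Subgroup.mem_zpowers_iff.1 (hγ u)
    have h2 : γ ^ (j * d - l) = 1 := by
      rw [zpow_sub, zpow_mul, zpow_natCast, hu, mul_inv_cancel]
    have h3 := orderOf_dvd_iff_zpow_eq_one.2 h2
    rw [ho] at h3
    have h4 : (d : ℤ) ∣ j * d - l := dvd_trans ⟨k, by push_cast; ring⟩ h3
    exact (dvd_sub_right (Dvd.intro_left j rfl)).1 h4

lemma aux_geom (a m : ℕ) : ∃ c : ℕ, (a + 1) ^ (2 * m) = a * (a + 2) * c + 1 ∧
    (Even a → (Even c ↔ Even m)) := by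
  induction m with
  | zero => exact ⟨0, by simp, by simp⟩
  | succ m ih =>
    obtain ⟨c, hc, hp⟩ := ih
    refine ⟨(a + 1) ^ 2 * c + 1, ?_, ?_⟩
    · rw [Nat.mul_succ, pow_add, hc]; ring
    · intro ha
      have := hp ha
      have h2 : ¬ Even (a + 1) := by simpa [Nat.even_add_one] using ha
      rw [Nat.even_add_one, Nat.even_mul, Nat.even_add_one, ← this, Nat.even_pow]
      tauto

lemma aux_h (p e m : ℕ) [Fact p.Prime] (he : 0 < e) (hm : 0 < m)
    (E : Type*) [Field E] [Fintype E] [CharP E p]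
    (hE : Fintype.card E = p ^ (2 * e * m))
    (γ : Eˣ) (hγ : ∀ u : Eˣ, u ∈ Subgroup.zpowers γ) :
    ∃ (a k : ℕ), p ^ e = a + 1 ∧ 1 ≤ a ∧ Fintype.card Eˣ = a * (a + 2) * k ∧
    ∃ h : ℤ, γ ^ ((a : ℤ) * h) = -1 ∧
      h ≡ (if 2 < p ∧ Odd m then (p ^ e + 1) / 2 else 0 : ℕ) [ZMOD (p ^ e + 1 : ℕ)] ∧
      ∃ w : E, w ^ (p ^ e + 1) = -1 := by
  have hp := (Fact.out : p.Prime)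
  have hQ : 2 ≤ p ^ e := hp.two_le.trans (Nat.le_self_pow he.ne' p)
  obtain ⟨a, ha⟩ : ∃ a, p ^ e = a + 1 := ⟨p ^ e - 1, by omega⟩
  obtain ⟨c, hc, hcp⟩ := aux_geom a m
  have hM : Fintype.card Eˣ = a * (a + 2) * c := by
    rw [Fintype.card_units, hE, show 2 * e * m = e * (2 * m) by ring, pow_mul, ha, hc]
    simp
  have ho : orderOf γ = Fintype.card Eˣ := (orderOf_eq_card_of_forall_mem_zpowers hγ).trans
    Nat.card_eq_fintype_card
  refine ⟨a, c, ha, by omega, hM, ?_⟩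
  rcases hp.eq_two_or_odd' with h2 | hodd
  · subst h2
    have h1 : (-1 : E) = 1 := CharTwo.neg_eq 1
    refine ⟨0, ?_, by simp, 1, by simp [h1]⟩
    ext; simp [h1]
  · have haE : Even a := by
      have : Odd (a + 1) := ha ▸ hodd.pow
      rwa [Nat.odd_add_one, Nat.not_odd_iff_even] at this
    obtain ⟨b, hb⟩ := haE
    have hneg : γ ^ (a * (b + 1) * c) = -1 := by
      have hsq : (((γ ^ (a * (b + 1) * c) : Eˣ) : E)) ^ 2 = 1 := by
        rw [← Units.val_pow_eq_pow_val, ← pow_mul,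
          show a * (b + 1) * c * 2 = Fintype.card Eˣ by rw [hM, hb]; ring, pow_card_eq_one]
        rfl
      rcases (sq_eq_sq_iff_eq_or_eq_neg.mp (hsq.trans (one_pow 2).symm)) with h | h
      · exfalso
        have h1 : γ ^ (a * (b + 1) * c) = 1 := by ext; simpa using h
        have h2 := orderOf_dvd_of_pow_eq_one h1
        have hpos : 0 < Fintype.card Eˣ := Fintype.card_pos
        have h3 : Fintype.card Eˣ = 2 * (a * (b + 1) * c) := by rw [hM, hb]; ring
        rw [ho] at h2
        have := Nat.le_of_dvd (by omega) h2
        omega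
      · ext; simpa using h
    refine ⟨((b + 1) * c : ℕ), ?_, ?_, ((γ ^ (b * c) : Eˣ) : E), ?_⟩
    · rw [← hneg, ← zpow_natCast]; push_cast; ring_nf
    · rw [ha]
      have hp2 : 2 < p := by
        rcases hp.two_le.lt_or_eq with h | h
        · exact h
        · subst h; exact absurd hodd (by decide)
      rw [show (a + 1 + 1) / 2 = b + 1 by omega]
      have hcp := hcp ⟨b, hb⟩
      by_cases hmo : Odd m
      · rw [if_pos ⟨hp2, hmo⟩]
        have : Odd c := by
          rw [← Nat.not_even_iff_odd] at hmo ⊢; tauto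
        obtain ⟨c', rfl⟩ := this
        rw [Int.modEq_iff_dvd]
        refine ⟨-c', ?_⟩
        rw [hb]; push_cast; ring
      · rw [if_neg (by tauto)]
        have : Even c := by
          rw [Nat.not_odd_iff_even] at hmo; tauto
        obtain ⟨c', rfl⟩ := this
        rw [Int.modEq_iff_dvd]
        refine ⟨-c', ?_⟩
        rw [hb]; push_cast; ring
    · rw [← Units.val_pow_eq_pow_val, ← pow_mul, ha,
        show b * c * (a + 1 + 1) = a * (b + 1) * c by rw [hb]; ring, hneg]
      simp

lemma aux_units_sum (E : Type*) [Field E] [Fintype E] (F : E → ℂ) :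
    ∑ x : E, F x = F 0 + ∑ x : Eˣ, F x := by
  rw [Fintype.sum_eq_add_sum_subtype_ne F 0]
  congr 1
  exact (Equiv.sum_comp unitsEquivNeZero (fun x : {x : E // x ≠ 0} => F x)).symm

lemma aux_main (p e m : ℕ) [Fact p.Prime] (he : 0 < e) (hm : 0 < m)
    (E : Type*) [Field E] [Fintype E] [CharP E p]
    (hE : Fintype.card E = p ^ (2 * e * m))
    (γ : Eˣ) (hγ : ∀ u : Eˣ, u ∈ Subgroup.zpowers γ)
    (ψ : AddChar E ℂ) (hprim : ψ.IsPrimitive) (hfrob : ∀ z, ψ (z ^ p) = ψ z)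
    (hneg : ∀ z, z ^ (p ^ e) = -z → ψ z = 1) (hint : ∀ z, IsIntegral ℤ (ψ z)) (i : ℤ) :
    ∑ x : Eˣ, ψ ((γ ^ i : Eˣ) * (x : E) ^ (p ^ e + 1)) =
      (if i ≡ (if 2 < p ∧ Odd m then (p ^ e + 1) / 2 else 0 : ℕ) [ZMOD (p ^ e + 1 : ℕ)] then
        (-1) ^ (m + 1) * ((p ^ e : ℕ) : ℂ) ^ (m + 1) else (-1) ^ m * ((p ^ e : ℕ) : ℂ) ^ m) - 1
      := by
  have hp := (Fact.out : p.Prime)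
  have hQ : 2 ≤ p ^ e := hp.two_le.trans (Nat.le_self_pow he.ne' p)
  obtain ⟨a, k, ha, ha1, hM, h, hh, hk, w, hw⟩ := aux_h p e m he hm E hE γ hγ
  set kN : ℕ := if 2 < p ∧ Odd m then (p ^ e + 1) / 2 else 0 with hkN
  set b : E := ((γ ^ i : Eˣ) : E) with hb
  have hsplit : ∑ x : E, ψ (b * x ^ (p ^ e + 1)) =
      1 + ∑ x : Eˣ, ψ (b * (x : E) ^ (p ^ e + 1)) := by
    rw [aux_units_sum E (fun x => ψ (b * x ^ (p ^ e + 1)))]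
    simp
  -- divisibility
  have hT : ∃ T : ℂ, IsIntegral ℤ T ∧
      ∑ x : Eˣ, ψ (b * (x : E) ^ (p ^ e + 1)) = ((p ^ e : ℕ) + 1 : ℂ) * T := by
    have := aux_sum_pow γ hγ (p ^ e + 1) (a * k) (by rw [hM, ha]; ring)
      (fun x : Eˣ => ψ (b * (x : E)))
    refine ⟨∑ j ∈ Finset.range (a * k), ψ (b * ((γ ^ ((p ^ e + 1) * j) : Eˣ) : E)),
      IsIntegral.sum _ fun j _ => hint _, ?_⟩
    rw [Nat.cast_add, Nat.cast_one] at this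
    exact this
  obtain ⟨T, hTi, hT⟩ := hT
  -- S(-b) = S(b)
  have hw0 : w ≠ 0 := by
    rintro rfl
    simp at hw
  have hsymm : ∑ x : E, ψ (-b * x ^ (p ^ e + 1)) = ∑ x : E, ψ (b * x ^ (p ^ e + 1)) := by
    rw [← Equiv.sum_comp (Equiv.mulLeft₀ w hw0) (fun x => ψ (b * x ^ (p ^ e + 1)))]
    refine Finset.sum_congr rfl fun x _ => ?_
    have : Equiv.mulLeft₀ w hw0 x = w * x := rfl
    rw [this, mul_pow, hw]
    congr 1; ring
  have hns := aux_normsq p e E ψ hprim hfrob hneg b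
  rw [hsymm, ← sq] at hns
  -- count
  have hcount : ((Finset.univ.filter fun x : E =>
      b ^ (p ^ e) * x ^ (p ^ e * p ^ e) + b * x = 0).card : ℂ) =
      if i ≡ kN [ZMOD (p ^ e + 1 : ℕ)] then ((p ^ e : ℕ) : ℂ) ^ 2 else 1 := by
    rw [Finset.natCast_card_filter, aux_units_sum]
    have h1 : ∀ u : Eˣ, (b ^ (p ^ e) * (u : E) ^ (p ^ e * p ^ e) + b * u = 0) ↔
        u ^ (a * (a + 2)) = γ ^ ((a : ℤ) * (h - i)) := by
      intro u
      rw [mul_sub, zpow_sub, hh, eq_mul_inv_iff_mul_eq, Units.ext_iff, ha]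
      rw [mul_comm (a : ℤ) i, zpow_mul, zpow_natCast, Units.val_mul, Units.val_pow_eq_pow_val,
        Units.val_pow_eq_pow_val, ← hb, Units.val_neg, Units.val_one]
      have hb0 : b ≠ 0 := Units.ne_zero _
      have hu0 : (u : E) ≠ 0 := Units.ne_zero _
      rw [show b ^ (a + 1) * (u : E) ^ ((a + 1) * (a + 1)) + b * u =
        (b * u) * ((u : E) ^ (a * (a + 2)) * b ^ a + 1) by ring]
      rw [mul_eq_zero, or_iff_right (mul_ne_zero hb0 hu0), add_eq_zero_iff_eq_neg]
    have h2 : ((a * (a + 2) : ℕ) : ℤ) ∣ (a : ℤ) * (h - i) ↔ i ≡ kN [ZMOD (p ^ e + 1 : ℕ)] := by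
      have h3 : i ≡ kN [ZMOD (p ^ e + 1 : ℕ)] ↔ i ≡ h [ZMOD (p ^ e + 1 : ℕ)] :=
        ⟨fun x => x.trans hk.symm, fun x => x.trans hk⟩
      rw [h3, Int.modEq_iff_dvd, ha]
      push_cast
      rw [mul_dvd_mul_iff_left (by exact_mod_cast (by omega : a ≠ 0)), add_assoc]
      norm_num
    have h4 := aux_count γ hγ (a * (a + 2)) k hM ((a : ℤ) * (h - i))
    rw [Finset.natCast_card_filter] at h4
    have h5 : ∑ u : Eˣ, (if b ^ (p ^ e) * (u : E) ^ (p ^ e * p ^ e) + b * u = 0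
        then (1 : ℂ) else 0) = if i ≡ kN [ZMOD (p ^ e + 1 : ℕ)] then ((a * (a + 2) : ℕ) : ℂ)
          else 0 := by
      refine Eq.trans ?_ (h4.trans (if_congr h2 rfl rfl))
      refine Finset.sum_congr rfl fun u _ => ?_
      by_cases hu : u ^ (a * (a + 2)) = γ ^ ((a : ℤ) * (h - i))
      · rw [if_pos hu, if_pos ((h1 u).2 hu)]
      · rw [if_neg hu, if_neg fun hx => hu ((h1 u).1 hx)]
    rw [h5]
    have hz : b ^ p ^ e * (0 : E) ^ (p ^ e * p ^ e) + b * 0 = 0 := by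
      have : p ^ e * p ^ e ≠ 0 := by positivity
      simp [this]
    rw [if_pos hz, ha]
    split_ifs
    · push_cast; ring
    · simp
  have hEc : (Fintype.card E : ℂ) = (((p ^ e : ℕ) : ℂ) ^ m) ^ 2 := by
    rw [hE]; push_cast; ring
  rw [hcount, hEc] at hns
  rw [eq_sub_iff_add_eq, add_comm, ← hsplit]
  rw [hT] at hsplit
  split_ifs at hns ⊢ with hc
  · exact aux_sign (p ^ e) (m + 1) hQ _ T (by rw [hns]; ring) hsplit hTi
  · exact aux_sign (p ^ e) m hQ _ T (by rw [hns]; ring) hsplit hTi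

lemma aux_cnt (s d : ℕ) (hs : 0 < s) (hd : 0 < d) (i κ : ℤ) (A B : ℂ) :
    ∑ j ∈ Finset.range d, (if i + (s * j : ℕ) ≡ κ [ZMOD (s * d : ℕ)] then A else B) =
      if i ≡ κ [ZMOD s] then A + (d - 1) * B else d * B := by
  split_ifs with h
  · obtain ⟨l, hl⟩ := (Int.modEq_iff_dvd.1 h)
    have hd' : (d : ℤ) ≠ 0 := by exact_mod_cast hd.ne'
    have hs' : (s : ℤ) ≠ 0 := by exact_mod_cast hs.ne'
    have hcond : ∀ j ∈ Finset.range d,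
        (i + (s * j : ℕ) ≡ κ [ZMOD (s * d : ℕ)] ↔ j = (l % d).toNat) := by
      intro j hj
      rw [Int.modEq_iff_dvd]
      push_cast
      rw [show κ - (i + s * j) = (s : ℤ) * (l - j) by linear_combination hl,
        mul_dvd_mul_iff_left hs', ← Int.modEq_iff_dvd, Int.ModEq]
      have h1 : (j : ℤ) % d = j := Int.emod_eq_of_lt (by omega)
        (by exact_mod_cast Finset.mem_range.1 hj)
      have h2 := Int.emod_nonneg l hd'
      rw [h1]
      omega
    have hmem : (l % d).toNat ∈ Finset.range d := by
      have h2 := Int.emod_nonneg l hd'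
      have h3 := Int.emod_lt_of_pos l (by exact_mod_cast hd : (0 : ℤ) < d)
      rw [Finset.mem_range]; omega
    have : ∀ j ∈ Finset.range d,
        (if i + (s * j : ℕ) ≡ κ [ZMOD (s * d : ℕ)] then A else B) =
          B + if j = (l % d).toNat then A - B else 0 := by
      intro j hj
      rw [if_congr (hcond j hj) rfl rfl]
      split_ifs <;> ring
    rw [Finset.sum_congr rfl this, Finset.sum_add_distrib, Finset.sum_ite_eq', if_pos hmem]
    simp
    ring
  · rw [Finset.sum_congr rfl fun j _ => if_neg _]
    · simp
    · intro j _ hc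
      apply h
      have h1 : i + (s * j : ℕ) ≡ κ [ZMOD s] := hc.of_dvd ⟨d, by push_cast; ring⟩
      refine Int.ModEq.trans ?_ h1
      rw [Int.modEq_iff_dvd]
      exact ⟨j, by push_cast; ring⟩

/-- The semiprimitive-case evaluation of the monomial sums
`Σ_{x∈F_{q^t}^*} e_t(γ_t^i·x^s)` when `r = 2en` and `s ∣ p^e + 1`. -/
theorem stmt17 (p r t e n s : ℕ) [Fact p.Prime] (hr : 0 < r) (ht : 0 < t)
    (he : 0 < e) (hn : 0 < n) (hren : r = 2 * e * n)
    (hs : 1 ≤ s) (hsd : s ∣ p ^ e + 1)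
    (E : Type*) [Field E] [Fintype E] [Algebra (ZMod p) E]
    (hE : Fintype.card E = (p ^ r) ^ t)
    (γ : Eˣ) (hγ : ∀ u : Eˣ, u ∈ Subgroup.zpowers γ)
    (ks : ℕ)
    (hks : ks = if 2 < p ∧ Odd (n * t) ∧ Odd ((p ^ e + 1) / s) then s / 2 else 0) :
    ∀ i : ℤ,
      (¬ (i ≡ (ks : ℤ) [ZMOD (s : ℤ)]) →
        ∑ x : Eˣ, eChar p E (((γ ^ i : Eˣ) : E) * (x : E) ^ s) =
          (-1 : ℂ) ^ (n * t) * (Real.sqrt (((p : ℝ) ^ r) ^ t) : ℂ) - 1) ∧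
      (i ≡ (ks : ℤ) [ZMOD (s : ℤ)] →
        ∑ x : Eˣ, eChar p E (((γ ^ i : Eˣ) : E) * (x : E) ^ s) =
          (-1 : ℂ) ^ (n * t - 1) * ((s : ℂ) - 1) * (Real.sqrt (((p : ℝ) ^ r) ^ t) : ℂ) - 1) := by
  intro i
  have hp := (Fact.out : p.Prime)
  have : CharP E p := charP_of_injective_algebraMap (algebraMap (ZMod p) E).injective p
  obtain ⟨m, hm⟩ : ∃ m, m = n * t := ⟨_, rfl⟩
  have hm0 : 0 < m := hm ▸ Nat.mul_pos hn ht
  have hE' : Fintype.card E = p ^ (2 * e * m) := by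
    rw [hE, ← pow_mul, hren, hm]; ring_nf
  obtain ⟨d, hd⟩ := hsd
  have hd0 : 0 < d := by
    rcases Nat.eq_zero_or_pos d with h | h
    · subst h; simp at hd
    · exact h
  obtain ⟨ψ, hψ, hprim, hfrob, hneg, hint⟩ := aux_char p e m E hE'
  have hdiv : (p ^ e + 1) / s = d := by rw [hd]; exact Nat.mul_div_cancel_left d hs
  rw [hdiv] at hks
  obtain ⟨kN, hkN⟩ : ∃ kN : ℕ, kN = if 2 < p ∧ Odd m then (p ^ e + 1) / 2 else 0 := ⟨_, rfl⟩
  have hkk : (kN : ℤ) ≡ ks [ZMOD s] := by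
    rw [hkN, hks, ← hm, Int.modEq_iff_dvd]
    by_cases h1 : 2 < p ∧ Odd m
    · rw [if_pos h1]
      have hev : Even (p ^ e + 1) := by
        have : Odd p := hp.odd_of_ne_two (by omega)
        exact (this.pow).add_one
      by_cases h2 : Odd d
      · rw [if_pos ⟨h1.1, h1.2, h2⟩]
        rw [hd, Nat.even_mul] at hev
        obtain ⟨s', hs'⟩ := hev.resolve_right (by simpa using h2)
        obtain ⟨d', hd'⟩ := h2
        have e1 : (p ^ e + 1) / 2 = s' * d := by
          rw [hd, hs', show (s' + s') * d = 2 * (s' * d) by ring]; omega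
        have e2 : s / 2 = s' := by omega
        rw [e1, e2, hs', hd']
        exact ⟨-d', by push_cast; ring⟩
      · rw [if_neg (by tauto)]
        rw [Nat.not_odd_iff_even] at h2
        obtain ⟨d', hd'⟩ := h2
        have e1 : (p ^ e + 1) / 2 = s * d' := by
          rw [hd, hd', show s * (d' + d') = 2 * (s * d') by ring]; omega
        rw [e1]
        exact ⟨-d', by push_cast; ring⟩
    · rw [if_neg h1, if_neg (by tauto)]
      simp
  have hiff : i ≡ (ks : ℤ) [ZMOD (s : ℤ)] ↔ i ≡ (kN : ℤ) [ZMOD (s : ℤ)] :=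
    ⟨fun x => x.trans hkk.symm, fun x => x.trans hkk⟩
  obtain ⟨a, k, ha, -, hM, -⟩ := aux_h p e m he hm0 E hE' γ hγ
  have hsum : ∑ x : Eˣ, eChar p E (((γ ^ i : Eˣ) : E) * (x : E) ^ s) =
      (d : ℂ)⁻¹ * ((if i ≡ (kN : ℤ) [ZMOD (s : ℤ)] then
        (-1) ^ (m + 1) * ((p ^ e : ℕ) : ℂ) ^ (m + 1) +
          (d - 1) * ((-1) ^ m * ((p ^ e : ℕ) : ℂ) ^ m)
        else d * ((-1) ^ m * ((p ^ e : ℕ) : ℂ) ^ m)) - d) := by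
    have h1 := aux_sum_reduce γ hγ s d (a * k) hd0.ne'
      (by rw [hM, ← hd, ha]; ring) (fun u : Eˣ => ψ (((γ ^ i : Eˣ) : E) * (u : E)))
    have h2 : ∀ j ∈ Finset.range d,
        ∑ x : Eˣ, ψ (((γ ^ i : Eˣ) : E) * ((γ ^ (s * j) * x ^ (s * d) : Eˣ) : E)) =
        (if i + (s * j : ℕ) ≡ kN [ZMOD (s * d : ℕ)] then
          (-1) ^ (m + 1) * ((p ^ e : ℕ) : ℂ) ^ (m + 1) else
          (-1) ^ m * ((p ^ e : ℕ) : ℂ) ^ m) - 1 := by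
      intro j _
      have h3 := aux_main p e m he hm0 E hE' γ hγ ψ hprim hfrob hneg hint (i + (s * j : ℕ))
      rw [← hkN, hd] at h3
      rw [← h3]
      refine Finset.sum_congr rfl fun x _ => ?_
      rw [zpow_add, zpow_natCast, Units.val_mul, Units.val_mul, mul_assoc,
        Units.val_pow_eq_pow_val x]
    rw [Finset.sum_congr rfl h2, Finset.sum_sub_distrib, aux_cnt s d hs hd0] at h1
    simp only [Finset.sum_const, Finset.card_range, nsmul_eq_mul, mul_one] at h1
    rw [← h1]
    refine Finset.sum_congr rfl fun x _ => ?_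
    rw [hψ, Units.val_pow_eq_pow_val]
  have hsq : (Real.sqrt (((p : ℝ) ^ r) ^ t) : ℂ) = ((p ^ e : ℕ) : ℂ) ^ m := by
    have h1 : ((p : ℝ) ^ r) ^ t = (((p ^ e : ℕ) : ℝ) ^ m) ^ 2 := by
      rw [hren, hm]; push_cast; ring
    rw [h1, Real.sqrt_sq (by positivity)]
    push_cast; rfl
  have hdC : (d : ℂ) ≠ 0 := by exact_mod_cast hd0.ne'
  have hdN : ((p ^ e : ℕ) : ℂ) = s * d - 1 := by
    rw [eq_sub_iff_add_eq]; exact_mod_cast hd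
  rw [hsum, hsq, hiff, ← hm]
  obtain ⟨m', rfl⟩ : ∃ m', m = m' + 1 := ⟨m - 1, by omega⟩
  constructor
  · intro h
    rw [if_neg h]
    field_simp
  · intro h
    rw [if_pos h, Nat.add_sub_cancel, pow_succ ((p ^ e : ℕ) : ℂ) (m' + 1)]
    generalize hX : ((p ^ e : ℕ) : ℂ) ^ (m' + 1) = X
    rw [hdN]
    field_simp
    ring

end
end

section
/- Assume s | p^e + 1 with s > 1, r = 2en, p ∤ (m/t) and d | h. Set u = s/(d·l), t_0 = (q^t−1)/(q−1), k_l = k_l(t), k_{s/d} = k_{s/d}(t), and k_u = k_u(1). For a ≠ 0 set a_0 = −(m/t)·a^{−1} ∈ F_q^*, let ind_{γ_t} a_0 be the unique exponent with γ_t^{ind_{γ_t} a_0} = a_0, put Δ = k_{s/d} − i_0 − ind_{γ_t} a_0, and when l | Δ let j_0 ∈ {0,…,u−1} be the unique solution of (t_0/l)·j ≡ Δ/l (mod u). Then: (a) if a = 0, l > 1 and i_0 ≢ k_l (mod l), then N_t = (d/s)·( q^{t−1} − 1 + (−1)^{nt}·(q−1)·√(q^{t−2}) ); (b) if a = 0 and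 (l = 1, or l > 1 and i_0 ≡ k_l (mod l)), then N_t = (d/s)·( q^{t−1} − 1 − (−1)^{nt}·(q−1)·(l−1)·√(q^{t−2}) ); (c) if a ≠ 0 and l ∤ Δ, then N_t = (d/s)·( q^{t−1} − (−1)^{nt}·√(q^{t−2}) ); (d) if a ≠ 0, l | Δ, u > 1 and j_0 ≢ k_u (mod u), then N_t = (d/s)·( q^{t−1} − (−1)^{nt}·( ((−1)^n·√q − 1)·l + 1 )·√(q^{t−2}) ); (e) if a ≠ 0, l | Δ and (u = 1, or j_0 ≡ k_u (mod u)), then N_t = (d/s)·( q^{t−1} − (−1)^{nt}·( ((−1)^{n−1}·(u−1)·√q − 1)·l + 1 )·√(q^{t−2}) ). -/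
noncomputable section

open Complex Polynomial Classical

/-- `N_t(a,s,h)`: the number of elements `x` of the subfield `F_{q^t}` of `K = F_{q^m}`
with `Tr_{K/F}(x) = a` and `N_{K/F}(x) ∈ g^h·⟨g^s⟩`. -/
def NN (F K : Type*) [Field F] [Fintype F] [Field K] [Fintype K] [Algebra F K]
    (g : F) (s h t : ℕ) (a : F) : ℕ :=
  Nat.card {x : K // x ^ (Fintype.card F) ^ t = x ∧ Algebra.trace F K x = a ∧
    ∃ k : ℕ, Algebra.norm F x = g ^ (h + s * k)}

/-- `k_N(τ)` in the semiprimitive case: `N/2` if `p > 2`, `n·τ` odd and `(p^e+1)/N` odd,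
and `0` otherwise. -/
def kSemi (p e n N τ : ℕ) : ℕ :=
  if 2 < p ∧ Odd (n * τ) ∧ Odd ((p ^ e + 1) / N) then N / 2 else 0

def InC {G : Type*} [CommGroup G] (γ : G) (N : ℕ) (i : ℤ) (v : G) : Prop :=
  ∃ j : ℤ, v = γ ^ (i + N * j)

lemma InC_zpow {G : Type*} [CommGroup G] [Finite G] (γ : G) (hγ : ∀ u : G, u ∈ Subgroup.zpowers γ)
    (N : ℕ) (hN : N ∣ Nat.card G) (i w : ℤ) : InC γ N i (γ ^ w) ↔ (N : ℤ) ∣ w - i := by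
  have ho : orderOf γ = Nat.card G := orderOf_eq_card_of_forall_mem_zpowers hγ
  constructor
  · rintro ⟨j, hj⟩
    rw [zpow_eq_zpow_iff_modEq, ho] at hj
    have h1 := (hj.dvd : ((Nat.card G : ℕ) : ℤ) ∣ _)
    have h2 : (N : ℤ) ∣ i + N * j - w := dvd_trans (by exact_mod_cast hN) h1
    have : w - i = N * j - (i + N * j - w) := by ring
    rw [this]
    exact dvd_sub (dvd_mul_right _ _) h2
  · rintro ⟨j, hj⟩
    exact ⟨j, by rw [← hj]; congr 1; ring⟩

lemma sum_pow_InC {G : Type*} [CommGroup G] [Fintype G] (γ : G)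
    (hγ : ∀ u : G, u ∈ Subgroup.zpowers γ)
    (N : ℕ) (hN : N ∣ Nat.card G) (i : ℤ) (f : G → ℂ) :
    ∑ v, f (γ ^ i * v ^ N) = N * ∑ v, if InC γ N i v then f v else 0 := by
  have : IsCyclic G := ⟨γ, hγ⟩
  rw [← Finset.sum_fiberwise Finset.univ (fun v => γ ^ i * v ^ N), Finset.mul_sum]
  refine Finset.sum_congr rfl fun w _ => ?_
  have h1 : ∑ v ∈ Finset.univ.filter (fun v => γ ^ i * v ^ N = w), f (γ ^ i * v ^ N)
      = ∑ v ∈ Finset.univ.filter (fun v => γ ^ i * v ^ N = w), f w :=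
    Finset.sum_congr rfl fun v hv => by rw [(Finset.mem_filter.1 hv).2]
  rw [h1, Finset.sum_const, nsmul_eq_mul]
  split_ifs with h
  · congr 1
    norm_cast
    obtain ⟨j, hj⟩ := h
    have hk := IsCyclic.card_powMonoidHom_ker (G := G) N
    rw [Nat.gcd_eq_right hN] at hk
    refine Eq.trans ?_ hk
    rw [Nat.card_eq_fintype_card, ← Fintype.card_subtype]
    refine Fintype.card_congr ⟨fun v => ⟨v.1 * (γ ^ j)⁻¹, ?_⟩, fun v => ⟨v.1 * γ ^ j, ?_⟩, ?_, ?_⟩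
    · have := v.2.trans hj
      rw [zpow_add, mul_right_inj] at this
      rw [MonoidHom.mem_ker, powMonoidHom_apply, mul_pow, this, inv_pow, ← zpow_natCast (γ ^ j),
        ← zpow_mul, mul_comm (N : ℤ), mul_inv_cancel]
    · have := v.2
      rw [MonoidHom.mem_ker, powMonoidHom_apply] at this
      rw [mul_pow, this, one_mul, hj, zpow_add, ← zpow_natCast (γ ^ j), ← zpow_mul, mul_comm (N : ℤ)]
    · intro v; simp
    · intro v; simp
  · have : Finset.univ.filter (fun v => γ ^ i * v ^ N = w) = ∅ := by
      ext v
      simp only [Finset.mem_filter, Finset.mem_univ, true_and, Finset.notMem_empty, iff_false]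
      intro hv
      apply h
      obtain ⟨j, rfl⟩ := hγ v
      refine ⟨j, ?_⟩
      simp only at hv
      rw [← hv, zpow_add, ← zpow_natCast (γ ^ j), ← zpow_mul, mul_comm (N : ℤ)]
    rw [this]; simp

lemma sum_units {L : Type*} [Field L] [Fintype L] (f : L → ℂ) :
    ∑ x, f x = f 0 + ∑ v : Lˣ, f v := by
  rw [← Finset.sum_erase_add _ _ (Finset.mem_univ (0 : L)), add_comm]
  congr 1
  symm
  refine Finset.sum_bij (fun v _ => (v : L)) (fun v _ => by simp) (fun a _ b _ h => Units.ext h)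
    (fun b hb => ⟨Units.mk0 b (Finset.ne_of_mem_erase hb), by simp, rfl⟩) (fun _ _ => rfl)

lemma frob_pow {L : Type*} [Field L] (p : ℕ) (Ψ : AddChar L ℂ)
    (hf : ∀ z, Ψ (z ^ p) = Ψ z) (e : ℕ) (z : L) : Ψ (z ^ p ^ e) = Ψ z := by
  induction e with
  | zero => simp
  | succ k ih => rw [pow_succ, pow_mul, hf, ih]

lemma T_sq {L : Type*} [Field L] [Fintype L] (p e : ℕ) [Fact p.Prime] [CharP L p]
    (Ψ : AddChar L ℂ) (hp : Ψ.IsPrimitive) (hf : ∀ z, Ψ (z ^ p) = Ψ z) (c : L)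
    (hW : ∀ x : L, c * x + c ^ p ^ e * x ^ (p ^ e * p ^ e) = 0 → x = 0) :
    (∑ x, Ψ (c * x ^ (p ^ e + 1))) * (∑ x, Ψ (-(c * x ^ (p ^ e + 1)))) = Fintype.card L := by
  have hbij : Function.Bijective (fun y : L => y ^ p ^ e) := by
    have := (Finite.injective_iff_bijective).1 (iterateFrobenius L p e).injective
    have h2 : (fun y : L => y ^ p ^ e) = iterateFrobenius L p e := by
      ext y; rw [iterateFrobenius_def]
    rw [h2]; exact this
  have key : ∀ x : L, ∑ y, Ψ (c * (x + y) ^ (p ^ e + 1)) * Ψ (-(c * y ^ (p ^ e + 1)))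
      = if x = 0 then (Fintype.card L : ℂ) else 0 := by
    intro x
    have h1 : ∀ y, Ψ (c * (x + y) ^ (p ^ e + 1)) * Ψ (-(c * y ^ (p ^ e + 1)))
        = Ψ (c * x ^ (p ^ e + 1)) * Ψ (y ^ p ^ e * (c * x + c ^ p ^ e * x ^ (p ^ e * p ^ e))) := by
      intro y
      have h2 : Ψ (c * x ^ p ^ e * y) = Ψ (c ^ p ^ e * x ^ (p ^ e * p ^ e) * y ^ p ^ e) := by
        rw [← frob_pow p Ψ hf e (c * x ^ p ^ e * y), mul_pow, mul_pow, ← pow_mul]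
      rw [← AddChar.map_add_eq_mul, pow_succ (x + y), add_pow_char_pow]
      have h3 : c * ((x ^ p ^ e + y ^ p ^ e) * (x + y)) + -(c * y ^ (p ^ e + 1))
        = c * x ^ (p ^ e + 1) + c * x ^ p ^ e * y + y ^ p ^ e * (c * x) := by ring
      rw [h3, AddChar.map_add_eq_mul, AddChar.map_add_eq_mul, h2, mul_assoc,
        ← AddChar.map_add_eq_mul]
      congr 2; ring
    simp_rw [h1]
    rw [← Finset.mul_sum]
    have h4 := hbij.sum_comp (fun y => Ψ (y * (c * x + c ^ p ^ e * x ^ (p ^ e * p ^ e))))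
    rw [h4, AddChar.sum_mulShift _ hp]
    by_cases hx : x = 0
    · subst hx
      have : 0 < p ^ e := pow_pos (Fact.out : p.Prime).pos e
      simp [(Fact.out : p.Prime).ne_zero]
    · rw [if_neg hx, if_neg (fun h => hx (hW x h))]; simp
  rw [Finset.sum_mul_sum]
  rw [Finset.sum_comm]
  have h5 : ∀ y, ∑ x, Ψ (c * x ^ (p ^ e + 1)) * Ψ (-(c * y ^ (p ^ e + 1)))
      = ∑ x, Ψ (c * (x + y) ^ (p ^ e + 1)) * Ψ (-(c * y ^ (p ^ e + 1))) := fun y =>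
    (Equiv.sum_comp (Equiv.addRight y)
      (fun x => Ψ (c * x ^ (p ^ e + 1)) * Ψ (-(c * y ^ (p ^ e + 1))))).symm
  simp_rw [h5]
  rw [Finset.sum_comm]
  simp_rw [key]
  simp

/-- integrality argument -/
lemma int_div (η : ℂ) (hη : IsIntegral ℤ η) (A B : ℤ) (hB : B ≠ 0) (h : (A : ℂ) = B * η) : B ∣ A := by
  have hB' : (B : ℂ) ≠ 0 := by exact_mod_cast hB
  have h1 : η = algebraMap ℚ ℂ ((A : ℚ) / B) := by
    simp; rw [h]; field_simp
  rw [h1, isIntegral_algebraMap_iff (algebraMap ℚ ℂ).injective,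
    IsIntegrallyClosed.isIntegral_iff] at hη
  obtain ⟨y, hy⟩ := hη
  refine ⟨y, ?_⟩
  have hB2 : (B : ℚ) ≠ 0 := by exact_mod_cast hB
  simp at hy
  field_simp at hy
  rw [mul_comm]; exact_mod_cast hy.symm

lemma sign_det (P k : ℕ) (hP : 2 ≤ P) (T : ℂ) (η : ℂ) (hη : IsIntegral ℤ η)
    (hT : T = 1 + (P + 1) * η) (h2 : T * T = (P : ℂ) ^ (2 * k)) :
    T = (-1) ^ k * (P : ℂ) ^ k := by
  have hmod : ((P : ℤ) + 1) ∣ (P : ℤ) ^ k - (-1) ^ k := by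
    have := sub_dvd_pow_sub_pow (P : ℤ) (-1) k
    simpa using this
  have hs : ((-1 : ℤ) ^ k) * (-1) ^ k = 1 := by rw [← mul_pow]; simp
  have h3 : (T - (-1) ^ k * (P : ℂ) ^ k) * (T + (-1) ^ k * (P : ℂ) ^ k) = 0 := by
    have hs' : ((-1 : ℂ) ^ k) * (-1) ^ k = 1 := by rw [← mul_pow]; simp
    linear_combination h2 - (P : ℂ) ^ k * P ^ k * hs'
  rcases mul_eq_zero.1 h3 with h | h
  · exact sub_eq_zero.1 h
  · exfalso
    have h4 := int_div η hη (-((-1) ^ k * (P : ℤ) ^ k) - 1) (P + 1) (by positivity) (by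
      push_cast
      linear_combination hT - h)
    have h5 : ((P : ℤ) + 1) ∣ 2 := by
      have h6 := dvd_add h4 (hmod.mul_left ((-1) ^ k))
      have : (-((-1) ^ k * (P : ℤ) ^ k) - 1) + (-1) ^ k * ((P : ℤ) ^ k - (-1) ^ k) = -2 := by
        linear_combination -hs
      rw [this] at h6
      exact (dvd_neg.1 h6)
    have := Int.le_of_dvd (by norm_num) h5
    omega

lemma geom_M (P k : ℕ) (hP : 2 ≤ P) : ∃ M : ℕ, P ^ (2 * k) = (P * P - 1) * M + 1 ∧
    (Odd P → (Odd M ↔ Odd k)) := by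
  induction k with
  | zero => exact ⟨0, by simp⟩
  | succ k ih =>
    obtain ⟨M, h1, h2⟩ := ih
    refine ⟨M + P ^ (2 * k), ?_, ?_⟩
    · rw [mul_add, mul_add, pow_add]
      obtain ⟨b, hb⟩ : ∃ b, P * P = b + 1 := ⟨P * P - 1, by
        have : 0 < P * P := by positivity
        omega⟩
      rw [show P ^ (2 * 1) = b + 1 by rw [← hb]; ring, hb]
      rw [hb] at h1
      simp only [Nat.add_sub_cancel] at *
      linarith
    · intro hP
      have h3 : Odd (P ^ (2 * k)) := hP.pow
      rw [Nat.odd_add, h2 hP, Nat.odd_add]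
      simp [Nat.not_even_iff_odd.2 h3, ← Nat.not_odd_iff_even]

lemma nonspecial {L : Type*} [Field L] [Fintype L] (p e k : ℕ) [Fact p.Prime] [CharP L p]
    (hL : Fintype.card L = p ^ (2 * e * k))
    (he : 0 < e) (γ : Lˣ) (hγ : ∀ u : Lˣ, u ∈ Subgroup.zpowers γ) (i : ℤ)
    (hi : ¬ (((p ^ e + 1 : ℕ) : ℤ) ∣ i - ((if 2 < p ∧ Odd k then (p ^ e + 1) / 2 else 0 : ℕ) : ℤ)))
    (x : L) (hx : ((γ ^ i : Lˣ) : L) * x + ((γ ^ i : Lˣ) : L) ^ p ^ e * x ^ (p ^ e * p ^ e) = 0) :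
    x = 0 := by
  by_contra hx0
  apply hi
  obtain ⟨w, hw⟩ := hγ (Units.mk0 x hx0)
  have hpp : p.Prime := Fact.out
  have hP2 : 2 ≤ p ^ e := le_trans hpp.two_le (Nat.le_self_pow he.ne' p)
  have hpe : (Odd p → Odd (p ^ e)) := fun h => h.pow
  have hxw : x = ((γ ^ w : Lˣ) : L) := by
    simp only at hw; rw [hw]; rfl
  rw [show 2 * e * k = e * (2 * k) by ring, pow_mul] at hL
  generalize p ^ e = P at *
  obtain ⟨M, hM, hodd⟩ := geom_M P k hP2
  have ho : orderOf γ = (P * P - 1) * M := by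
    rw [orderOf_eq_card_of_forall_mem_zpowers hγ, Nat.card_eq_fintype_card, Fintype.card_units, hL,
      hM]; simp
  have hoZ : ((orderOf γ : ℕ) : ℤ) = ((P : ℤ) - 1) * ((P + 1) * M) := by
    rw [ho]; push_cast [Nat.cast_sub (show 1 ≤ P * P by nlinarith)]; ring
  have hPz : ((P : ℤ) - 1) ≠ 0 := by omega
  set B : ℤ := i + (P + 1) * w with hB
  have hA : γ ^ (((P : ℤ) - 1) * B) = -1 := by
    have h1 : γ ^ i * γ ^ w = - (γ ^ (i * P) * γ ^ (w * (P * P))) := by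
      apply Units.ext
      rw [hxw] at hx
      push_cast
      have := eq_neg_of_add_eq_zero_left hx
      rw [zpow_mul, zpow_mul]
      push_cast at this ⊢
      rw [this]
      norm_cast
    have h2 : γ ^ (((P : ℤ) - 1) * B) * (γ ^ i * γ ^ w) = γ ^ (i * P) * γ ^ (w * (P * P)) := by
      rw [← zpow_add, ← zpow_add, ← zpow_add]; congr 1; rw [hB]; ring
    have h3 : γ ^ (i * P) * γ ^ (w * (P * P)) = (-1) * (γ ^ i * γ ^ w) := by
      rw [h1]; simp
    rw [h3] at h2
    exact mul_right_cancel h2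
  have hdv : ∀ z : ℤ, γ ^ (((P : ℤ) - 1) * z) = 1 ↔ ((P : ℤ) + 1) * M ∣ z := by
    intro z
    rw [← orderOf_dvd_iff_zpow_eq_one, hoZ, mul_dvd_mul_iff_left hPz]
  have h2B : ((P : ℤ) + 1) * M ∣ 2 * B := by
    rw [← hdv, show ((P : ℤ) - 1) * (2 * B) = (((P : ℤ) - 1) * B) + (((P : ℤ) - 1) * B) by ring,
      zpow_add, hA]; simp
  have hgoal : ∀ κ : ℤ, ((P : ℤ) + 1) ∣ B - κ → (((P + 1 : ℕ) : ℤ) ∣ i - κ) := by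
    intro κ h
    push_cast
    have : i - κ = B - κ - (P + 1) * w := by rw [hB]; ring
    rw [this]
    exact dvd_sub h (dvd_mul_right _ _)
  apply hgoal
  by_cases hp2 : p = 2
  · subst hp2
    have : (-1 : Lˣ) = 1 := by
      apply Units.ext
      have := CharTwo.two_eq_zero (R := L)
      push_cast
      linear_combination -this
    rw [this, hdv] at hA
    simp only [lt_self_iff_false, false_and, if_false, Nat.cast_zero, sub_zero]
    exact dvd_trans (dvd_mul_right _ _) hA
  · have hpo := hpp.odd_of_ne_two hp2
    have hPo := hpe hpo
    have hp3 : 2 < p := lt_of_le_of_ne hpp.two_le (Ne.symm hp2)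
    obtain ⟨o, ho⟩ := h2B
    have hoo : Odd o := by
      by_contra hne
      rw [Int.not_odd_iff_even] at hne
      obtain ⟨o', rfl⟩ := hne
      have : ((P : ℤ) + 1) * M ∣ B := ⟨o', by linarith⟩
      rw [← hdv, hA] at this
      have h5 := congrArg Units.val this
      push_cast at h5
      have : NeZero (2 : L) := ⟨Ring.two_ne_zero (by rw [ringChar.eq L p]; exact hp2)⟩
      have h6 : (2 : L) = 0 := by linear_combination -h5
      exact two_ne_zero h6
    obtain ⟨P', hP'⟩ := hPo
    by_cases hk : Odd k
    · rw [if_pos ⟨hp3, hk⟩]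
      have hMo : Odd (M : ℤ) := by exact_mod_cast ((hodd ⟨P', hP'⟩).2 hk)
      obtain ⟨y, hy⟩ := hMo.mul hoo
      have h7 : (P + 1) / 2 = P' + 1 := by omega
      rw [h7]
      refine ⟨y, ?_⟩
      subst hP'
      push_cast at *
      have : 2 * B = (2 * P' + 2) * (M * o) := by rw [ho]; ring
      rw [hy] at this
      linarith
    · rw [if_neg (fun h => hk h.2)]
      have hMo : Even (M : ℤ) := by
        have := mt (hodd ⟨P', hP'⟩).1 hk
        rw [Nat.not_odd_iff_even] at this
        exact_mod_cast this
      obtain ⟨y, hy⟩ := hMo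
      refine ⟨y * o, ?_⟩
      rw [hy] at ho
      push_cast
      linarith


lemma decomp {G : Type*} [CommGroup G] [Fintype G] (γ : G)
    (hγ : ∀ u : G, u ∈ Subgroup.zpowers γ) (N R : ℕ) (hR : 0 < R)
    (hN : N ∣ R) (hRG : R ∣ Nat.card G) (i : ℤ) (f : G → ℂ) :
    (∑ v, if InC γ N i v then f v else 0) =
      ∑ j ∈ Finset.range R, if (N : ℤ) ∣ j - i then (∑ v, if InC γ R j v then f v else 0) else 0 := by
  have h1 : ∀ j ∈ Finset.range R,
      (if (N : ℤ) ∣ j - i then (∑ v, if InC γ R j v then f v else 0) else 0)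
      = ∑ v, if (N : ℤ) ∣ j - i then (if InC γ R j v then f v else 0) else 0 := by
    intro j _
    split_ifs <;> simp
  rw [Finset.sum_congr rfl h1, Finset.sum_comm]
  refine Finset.sum_congr rfl fun v _ => ?_
  obtain ⟨w, rfl⟩ := hγ v
  simp only [InC_zpow γ hγ N (hN.trans hRG), InC_zpow γ hγ R hRG]
  have hR' : (0 : ℤ) < R := by exact_mod_cast hR
  have hj0 := Int.emod_nonneg w hR'.ne'
  have hj1 := Int.emod_lt_of_pos w hR'
  obtain ⟨j, hj⟩ := Int.eq_ofNat_of_zero_le hj0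
  have hdvd : (R : ℤ) ∣ w - j := by rw [← hj]; exact Int.dvd_self_sub_emod
  rw [Finset.sum_eq_single j]
  · rw [if_pos hdvd]
    have hNd : (N : ℤ) ∣ w - j := dvd_trans (by exact_mod_cast hN) hdvd
    have : ((N : ℤ) ∣ w - i) ↔ ((N : ℤ) ∣ j - i) := by
      rw [show w - i = (w - j) + (j - i) by ring]
      exact dvd_add_right hNd
    simp only [this]
  · intro b hb hbj
    have : ¬ (R : ℤ) ∣ w - b := by
      intro h
      apply hbj
      have h2 : (R : ℤ) ∣ (b : ℤ) - j := by
        have := dvd_sub hdvd h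
        rwa [show w - (j : ℤ) - (w - b) = b - j by ring] at this
      have hb' := Finset.mem_range.1 hb
      have := Int.eq_zero_of_abs_lt_dvd h2 (by rw [abs_lt]; constructor <;> omega)
      omega
    rw [if_neg this]; simp
  · intro hb
    exact absurd (Finset.mem_range.2 (by omega)) hb

lemma card_InC {G : Type*} [CommGroup G] [Fintype G] (γ : G)
    (hγ : ∀ u : G, u ∈ Subgroup.zpowers γ)
    (N : ℕ) (hN : N ∣ Nat.card G) (i : ℤ) :
    (Fintype.card G : ℂ) = N * ∑ v, if InC γ N i v then (1 : ℂ) else 0 := by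
  rw [← sum_pow_InC γ hγ N hN i (fun _ => 1)]; simp

lemma period_nonspecial {L : Type*} [Field L] [Fintype L] (p e k : ℕ) [Fact p.Prime] [CharP L p]
    (hL : Fintype.card L = p ^ (2 * e * k))
    (he : 0 < e) (γ : Lˣ) (hγ : ∀ u : Lˣ, u ∈ Subgroup.zpowers γ)
    (Ψ : AddChar L ℂ) (hp : Ψ.IsPrimitive) (hf : ∀ z, Ψ (z ^ p) = Ψ z) (i : ℤ)
    (hi : ¬ (((p ^ e + 1 : ℕ) : ℤ) ∣ i - ((if 2 < p ∧ Odd k then (p ^ e + 1) / 2 else 0 : ℕ) : ℤ))) :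
    (((p ^ e + 1 : ℕ) : ℂ)) * (∑ v, if InC γ (p ^ e + 1) i v then Ψ (v : Lˣ) else 0)
      = (-1) ^ k * ((p ^ e : ℕ) : ℂ) ^ k - 1 := by
  have hpp : p.Prime := Fact.out
  have hP2 : 2 ≤ p ^ e := le_trans hpp.two_le (Nat.le_self_pow he.ne' p)
  have hL' : Fintype.card L = (p ^ e) ^ (2 * k) := by
    rw [hL, ← pow_mul]; congr 1; ring
  obtain ⟨M, hM, -⟩ := geom_M (p ^ e) k hP2
  have hcu : Nat.card Lˣ = (p ^ e * p ^ e - 1) * M := by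
    rw [Nat.card_eq_fintype_card, Fintype.card_units, hL', hM]; simp
  have hfac : p ^ e * p ^ e - 1 = (p ^ e + 1) * (p ^ e - 1) := by
    have := Nat.sq_sub_sq (p ^ e) 1
    rw [← this]; congr 1; ring
  have hdvd : (p ^ e + 1) ∣ Nat.card Lˣ := by
    rw [hcu, hfac, mul_assoc]; exact dvd_mul_right _ _
  have hsq := T_sq p e Ψ hp hf ((γ ^ i : Lˣ) : L) (nonspecial p e k hL he γ hγ i hi)
  have hneg : ∃ y : Lˣ, y ^ (p ^ e + 1) = -1 := by
    by_cases hp2 : p = 2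
    · subst hp2
      refine ⟨1, ?_⟩
      apply Units.ext
      have := CharTwo.two_eq_zero (R := L)
      push_cast
      linear_combination this
    · obtain ⟨z, hz⟩ := hγ (-1)
      simp only at hz
      have hPo : Odd (p ^ e) := (hpp.odd_of_ne_two hp2).pow
      obtain ⟨P', hP'⟩ := hPo
      have h1 : γ ^ (2 * z) = 1 := by rw [two_mul, zpow_add, hz]; simp
      rw [← orderOf_dvd_iff_zpow_eq_one, orderOf_eq_card_of_forall_mem_zpowers hγ, hcu, hfac] at h1
      have h2 : ((p ^ e + 1 : ℕ) : ℤ) ∣ z := by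
        obtain ⟨o, ho⟩ := h1
        refine ⟨P' * M * o, ?_⟩
        have h3 : p ^ e - 1 = 2 * P' := by omega
        rw [h3] at ho
        push_cast at ho ⊢
        linarith
      obtain ⟨y, hy⟩ := h2
      exact ⟨γ ^ y, by rw [← zpow_natCast, ← zpow_mul, mul_comm, ← hy, hz]⟩
  have hreal : (∑ x, Ψ (-(((γ ^ i : Lˣ) : L) * x ^ (p ^ e + 1))))
      = ∑ x, Ψ (((γ ^ i : Lˣ) : L) * x ^ (p ^ e + 1)) := by
    obtain ⟨y, hy⟩ := hneg
    have hy' : (y : L) ^ (p ^ e + 1) = -1 := by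
      have := congrArg Units.val hy
      push_cast at this; exact this
    rw [← Equiv.sum_comp (Equiv.mulLeft₀ (y : L) y.ne_zero)
      (fun x => Ψ (((γ ^ i : Lˣ) : L) * x ^ (p ^ e + 1)))]
    refine Finset.sum_congr rfl fun x _ => ?_
    simp only [Equiv.mulLeft₀_apply, mul_pow, hy']
    congr 1; ring
  rw [hreal, hL'] at hsq
  set η := (∑ v, if InC γ (p ^ e + 1) i v then Ψ (v : Lˣ) else 0) with hη
  have hint : IsIntegral ℤ η := by
    refine IsIntegral.sum _ fun v _ => ?_
    split_ifs
    · refine IsIntegral.of_pow hpp.pos ?_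
      rw [← AddChar.map_nsmul_eq_pow, nsmul_eq_mul, CharP.cast_eq_zero, zero_mul,
        AddChar.map_zero_eq_one]
      exact isIntegral_one
    · exact isIntegral_zero
  have hT : ∑ x, Ψ (((γ ^ i : Lˣ) : L) * x ^ (p ^ e + 1)) = 1 + (((p ^ e : ℕ) : ℂ) + 1) * η := by
    rw [sum_units]
    have := sum_pow_InC γ hγ (p ^ e + 1) hdvd i (fun v => Ψ (v : L))
    rw [hη]
    push_cast at this ⊢
    rw [← this]
    simp
  have := sign_det (p ^ e) k hP2 _ η hint hT (by rw [hsq]; push_cast; rfl)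
  rw [hT] at this
  push_cast at this ⊢
  linear_combination this

lemma period_gen {L : Type*} [Field L] [Fintype L] (p e k : ℕ) [Fact p.Prime] [CharP L p]
    (hL : Fintype.card L = p ^ (2 * e * k))
    (he : 0 < e) (γ : Lˣ) (hγ : ∀ u : Lˣ, u ∈ Subgroup.zpowers γ)
    (Ψ : AddChar L ℂ) (hp : Ψ.IsPrimitive) (hf : ∀ z, Ψ (z ^ p) = Ψ z)
    (N : ℕ) (hN : N ∣ p ^ e + 1) (i : ℤ) :
    (N : ℂ) * (∑ v, if InC γ N i v then Ψ (v : Lˣ) else 0)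
      = (-1) ^ k * ((p ^ e : ℕ) : ℂ) ^ k - 1 -
        if (N : ℤ) ∣ i - kSemi p e k N 1 then N * ((-1) ^ k * ((p ^ e : ℕ) : ℂ) ^ k) else 0 := by
  have hpp : p.Prime := Fact.out
  have hP2 : 2 ≤ p ^ e := le_trans hpp.two_le (Nat.le_self_pow he.ne' p)
  have hL' : Fintype.card L = (p ^ e) ^ (2 * k) := by
    rw [hL, ← pow_mul]; congr 1; ring
  obtain ⟨M, hM, -⟩ := geom_M (p ^ e) k hP2
  have hcu : Nat.card Lˣ = (p ^ e * p ^ e - 1) * M := by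
    rw [Nat.card_eq_fintype_card, Fintype.card_units, hL', hM]; simp
  have hfac : p ^ e * p ^ e - 1 = (p ^ e + 1) * (p ^ e - 1) := by
    have := Nat.sq_sub_sq (p ^ e) 1
    rw [← this]; congr 1; ring
  have hdvd : (p ^ e + 1) ∣ Nat.card Lˣ := by
    rw [hcu, hfac, mul_assoc]; exact dvd_mul_right _ _
  set κ : ℕ := if 2 < p ∧ Odd k then (p ^ e + 1) / 2 else 0 with hκ
  have hκlt : κ < p ^ e + 1 := by rw [hκ]; split_ifs <;> omega
  set ε : ℂ := (-1) ^ k * ((p ^ e : ℕ) : ℂ) ^ k with hε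
  set η : ℤ → ℂ := fun j => ∑ v, if InC γ (p ^ e + 1) j v then Ψ (v : Lˣ) else 0 with hη
  have hR0 : (((p ^ e + 1 : ℕ)) : ℂ) ≠ 0 :=
    Nat.cast_ne_zero.2 (Nat.succ_ne_zero (p ^ e))
  have hns : ∀ j ∈ Finset.range (p ^ e + 1), j ≠ κ → η j = (ε - 1) / ((p ^ e + 1 : ℕ) : ℂ) := by
    intro j hj hjk
    rw [eq_div_iff hR0, mul_comm]
    refine period_nonspecial p e k hL he γ hγ Ψ hp hf j ?_
    intro h
    have hj' := Finset.mem_range.1 hj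
    have := Int.eq_zero_of_abs_lt_dvd h (by rw [abs_lt]; constructor <;> omega)
    omega
  have htot : ∑ j ∈ Finset.range (p ^ e + 1), η j = -1 := by
    have h1 := decomp γ hγ 1 (p ^ e + 1) (by omega) (one_dvd _) hdvd 0 (fun v => Ψ (v : L))
    simp only [Nat.cast_one, one_dvd, if_true] at h1
    rw [← h1]
    have h2 : ∀ v : Lˣ, InC γ 1 0 v := by
      intro v
      obtain ⟨w, rfl⟩ := hγ v
      exact ⟨w, by simp⟩
    simp only [h2, if_true]
    have h3 := sum_units (fun x : L => Ψ x)
    have h4 : Ψ ≠ 1 := by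
      have := hp one_ne_zero
      rwa [AddChar.mulShift_one] at this
    rw [AddChar.sum_eq_zero_of_ne_one h4, AddChar.map_zero_eq_one] at h3
    linear_combination -h3
  have hval : ∀ j ∈ Finset.range (p ^ e + 1),
      η j = (ε - 1) / ((p ^ e + 1 : ℕ) : ℂ) - if j = κ then ε else 0 := by
    intro j hj
    by_cases hjk : j = κ
    · subst hjk
      rw [if_pos rfl]
      have h1 := Finset.sum_erase_add _ (fun j : ℕ => η j) hj
      rw [htot, Finset.sum_congr rfl (fun b hb => hns b (Finset.mem_of_mem_erase hb)
        (Finset.ne_of_mem_erase hb)), Finset.sum_const, Finset.card_erase_of_mem hj,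
        Finset.card_range, nsmul_eq_mul] at h1
      simp only [Nat.add_sub_cancel] at h1
      push_cast at h1 hR0 ⊢
      field_simp at h1 ⊢
      linear_combination h1
    · rw [if_neg hjk, sub_zero]; exact hns j hj hjk
  have hN0 : 0 < N := Nat.pos_of_dvd_of_pos hN (by omega)
  have hcount : (N : ℂ) * (∑ j ∈ Finset.range (p ^ e + 1), if (N : ℤ) ∣ j - i then (1 : ℂ) else 0)
      = ((p ^ e + 1 : ℕ) : ℂ) := by
    have h1 := decomp γ hγ N (p ^ e + 1) (by omega) hN hdvd i (fun v => 1)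
    have h2 := card_InC γ hγ N (hN.trans hdvd) i
    rw [h1, Finset.mul_sum] at h2
    have h3 : ∀ j : ℤ, ∑ v : Lˣ, (if InC γ (p ^ e + 1) j v then (1 : ℂ) else 0)
        = (Fintype.card Lˣ : ℂ) / ((p ^ e + 1 : ℕ) : ℂ) := fun j => by
      rw [eq_div_iff hR0, card_InC γ hγ _ hdvd j, mul_comm]
    simp only [h3] at h2
    have hc : (Fintype.card Lˣ : ℂ) ≠ 0 := by exact_mod_cast Fintype.card_ne_zero
    rw [Finset.mul_sum]
    have h4 : ∀ j ∈ Finset.range (p ^ e + 1), (N : ℂ) * (if (N : ℤ) ∣ j - i then (1 : ℂ) else 0)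
      = (N * (if (N : ℤ) ∣ j - i then (Fintype.card Lˣ : ℂ) / ((p ^ e + 1 : ℕ) : ℂ) else 0)) *
        (((p ^ e + 1 : ℕ) : ℂ) / (Fintype.card Lˣ : ℂ)) := by
      intro j _
      split_ifs
      · field_simp
      · simp
    rw [Finset.sum_congr rfl h4, ← Finset.sum_mul, ← h2]
    field_simp
  have hcond : ((N : ℤ) ∣ i - kSemi p e k N 1) ↔ ((N : ℤ) ∣ κ - i) := by
    have hk : (N : ℤ) ∣ κ - kSemi p e k N 1 := by
      rw [hκ]
      unfold kSemi
      rw [mul_one]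
      by_cases h : 2 < p ∧ Odd k
      · rw [if_pos h]
        have hPo : Odd (p ^ e) := (hpp.odd_of_ne_two (by omega)).pow
        obtain ⟨P', hP'⟩ := hPo
        obtain ⟨b, hb⟩ := hN
        have hdiv : (p ^ e + 1) / N = b := by rw [hb]; exact Nat.mul_div_cancel_left _ hN0
        rw [hdiv]
        by_cases hbo : Odd b
        · rw [if_pos ⟨h.1, h.2, hbo⟩]
          obtain ⟨b', rfl⟩ := hbo
          have hNe : Even N := by
            have : Even (N * (2 * b' + 1)) := by rw [← hb, hP']; exact ⟨P' + 1, by ring⟩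
            rcases Nat.even_mul.1 this with h | h
            · exact h
            · exact absurd h (by simp)
          obtain ⟨N', rfl⟩ := hNe
          refine ⟨b', ?_⟩
          have h1 : (p ^ e + 1) / 2 = N' * (2 * b' + 1) := by
            rw [hb]
            rw [show (N' + N') * (2 * b' + 1) = 2 * (N' * (2 * b' + 1)) by ring]; simp
          have h2 : (N' + N') / 2 = N' := by omega
          rw [h1, h2]
          push_cast; ring
        · rw [if_neg (fun h => hbo h.2.2)]
          rw [Nat.not_odd_iff_even] at hbo
          obtain ⟨b', rfl⟩ := hbo
          refine ⟨b', ?_⟩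
          have h1 : (p ^ e + 1) / 2 = N * b' := by
            rw [hb]
            rw [show N * (b' + b') = 2 * (N * b') by ring]; simp
          rw [h1]; push_cast; ring
      · rw [if_neg h, if_neg (fun h' => h ⟨h'.1, h'.2.1⟩)]; simp
    rw [show (κ : ℤ) - i = (κ - kSemi p e k N 1) - (i - kSemi p e k N 1) by ring]
    exact (dvd_sub_right hk).symm
  rw [decomp γ hγ N (p ^ e + 1) (by omega) hN hdvd i (fun v => Ψ (v : L))]
  have h5 : ∀ j ∈ Finset.range (p ^ e + 1), (if (N : ℤ) ∣ j - i then (∑ v, if InC γ (p ^ e + 1) j v then Ψ (v : Lˣ) else 0) else 0)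
      = (ε - 1) / ((p ^ e + 1 : ℕ) : ℂ) * (if (N : ℤ) ∣ j - i then 1 else 0)
        - if j = κ then (if (N : ℤ) ∣ κ - i then ε else 0) else 0 := by
    intro j hj
    by_cases hjk : j = κ
    · have := hval j hj
      simp only [hη] at this
      rw [this, hjk]
      split_ifs <;> simp
    · have := hval j hj
      simp only [hη] at this
      rw [this]
      simp only [hjk, if_false]
      split_ifs <;> simp
  rw [Finset.sum_congr rfl h5, Finset.sum_sub_distrib, ← Finset.mul_sum, Finset.sum_ite_eq',
    if_pos (Finset.mem_range.2 hκlt), mul_sub]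
  have h6 : (N : ℂ) * ((ε - 1) / ((p ^ e + 1 : ℕ) : ℂ) *
      ∑ j ∈ Finset.range (p ^ e + 1), (if (N : ℤ) ∣ j - i then (1 : ℂ) else 0)) = ε - 1 := by
    rw [show (N : ℂ) * ((ε - 1) / ((p ^ e + 1 : ℕ) : ℂ) *
      ∑ j ∈ Finset.range (p ^ e + 1), (if (N : ℤ) ∣ j - i then (1 : ℂ) else 0)) =
      (ε - 1) / ((p ^ e + 1 : ℕ) : ℂ) * (N * ∑ j ∈ Finset.range (p ^ e + 1), (if (N : ℤ) ∣ j - i then (1 : ℂ) else 0)) by ring, hcount]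
    field_simp
  rw [h6]
  congr 1
  by_cases hc : (N : ℤ) ∣ κ - i
  · rw [if_pos hc, if_pos (hcond.2 hc)]
  · rw [if_neg hc, if_neg (fun h => hc (hcond.1 h))]; simp


lemma char_key (p : ℕ) [Fact p.Prime] (L : Type*) [Field L] [Fintype L] [Algebra (ZMod p) L] :
      (((ZMod.stdAddChar (N := p)).compAddMonoidHom
        (Algebra.trace (ZMod p) L).toAddMonoidHom : AddChar L ℂ)).IsPrimitive ∧
      ∀ z : L, Algebra.trace (ZMod p) L (z ^ p) = Algebra.trace (ZMod p) L z := by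
  have hfin : Module.Finite (ZMod p) L := Module.Finite.of_finite
  have halg : Algebra.IsAlgebraic (ZMod p) L := Algebra.IsAlgebraic.of_finite _ _
  have hsep : Algebra.IsSeparable (ZMod p) L := Algebra.IsAlgebraic.isSeparable_of_perfectField
  constructor
  · apply AddChar.IsPrimitive.of_ne_one
    intro h
    obtain ⟨x, hx⟩ := Algebra.trace_surjective (ZMod p) L 1
    have h1 := DFunLike.congr_fun h x
    simp [hx] at h1
    have h2 : (ZMod.stdAddChar (N := p)) (1 : ZMod p) = ZMod.stdAddChar (N := p) 0 := by
      rw [h1]; simp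
    exact one_ne_zero (ZMod.injective_stdAddChar h2)
  · intro z
    have := Algebra.trace_eq_of_algEquiv
      (FiniteField.frobeniusAlgEquivOfAlgebraic (ZMod p) L) z
    simpa [ZMod.card] using this

lemma exists_chars (p : ℕ) [Fact p.Prime] (F E : Type*) [Field F] [Fintype F] [Field E] [Fintype E]
    [Algebra F E] [CharP F p] [CharP E p] :
    ∃ (ψ : AddChar F ℂ) (Ψ : AddChar E ℂ), ψ.IsPrimitive ∧ Ψ.IsPrimitive ∧
      (∀ z, ψ (z ^ p) = ψ z) ∧ (∀ z, Ψ (z ^ p) = Ψ z) ∧ ∀ x, Ψ x = ψ (Algebra.trace F E x) := by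
  let := ZMod.algebra F p
  let := ZMod.algebra E p
  have hst : IsScalarTower (ZMod p) F E :=
    IsScalarTower.of_algebraMap_eq' (Subsingleton.elim _ _)
  refine ⟨_, _, (char_key p F).1, (char_key p E).1, ?_, ?_, ?_⟩
  · intro z
    simp [(char_key p F).2]
  · intro z
    simp [(char_key p E).2]
  · intro x
    simp [Algebra.trace_trace]

lemma core (p e n t : ℕ) [Fact p.Prime] (F E : Type*) [Field F] [Fintype F] [Field E] [Fintype E]
    [Algebra F E] [CharP E p] (he : 0 < e)
    (hE : Fintype.card E = p ^ (2 * e * (n * t)))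
    (γ : Eˣ) (hγ : ∀ u : Eˣ, u ∈ Subgroup.zpowers γ)
    (ψ : AddChar F ℂ) (Ψ : AddChar E ℂ) (h1 : ψ.IsPrimitive) (h2 : Ψ.IsPrimitive)
    (h3 : ∀ z, Ψ (z ^ p) = Ψ z) (h4 : ∀ x, Ψ x = ψ (Algebra.trace F E x))
    (S : ℕ) (hS : S ∣ p ^ e + 1) (hSE : S ∣ Nat.card Eˣ) (i0 : ℤ) (b : F) (ε : ℂ)
    (hε : ε = (-1) ^ (n * t) * ((p ^ e : ℕ) : ℂ) ^ (n * t)) :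
    (Fintype.card F : ℂ) * S *
      (∑ y : Eˣ, if Algebra.trace F E (y : E) = b ∧ InC γ S i0 y then (1 : ℂ) else 0)
    = (Fintype.card E : ℂ) - 1 + ∑ c : Fˣ, ψ (-(c * b)) * (ε - 1 -
        if InC γ S (kSemi p e n S t - i0) (Units.map (algebraMap F E).toMonoidHom c)
          then S * ε else 0) := by
  have hq : ∀ y : Eˣ, (Fintype.card F : ℂ) *
      (if Algebra.trace F E (y : E) = b ∧ InC γ S i0 y then (1 : ℂ) else 0)
      = ∑ c : F, if InC γ S i0 y then ψ (c * (Algebra.trace F E (y : E) - b)) else 0 := by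
    intro y
    by_cases hy : InC γ S i0 y
    · simp only [hy, and_true, if_true]
      rw [AddChar.sum_mulShift _ h1]
      simp [sub_eq_zero]
    · simp [hy]
  rw [mul_comm (Fintype.card F : ℂ), mul_assoc, Finset.mul_sum (a := (Fintype.card F : ℂ)),
    Finset.sum_congr rfl (fun y _ => hq y),
    Finset.sum_comm, sum_units, mul_add]
  congr 1
  · have := card_InC γ hγ S hSE i0
    simp only [zero_mul, AddChar.map_zero_eq_one]
    rw [← this, Fintype.card_units, Nat.cast_sub Fintype.card_pos]; simp
  · rw [Finset.mul_sum]
    refine Finset.sum_congr rfl fun c _ => ?_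
    set cE := Units.map (algebraMap F E).toMonoidHom c with hcE
    obtain ⟨w, hw⟩ := hγ cE
    simp only at hw
    have hterm : ∀ y : Eˣ, (if InC γ S i0 y then ψ (c * (Algebra.trace F E (y : E) - b)) else 0)
        = ψ (-(c * b)) * if InC γ S (i0 + w) (cE * y) then Ψ ((cE * y : Eˣ) : E) else 0 := by
      intro y
      have hiff : InC γ S (i0 + w) (cE * y) ↔ InC γ S i0 y := by
        obtain ⟨z, rfl⟩ := hγ y
        simp only
        rw [← hw, ← zpow_add, InC_zpow γ hγ S hSE, InC_zpow γ hγ S hSE]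
        rw [show w + z - (i0 + w) = z - i0 by ring]
      simp only [hiff]
      split_ifs
      · rw [h4, ← AddChar.map_add_eq_mul]
        congr 1
        have : ((cE * y : Eˣ) : E) = (c : F) • (y : E) := by
          rw [hcE, Algebra.smul_def]; rfl
        rw [this, map_smul, smul_eq_mul]; ring
      · simp
    have hcomp : (∑ y : Eˣ, if InC γ S (i0 + w) (cE * y) then Ψ ((cE * y : Eˣ) : E) else 0)
        = ∑ v : Eˣ, if InC γ S (i0 + w) v then Ψ ((v : Eˣ) : E) else 0 :=
      Equiv.sum_comp (Equiv.mulLeft cE)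
        (fun v => if InC γ S (i0 + w) v then Ψ ((v : Eˣ) : E) else 0)
    rw [Finset.sum_congr rfl (fun y _ => hterm y), ← Finset.mul_sum, hcomp]
    have := period_gen p e (n * t) hE he γ hγ Ψ h2 h3 S hS (i0 + w)
    rw [mul_left_comm, this, ← hε, ← hw]
    congr 2
    have hk : kSemi p e (n * t) S 1 = kSemi p e n S t := by simp [kSemi]
    rw [InC_zpow γ hγ S hSE, hk, show w - ((kSemi p e n S t : ℤ) - i0) = i0 + w - kSemi p e n S t by ring]
    congr

lemma cond_iff (S t0 l u : ℕ) (hl : l = Nat.gcd t0 S) (hlp : 0 < l) (hu : S = l * u)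
    (D j1 : ℤ) (hlD : (l : ℤ) ∣ D)
    (hj1 : ((t0 / l : ℕ) : ℤ) * j1 ≡ D / l [ZMOD u]) (j : ℤ) :
    ((S : ℤ) ∣ t0 * j - D) ↔ (u : ℤ) ∣ j - j1 := by
  obtain ⟨D', rfl⟩ := hlD
  have hlz : (l : ℤ) ≠ 0 := by exact_mod_cast hlp.ne'
  have hdt : l ∣ t0 := hl ▸ Nat.gcd_dvd_left _ _
  have hcop : Nat.Coprime (t0 / l) u := by
    have h := Nat.coprime_div_gcd_div_gcd (m := t0) (n := S) (by rw [← hl]; exact hlp)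
    rw [← hl, hu, Nat.mul_div_cancel_left _ hlp] at h
    exact h
  obtain ⟨t', ht'⟩ := hdt
  rw [ht', Nat.mul_div_cancel_left _ hlp] at hcop hj1
  rw [Int.mul_ediv_cancel_left _ hlz] at hj1
  have h1 : ((u : ℕ) : ℤ) ∣ D' - t' * j1 := hj1.dvd
  rw [hu, ht']
  push_cast
  rw [show (l : ℤ) * t' * j - l * D' = l * (t' * j - D') by ring, mul_dvd_mul_iff_left hlz,
    show (t' : ℤ) * j - D' = t' * (j - j1) - (D' - t' * j1) by ring, dvd_sub_left h1]
  have hc : IsCoprime (u : ℤ) (t' : ℤ) := (Nat.isCoprime_iff_coprime.2 hcop).symm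
  exact ⟨fun h => hc.dvd_of_dvd_mul_left h, fun h => h.mul_left _⟩

lemma cond_neg (S t0 l : ℕ) (hl : l = Nat.gcd t0 S) 
    (D : ℤ) (hlD : ¬ (l : ℤ) ∣ D) (j : ℤ) :
    ¬ ((S : ℤ) ∣ t0 * j - D) := by
  intro h
  apply hlD
  have h1 : (l : ℤ) ∣ S := by rw [hl]; exact_mod_cast Nat.gcd_dvd_right _ _
  have h2 : (l : ℤ) ∣ t0 := by rw [hl]; exact_mod_cast Nat.gcd_dvd_left _ _
  have := dvd_sub (h2.mul_right j) (h1.trans h)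
  rwa [sub_sub_cancel] at this

lemma cond_exists (S t0 l u : ℕ) (hl : l = Nat.gcd t0 S) (hlp : 0 < l) (hu : S = l * u)
    (D : ℤ) : ∃ j1 : ℤ, ((t0 / l : ℕ) : ℤ) * j1 ≡ D / l [ZMOD u] := by
  have hcop : Nat.Coprime (t0 / l) u := by
    have h := Nat.coprime_div_gcd_div_gcd (m := t0) (n := S) (by rw [← hl]; exact hlp)
    rw [← hl, hu, Nat.mul_div_cancel_left _ hlp] at h
    exact h
  obtain ⟨x, y, hxy⟩ := Nat.isCoprime_iff_coprime.2 hcop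
  refine ⟨x * (D / l), ?_⟩
  rw [Int.modEq_iff_dvd]
  refine ⟨y * (D / l), ?_⟩
  linear_combination -(D / l) * hxy

lemma mem_range_of_pow {E K : Type*} [Field E] [Fintype E] [Field K] [Algebra E K] (x : K)
    (hx : x ^ Fintype.card E = x) : ∃ y : E, algebraMap E K y = x := by
  have h1 : (Finset.univ.image (algebraMap E K)) ⊆ (X ^ Fintype.card E - X : K[X]).roots.toFinset := by
    intro z hz
    obtain ⟨y, -, rfl⟩ := Finset.mem_image.1 hz
    rw [Multiset.mem_toFinset, mem_roots (FiniteField.X_pow_card_sub_X_ne_zero K Fintype.one_lt_card)]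
    simp [← map_pow, FiniteField.pow_card]
  have h2 : (X ^ Fintype.card E - X : K[X]).roots.toFinset.card
      ≤ (Finset.univ.image (algebraMap E K)).card := by
    rw [Finset.card_image_of_injective _ (algebraMap E K).injective, Finset.card_univ]
    refine le_trans (Multiset.toFinset_card_le _) (le_trans (card_roots' _) ?_)
    rw [FiniteField.X_pow_card_sub_X_natDegree_eq K Fintype.one_lt_card]
  have h3 := Finset.eq_of_subset_of_card_le h1 h2
  have h4 : x ∈ (X ^ Fintype.card E - X : K[X]).roots.toFinset := by
    rw [Multiset.mem_toFinset, mem_roots (FiniteField.X_pow_card_sub_X_ne_zero K Fintype.one_lt_card)]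
    simp [hx]
  rw [← h3] at h4
  obtain ⟨y, -, hy⟩ := Finset.mem_image.1 h4
  exact ⟨y, hy⟩

lemma bridge (m s h t d i0 : ℕ) (ht0 : 0 < t) (hs1 : 1 < s)
    (F E K : Type*) [Field F] [Fintype F] [Field E] [Fintype E] [Field K] [Fintype K]
    [Algebra F E] [Algebra E K] [Algebra F K] [IsScalarTower F E K]
    (hE : Fintype.card E = Fintype.card F ^ t)
    (hK : Fintype.card K = Fintype.card F ^ m)
    (g : Fˣ) (hg : ∀ u' : Fˣ, u' ∈ Subgroup.zpowers g)
    (γ : Eˣ) (hγ : ∀ u' : Eˣ, u' ∈ Subgroup.zpowers γ)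
    (hγg : Algebra.norm F ((γ : Eˣ) : E) = (g : F))
    (hsq : s ∣ Fintype.card F - 1)
    (hd : d = Nat.gcd (m / t) s) (hdh : d ∣ h)
    (hSE : s / d ∣ Nat.card Eˣ)
    (hi0 : (m / (d * t)) * i0 ≡ h / d [MOD s / d])
    (hmt : ((m / t : ℕ) : F) ≠ 0) (a : F) :
    (NN F K (g : F) s h t a : ℂ) = ∑ y : Eˣ,
      if Algebra.trace F E (y : E) = ((m / t : ℕ) : F)⁻¹ * a ∧ InC γ (s / d) i0 y
        then (1 : ℂ) else 0 := by
  have hfin : Module.finrank E K = m / t := by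
    have h1 := Module.card_eq_pow_finrank (K := E) (V := K)
    rw [hK, hE, ← pow_mul] at h1
    have h2 := Nat.pow_right_injective (Fintype.one_lt_card (α := F)) h1
    rw [h2, Nat.mul_div_cancel_left _ ht0]
  have htr : ∀ y : E, Algebra.trace F K (algebraMap E K y) = ((m / t : ℕ) : F) * Algebra.trace F E y := by
    intro y
    rw [← Algebra.trace_trace (S := E), Algebra.trace_algebraMap, hfin, map_nsmul, nsmul_eq_mul]
  have hno : ∀ y : E, Algebra.norm F (algebraMap E K y) = Algebra.norm F y ^ (m / t) := by
    intro y
    rw [← Algebra.norm_norm (R := F) (S := E), Algebra.norm_algebraMap, hfin, map_pow]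
  have hdpos : 0 < d := by rw [hd]; exact Nat.gcd_pos_of_pos_right _ (by omega)
  have hnorm : ∀ y : Eˣ, (∃ k : ℕ, Algebra.norm F (algebraMap E K (y : E)) = (g : F) ^ (h + s * k))
      ↔ InC γ (s / d) i0 y := by
    intro y
    obtain ⟨w, rfl⟩ := hγ y
    simp only
    rw [InC_zpow γ hγ _ hSE, hno]
    have hgw : Algebra.norm F ((γ ^ w : Eˣ) : E) ^ (m / t) = ((g ^ (w * (m / t : ℕ)) : Fˣ) : F) := by
      have h1 : Units.map (Algebra.norm F (S := E)) γ = g := Units.ext hγg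
      have h2 : Units.map (Algebra.norm F (S := E)) (γ ^ w) = g ^ w := by rw [map_zpow, h1]
      have h3 := congrArg Units.val h2
      rw [Units.coe_map] at h3
      rw [zpow_mul, zpow_natCast, Units.val_pow_eq_pow_val, ← h3]
    rw [hgw]
    have hcu : Nat.card Fˣ = Fintype.card F - 1 := by
      rw [Nat.card_eq_fintype_card, Fintype.card_units]
    have hq0 : 0 < Nat.card Fˣ := Nat.card_pos
    have hstep : (∃ k : ℕ, ((g ^ (w * (m / t : ℕ)) : Fˣ) : F) = (g : F) ^ (h + s * k)) ↔
        InC g s h (g ^ (w * (m / t : ℕ))) := by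
      constructor
      · rintro ⟨k, hk⟩
        refine ⟨k, Units.ext ?_⟩
        rw [hk]
        have : ((h : ℤ) + s * k) = ((h + s * k : ℕ) : ℤ) := by push_cast; ring
        rw [this, zpow_natCast, Units.val_pow_eq_pow_val]
      · rintro ⟨j, hj⟩
        have hq0' : ((Nat.card Fˣ : ℕ) : ℤ) ≠ 0 := by exact_mod_cast hq0.ne'
        obtain ⟨k, hk⟩ := Int.eq_ofNat_of_zero_le (Int.emod_nonneg j hq0')
        refine ⟨k, ?_⟩
        rw [hj, ← Units.val_pow_eq_pow_val, ← zpow_natCast]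
        congr 1
        rw [zpow_eq_zpow_iff_modEq, orderOf_eq_card_of_forall_mem_zpowers hg]
        push_cast
        refine Int.ModEq.add_left _ (Int.ModEq.mul_left _ ?_)
        have hk' : (k : ℤ) = j % (Nat.card Fˣ : ℕ) := hk.symm
        rw [hk']
        exact (Int.mod_modEq _ _).symm
    rw [hstep, InC_zpow g hg s (by rw [hcu]; exact hsq)]
    obtain ⟨S, hS⟩ : d ∣ s := hd ▸ Nat.gcd_dvd_right _ _
    obtain ⟨m', hm'⟩ : d ∣ m / t := hd ▸ Nat.gcd_dvd_left _ _
    obtain ⟨h', hh'⟩ := hdh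
    have hcop : Nat.Coprime m' S := by
      have h := Nat.coprime_div_gcd_div_gcd (m := m / t) (n := s) (by rw [← hd]; exact hdpos)
      rw [← hd, hm', hS, Nat.mul_div_cancel_left _ hdpos, Nat.mul_div_cancel_left _ hdpos] at h
      exact h
    have hmm : m / (d * t) = m' := by
      rw [mul_comm, ← Nat.div_div_eq_div_mul, hm', Nat.mul_div_cancel_left _ hdpos]
    have hSd : s / d = S := by rw [hS, Nat.mul_div_cancel_left _ hdpos]
    have hhd : h / d = h' := by rw [hh', Nat.mul_div_cancel_left _ hdpos]
    rw [hmm, hhd, hSd] at hi0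
    have h1 : (S : ℤ) ∣ h' - m' * i0 := by
      have := (Int.natCast_modEq_iff.2 hi0).dvd
      push_cast at this; exact this
    rw [hSd, hS, hh', hm']
    push_cast
    have hdz : (d : ℤ) ≠ 0 := by exact_mod_cast hdpos.ne'
    rw [show w * ((d : ℤ) * m') - d * h' = d * (w * m' - h') by ring, mul_dvd_mul_iff_left hdz,
      show w * (m' : ℤ) - h' = m' * (w - i0) - (h' - m' * i0) by ring, dvd_sub_left h1]
    have hc : IsCoprime (S : ℤ) (m' : ℤ) := (Nat.isCoprime_iff_coprime.2 hcop).symm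
    exact ⟨fun h => hc.dvd_of_dvd_mul_left h, fun h => h.mul_left _⟩
  have hcard : NN F K (g : F) s h t a = Nat.card {y : Eˣ //
      Algebra.trace F E (y : E) = ((m / t : ℕ) : F)⁻¹ * a ∧ InC γ (s / d) i0 y} := by
    unfold NN
    symm
    have htr' : ∀ y : E, Algebra.trace F K (algebraMap E K y) = a ↔
        Algebra.trace F E y = ((m / t : ℕ) : F)⁻¹ * a := by
      intro y
      rw [htr, eq_inv_mul_iff_mul_eq₀ hmt]
    refine Nat.card_congr (Equiv.ofBijective (fun y => ⟨algebraMap E K ((y.1 : Eˣ) : E), ?_, ?_, ?_⟩) ⟨?_, ?_⟩)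
    · rw [← hE, ← map_pow, FiniteField.pow_card]
    · exact (htr' _).2 y.2.1
    · exact (hnorm _).2 y.2.2
    · intro y z hyz
      have := congrArg Subtype.val hyz
      exact Subtype.ext (Units.ext ((algebraMap E K).injective this))
    · rintro ⟨x, hx1, hx2, hx3⟩
      rw [← hE] at hx1
      obtain ⟨y, rfl⟩ := mem_range_of_pow x hx1
      have hy0 : y ≠ 0 := by
        rintro rfl
        obtain ⟨k, hk⟩ := hx3
        have : Module.Finite F K := Module.Finite.of_finite
        rw [map_zero, Algebra.norm_zero] at hk
        exact pow_ne_zero _ g.ne_zero hk.symm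
      exact ⟨⟨Units.mk0 y hy0, (htr' _).1 hx2, (hnorm (Units.mk0 y hy0)).1 hx3⟩, rfl⟩
  rw [hcard, Nat.card_eq_fintype_card, Fintype.card_subtype, Finset.sum_boole]


lemma kSemi_mod (p e n S l t : ℕ) (hp : p.Prime) (hS : S ∣ p ^ e + 1) (hl : l ∣ S) (hlt : l ∣ t) :
    (l : ℤ) ∣ (kSemi p e n S t : ℤ) - kSemi p e n l t := by
  unfold kSemi
  by_cases h : 2 < p ∧ Odd (n * t)
  · obtain ⟨hp2, hnt⟩ := h
    have hlo : Odd l := (Nat.odd_mul.1 hnt).2.of_dvd_nat hlt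
    have hPe : Even (p ^ e + 1) := ((hp.odd_of_ne_two (by omega)).pow).add_one
    have hl2 : ¬ Odd ((p ^ e + 1) / l) := by
      intro ho
      have := hlo.mul ho
      rw [Nat.mul_div_cancel' (hl.trans hS)] at this
      exact (Nat.not_odd_iff_even.2 hPe) this
    rw [if_neg (c := 2 < p ∧ Odd (n * t) ∧ Odd ((p ^ e + 1) / l)) (fun h => hl2 h.2.2)]
    split_ifs with h1
    · have hSe : Even S := by
        by_contra hne
        rw [Nat.not_even_iff_odd] at hne
        have := hne.mul h1.2.2
        rw [Nat.mul_div_cancel' hS] at this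
        exact (Nat.not_odd_iff_even.2 hPe) this
      have h2 : 2 * (S / 2) = S := Nat.mul_div_cancel' hSe.two_dvd
      have h3 : l ∣ S / 2 := by
        rw [← h2] at hl
        exact (Nat.Coprime.dvd_of_dvd_mul_left (Nat.coprime_two_right.2 hlo) hl)
      simpa using (Int.natCast_dvd_natCast.2 h3)
    · simp
  · rw [if_neg (fun h' => h ⟨h'.1, h'.2.1⟩), if_neg (fun h' => h ⟨h'.1, h'.2.1⟩)]; simp

lemma t0_gcd (q t S : ℕ) (hq : 2 ≤ q) (hS : S ∣ q - 1) :
    Nat.gcd ((q ^ t - 1) / (q - 1)) S = Nat.gcd t S := by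
  rw [← Nat.geomSum_eq hq]
  have h1 : q ≡ 1 [MOD S] := ((Nat.modEq_iff_dvd' (by omega)).2 hS).symm
  have h2 : ∑ k ∈ Finset.range t, q ^ k ≡ t [MOD S] := by
    induction t with
    | zero => simp; rfl
    | succ t ih =>
      rw [Finset.sum_range_succ]
      have := h1.pow t
      rw [one_pow] at this
      exact ih.add this
  exact h2.gcd_eq

/-- The values of `N_t` in the semiprimitive case `s ∣ p^e + 1`, `r = 2en`. -/
theorem stmt18 (p r m s h t d l u t0 i0 e n : ℕ) [Fact p.Prime] (hr : 0 < r) (hm : 2 ≤ m)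
    (ht : t ∣ m) (ht0 : 0 < t)
    (he : 0 < e) (hn : 0 < n) (hren : r = 2 * e * n)
    (hs1 : 1 < s) (hsd : s ∣ p ^ e + 1)
    (F E K : Type*) [Field F] [Fintype F] [Field E] [Fintype E] [Field K] [Fintype K]
    [Algebra F E] [Algebra E K] [Algebra F K] [IsScalarTower F E K]
    (hF : Fintype.card F = p ^ r) (hE : Fintype.card E = Fintype.card F ^ t)
    (hK : Fintype.card K = Fintype.card F ^ m)
    (g : Fˣ) (hg : ∀ u' : Fˣ, u' ∈ Subgroup.zpowers g)
    (γ : Eˣ) (hγ : ∀ u' : Eˣ, u' ∈ Subgroup.zpowers γ)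
    (hγg : Algebra.norm F ((γ : Eˣ) : E) = (g : F))
    (hsq : s ∣ Fintype.card F - 1) (hh : h < s)
    (hd : d = Nat.gcd (m / t) s) (hl : l = Nat.gcd t (s / d))
    (hu : u = s / (d * l)) (hT0 : t0 = (Fintype.card F ^ t - 1) / (Fintype.card F - 1))
    (hpmt : ¬ p ∣ m / t) (hdh : d ∣ h)
    (hi0 : i0 < s / d ∧ (m / (d * t)) * i0 ≡ h / d [MOD s / d])
    (a : F) (a0 : F) (ha0 : a0 = -(((m / t : ℕ) : F)) * a⁻¹)
    (ia0 : ℕ) (hia0 : a ≠ 0 → ((γ : Eˣ) : E) ^ ia0 = algebraMap F E a0)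
    (Δ : ℤ) (hΔ : Δ = (kSemi p e n (s / d) t : ℤ) - (i0 : ℤ) - (ia0 : ℤ))
    (j0 : ℕ)
    (hj0 : a ≠ 0 → (l : ℤ) ∣ Δ →
      j0 < u ∧ ((t0 / l : ℕ) : ℤ) * (j0 : ℤ) ≡ Δ / (l : ℤ) [ZMOD (u : ℤ)]) :
    (a = 0 → 1 < l → ¬ ((i0 : ℤ) ≡ (kSemi p e n l t : ℤ) [ZMOD (l : ℤ)]) →
      (NN F K (g : F) s h t a : ℝ) =
        ((d : ℝ) / (s : ℝ)) * ((Fintype.card F : ℝ) ^ (t - 1) - 1 +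
          (-1 : ℝ) ^ (n * t) * ((Fintype.card F : ℝ) - 1) *
            Real.sqrt ((Fintype.card F : ℝ) ^ ((t : ℤ) - 2)))) ∧
    (a = 0 → (l = 1 ∨ (1 < l ∧ (i0 : ℤ) ≡ (kSemi p e n l t : ℤ) [ZMOD (l : ℤ)])) →
      (NN F K (g : F) s h t a : ℝ) =
        ((d : ℝ) / (s : ℝ)) * ((Fintype.card F : ℝ) ^ (t - 1) - 1 -
          (-1 : ℝ) ^ (n * t) * ((Fintype.card F : ℝ) - 1) * ((l : ℝ) - 1) *
            Real.sqrt ((Fintype.card F : ℝ) ^ ((t : ℤ) - 2)))) ∧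
    (a ≠ 0 → ¬ ((l : ℤ) ∣ Δ) →
      (NN F K (g : F) s h t a : ℝ) =
        ((d : ℝ) / (s : ℝ)) * ((Fintype.card F : ℝ) ^ (t - 1) -
          (-1 : ℝ) ^ (n * t) * Real.sqrt ((Fintype.card F : ℝ) ^ ((t : ℤ) - 2)))) ∧
    (a ≠ 0 → (l : ℤ) ∣ Δ → 1 < u → ¬ ((j0 : ℤ) ≡ (kSemi p e n u 1 : ℤ) [ZMOD (u : ℤ)]) →
      (NN F K (g : F) s h t a : ℝ) =
        ((d : ℝ) / (s : ℝ)) * ((Fintype.card F : ℝ) ^ (t - 1) -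
          (-1 : ℝ) ^ (n * t) *
            (((-1 : ℝ) ^ n * Real.sqrt (Fintype.card F : ℝ) - 1) * (l : ℝ) + 1) *
            Real.sqrt ((Fintype.card F : ℝ) ^ ((t : ℤ) - 2)))) ∧
    (a ≠ 0 → (l : ℤ) ∣ Δ → (u = 1 ∨ (j0 : ℤ) ≡ (kSemi p e n u 1 : ℤ) [ZMOD (u : ℤ)]) →
      (NN F K (g : F) s h t a : ℝ) =
        ((d : ℝ) / (s : ℝ)) * ((Fintype.card F : ℝ) ^ (t - 1) -
          (-1 : ℝ) ^ (n * t) *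
            (((-1 : ℝ) ^ (n - 1) * ((u : ℝ) - 1) * Real.sqrt (Fintype.card F : ℝ) - 1) *
              (l : ℝ) + 1) *
            Real.sqrt ((Fintype.card F : ℝ) ^ ((t : ℤ) - 2)))) := by
  have hpp : p.Prime := Fact.out
  have hdpos : 0 < d := by rw [hd]; exact Nat.gcd_pos_of_pos_right _ (by omega)
  have hds : d ∣ s := hd ▸ Nat.gcd_dvd_right _ _
  obtain ⟨S, hS⟩ : ∃ S, S = s / d := ⟨_, rfl⟩
  have hsS : s = d * S := by rw [hS, Nat.mul_div_cancel' hds]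
  rw [← hS] at hl hi0 hΔ
  have hSpos : 0 < S := by
    rcases Nat.eq_zero_or_pos S with h | h
    · rw [h] at hsS; omega
    · exact h
  have hlpos : 0 < l := by rw [hl]; exact Nat.gcd_pos_of_pos_left _ ht0
  have hlS : l ∣ S := hl ▸ Nat.gcd_dvd_right _ _
  have hlt : l ∣ t := hl ▸ Nat.gcd_dvd_left _ _
  have huS : S = l * u := by
    rw [hu, ← Nat.div_div_eq_div_mul, ← hS, Nat.mul_div_cancel' hlS]
  have hSs : S ∣ s := hsS ▸ dvd_mul_left _ _
  have hSp : S ∣ p ^ e + 1 := hSs.trans hsd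
  have hup : u ∣ p ^ e + 1 := (huS ▸ dvd_mul_left u l : u ∣ S).trans hSp
  have hq2 : 2 ≤ Fintype.card F := Fintype.one_lt_card
  have hSq : S ∣ Fintype.card F - 1 := hSs.trans hsq
  have huq : u ∣ Nat.card Fˣ := by
    rw [Nat.card_eq_fintype_card, Fintype.card_units]
    exact (huS ▸ dvd_mul_left u l : u ∣ S).trans hSq
  have hSE : S ∣ Nat.card Eˣ := by
    rw [Nat.card_eq_fintype_card, Fintype.card_units, hE]
    exact hSq.trans (by simpa using Nat.sub_dvd_pow_sub_pow (Fintype.card F) 1 t)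
  have hcF : CharP F p := charP_of_card_eq_prime_pow hF
  have hcE : CharP E p := charP_of_injective_algebraMap (algebraMap F E).injective p
  have hmt : ((m / t : ℕ) : F) ≠ 0 := fun h => hpmt ((CharP.cast_eq_zero_iff F p _).1 h)
  have hFc : Fintype.card F = p ^ (2 * e * n) := by rw [hF, hren]
  have hEc : Fintype.card E = p ^ (2 * e * (n * t)) := by
    rw [hE, hFc, ← pow_mul]; congr 1; ring
  have hgcd : l = Nat.gcd t0 S := by rw [hT0, t0_gcd _ _ _ hq2 hSq, hl]
  have hmapg : Units.map (algebraMap F E).toMonoidHom g = γ ^ t0 := by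
    apply Units.ext
    have h1 := FiniteField.algebraMap_norm_eq_pow (K := F) (K' := E) (x := (γ : E))
    rw [hγg, Nat.card_eq_fintype_card, Nat.card_eq_fintype_card, hE, ← hT0] at h1
    simpa using h1
  have hmap : ∀ j : ℤ, Units.map (algebraMap F E).toMonoidHom (g ^ j) = γ ^ ((t0 : ℤ) * j) := by
    intro j
    rw [map_zpow, hmapg, zpow_mul, zpow_natCast]
  obtain ⟨ψ, Ψ, h1, h2, h3', h3, h4⟩ := exists_chars p F E
  have hbr := bridge m s h t d i0 ht0 hs1 F E K hE hK g hg γ hγ hγg hsq hd hdh (hS ▸ hSE)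
    (hS ▸ hi0.2) hmt a
  rw [← hS] at hbr
  have hcore := core p e n t F E he hEc γ hγ ψ Ψ h1 h2 h3 h4 S hSp hSE i0
    (((m / t : ℕ) : F)⁻¹ * a) _ rfl
  rw [← hbr] at hcore
  obtain ⟨R, hR⟩ : ∃ R : ℕ, R = (p ^ e) ^ n := ⟨_, rfl⟩
  have hRpos : 0 < R := by rw [hR]; exact pow_pos (pow_pos hpp.pos _) _
  have hqR : Fintype.card F = R ^ 2 := by
    rw [hFc, hR, ← pow_mul, ← pow_mul]; congr 1; ring
  have hQR : Fintype.card E = R ^ (2 * t) := by rw [hE, hqR, pow_mul]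
  have hε : ((p ^ e : ℕ) : ℂ) ^ (n * t) = (R : ℂ) ^ t := by
    rw [hR]; push_cast; rw [pow_mul]
  have hδ : ((p ^ e : ℕ) : ℂ) ^ n = (R : ℂ) := by
    rw [hR]; push_cast; rfl
  rw [hε, hQR, hqR] at hcore
  have hsq1 : Real.sqrt (Fintype.card F : ℝ) = R := by
    rw [hqR]; push_cast; exact Real.sqrt_sq (Nat.cast_nonneg _)
  have hRr : (R : ℝ) ≠ 0 := by exact_mod_cast hRpos.ne'
  have hsq2 : Real.sqrt ((Fintype.card F : ℝ) ^ ((t : ℤ) - 2)) = (R : ℝ) ^ t / (R : ℝ) ^ 2 := by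
    rw [hqR]
    have : (((R ^ 2 : ℕ) : ℝ)) ^ ((t : ℤ) - 2) = ((R : ℝ) ^ t / (R : ℝ) ^ 2) ^ 2 := by
      push_cast
      rw [zpow_sub₀ (by positivity), zpow_natCast, div_pow]
      congr 1
      · rw [← pow_mul, ← pow_mul, mul_comm]
    rw [this]
    exact Real.sqrt_sq (by positivity)
  have hqt : (Fintype.card F : ℝ) ^ (t - 1) = (R : ℝ) ^ (2 * t) / (R : ℝ) ^ 2 := by
    rw [hqR, eq_div_iff (by positivity)]
    push_cast
    rw [← pow_mul, ← pow_add]; congr 1; omega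
  have hds' : (d : ℝ) / (s : ℝ) = 1 / S := by
    rw [hsS]; push_cast
    have : (d : ℝ) ≠ 0 := by exact_mod_cast hdpos.ne'
    have : (S : ℝ) ≠ 0 := by exact_mod_cast hSpos.ne'
    field_simp
  have hSr : (S : ℝ) ≠ 0 := by exact_mod_cast hSpos.ne'
  have huC : (S : ℂ) = l * u := by rw [huS]; push_cast; ring
  have hcardU : (Fintype.card Fˣ : ℂ) = (R : ℂ) ^ 2 - 1 := by
    rw [Fintype.card_units, Nat.cast_sub Fintype.card_pos, hqR]; push_cast; ring
  rw [hsq1, hsq2, hqt, hds']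
  have hqRr : (Fintype.card F : ℝ) = (R : ℝ) ^ 2 := by rw [hqR]; push_cast; rfl
  rw [hqRr]
  have hkl := kSemi_mod p e n S l t hpp hSp hlS hlt
  have hmk : ((i0 : ℤ) ≡ (kSemi p e n l t : ℤ) [ZMOD (l : ℤ)]) ↔
      (l : ℤ) ∣ (kSemi p e n S t : ℤ) - i0 := by
    rw [Int.modEq_iff_dvd, show (kSemi p e n S t : ℤ) - i0 =
      ((kSemi p e n S t : ℤ) - kSemi p e n l t) + ((kSemi p e n l t : ℤ) - i0) by ring]
    exact (dvd_add_right hkl).symm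
  -- the case of trace zero
  have hA : a = 0 → ((R : ℝ) ^ 2 * S * (NN F K (g : F) s h t a : ℝ)) = (R : ℝ) ^ (2 * t) - 1 +
      ((R : ℝ) ^ 2 - 1) * ((-1) ^ (n * t) * (R : ℝ) ^ t - 1) -
      (if (l : ℤ) ∣ (kSemi p e n S t : ℤ) - i0 then
        (l : ℝ) * ((R : ℝ) ^ 2 - 1) * ((-1) ^ (n * t) * (R : ℝ) ^ t) else 0) := by
    intro ha
    simp only [ha, mul_zero, neg_zero, AddChar.map_zero_eq_one, one_mul,
      Finset.sum_sub_distrib, Finset.sum_const, Finset.card_univ, nsmul_eq_mul, hcardU] at hcore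
    rw [ha]
    by_cases hc : (l : ℤ) ∣ (kSemi p e n S t : ℤ) - i0
    · obtain ⟨j1, hj1⟩ := cond_exists S t0 l u hgcd hlpos huS ((kSemi p e n S t : ℤ) - i0)
      have hiff : ∀ c : Fˣ, InC γ S ((kSemi p e n S t : ℤ) - i0)
          (Units.map (algebraMap F E).toMonoidHom c) ↔ InC g u j1 c := by
        intro c
        obtain ⟨j, rfl⟩ := hg c
        simp only
        rw [hmap, InC_zpow γ hγ S hSE, InC_zpow g hg u huq]
        exact cond_iff S t0 l u hgcd hlpos huS _ j1 hc hj1 j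
      have hcnt := card_InC g hg u huq j1
      rw [hcardU] at hcnt
      have hsum : ∑ c : Fˣ, (if InC γ S ((kSemi p e n S t : ℤ) - i0)
          (Units.map (algebraMap F E).toMonoidHom c) then
            (S : ℂ) * ((-1) ^ (n * t) * (R : ℂ) ^ t) else 0)
          = (l : ℂ) * ((R : ℂ) ^ 2 - 1) * ((-1) ^ (n * t) * (R : ℂ) ^ t) := by
        rw [hcnt, huC, Finset.mul_sum, Finset.mul_sum, Finset.sum_mul]
        refine Finset.sum_congr rfl fun c _ => ?_
        by_cases hcc : InC g u j1 c
        · rw [if_pos hcc, if_pos ((hiff c).2 hcc)]; ring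
        · rw [if_neg hcc, if_neg (fun h => hcc ((hiff c).1 h))]; ring
      rw [hsum] at hcore
      rw [if_pos hc]
      have : ((R : ℂ) ^ 2 * S * (NN F K (g : F) s h t 0 : ℂ)) = (R : ℂ) ^ (2 * t) - 1 +
        ((R : ℂ) ^ 2 - 1) * ((-1) ^ (n * t) * (R : ℂ) ^ t - 1) -
        (l : ℂ) * ((R : ℂ) ^ 2 - 1) * ((-1) ^ (n * t) * (R : ℂ) ^ t) := by
        push_cast at hcore
        linear_combination hcore
      exact_mod_cast this
    · have hno : ∀ c : Fˣ, ¬ InC γ S ((kSemi p e n S t : ℤ) - i0)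
          (Units.map (algebraMap F E).toMonoidHom c) := by
        intro c
        obtain ⟨j, rfl⟩ := hg c
        simp only
        rw [hmap, InC_zpow γ hγ S hSE]
        exact cond_neg S t0 l hgcd _ hc j
      rw [Finset.sum_eq_zero (fun c _ => if_neg (hno c))] at hcore
      rw [if_neg hc]
      have : ((R : ℂ) ^ 2 * S * (NN F K (g : F) s h t 0 : ℂ)) = (R : ℂ) ^ (2 * t) - 1 +
        ((R : ℂ) ^ 2 - 1) * ((-1) ^ (n * t) * (R : ℂ) ^ t - 1) - 0 := by
        push_cast at hcore
        linear_combination hcore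
      exact_mod_cast this
  -- the case of nonzero trace
  have hB : a ≠ 0 → ((R : ℝ) ^ 2 * S * (NN F K (g : F) s h t a : ℝ)) = (R : ℝ) ^ (2 * t) -
      ((-1) ^ (n * t) * (R : ℝ) ^ t) -
      (if (l : ℤ) ∣ Δ then
        (l : ℝ) * ((-1) ^ (n * t) * (R : ℝ) ^ t) * ((-1) ^ n * (R : ℝ) - 1 -
          if (u : ℤ) ∣ j0 - kSemi p e n u 1 then (u : ℝ) * ((-1) ^ n * (R : ℝ)) else 0) else 0) := by
    intro ha
    have ha0' : a0 ≠ 0 := by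
      rw [ha0]; exact mul_ne_zero (neg_ne_zero.2 hmt) (inv_ne_zero ha)
    have hre : ∀ f : Fˣ → ℂ, ∑ c : Fˣ, f c = ∑ c : Fˣ, f (c * Units.mk0 a0 ha0') := fun f =>
      (Equiv.sum_comp (Equiv.mulRight (Units.mk0 a0 ha0')) f).symm
    rw [hre] at hcore
    have harg : ∀ c : Fˣ, -(((c * Units.mk0 a0 ha0' : Fˣ) : F) * (((m / t : ℕ) : F)⁻¹ * a)) = c := by
      intro c
      rw [Units.val_mul, Units.val_mk0, ha0]
      field_simp
    simp only [harg] at hcore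
    have hmapa : Units.map (algebraMap F E).toMonoidHom (Units.mk0 a0 ha0') = γ ^ (ia0 : ℤ) := by
      apply Units.ext
      rw [zpow_natCast, Units.val_pow_eq_pow_val, hia0 ha]
      rfl
    have hcnd : ∀ j : ℤ, InC γ S ((kSemi p e n S t : ℤ) - i0)
        (Units.map (algebraMap F E).toMonoidHom (g ^ j * Units.mk0 a0 ha0')) ↔
        (S : ℤ) ∣ t0 * j - Δ := by
      intro j
      rw [map_mul, hmapa, hmap, ← zpow_add, InC_zpow γ hγ S hSE, hΔ]
      rw [show (t0 : ℤ) * j + ia0 - ((kSemi p e n S t : ℤ) - i0) =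
        t0 * j - ((kSemi p e n S t : ℤ) - i0 - ia0) by ring]
    have hpsi : ∑ c : Fˣ, ψ (c : F) = -1 := by
      have h5 := sum_units (fun x : F => ψ x)
      have h6 : ψ ≠ 1 := by
        have := h1 one_ne_zero
        rwa [AddChar.mulShift_one] at this
      rw [AddChar.sum_eq_zero_of_ne_one h6, AddChar.map_zero_eq_one] at h5
      linear_combination -h5
    simp only [mul_sub (ψ _), Finset.sum_sub_distrib, ← Finset.sum_mul, hpsi] at hcore
    by_cases hc : (l : ℤ) ∣ Δ
    · obtain ⟨-, hj1⟩ := hj0 ha hc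
      have hper := period_gen p e n hFc he g hg ψ h1 h3' u hup j0
      have hsum : ∑ c : Fˣ, ψ (c : F) * (if InC γ S ((kSemi p e n S t : ℤ) - i0)
          (Units.map (algebraMap F E).toMonoidHom (c * Units.mk0 a0 ha0')) then
            (S : ℂ) * ((-1) ^ (n * t) * (R : ℂ) ^ t) else 0)
          = (l : ℂ) * ((-1) ^ (n * t) * (R : ℂ) ^ t) *
            (u * ∑ c : Fˣ, if InC g u j0 c then ψ (c : F) else 0) := by
        rw [huC, Finset.mul_sum, Finset.mul_sum]
        refine Finset.sum_congr rfl fun c _ => ?_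
        have hiff : InC γ S ((kSemi p e n S t : ℤ) - i0)
          (Units.map (algebraMap F E).toMonoidHom (c * Units.mk0 a0 ha0')) ↔ InC g u j0 c := by
          obtain ⟨j, rfl⟩ := hg c
          simp only
          rw [hcnd, InC_zpow g hg u huq]
          exact cond_iff S t0 l u hgcd hlpos huS _ j0 hc hj1 j
        by_cases hcc : InC g u j0 c
        · rw [if_pos hcc, if_pos (hiff.2 hcc)]; ring
        · rw [if_neg hcc, if_neg (fun h => hcc (hiff.1 h))]; ring
      rw [hsum, hper, hδ] at hcore
      rw [if_pos hc]
      by_cases hc2 : (u : ℤ) ∣ j0 - kSemi p e n u 1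
      · rw [if_pos hc2] at hcore ⊢
        have : ((R : ℂ) ^ 2 * S * (NN F K (g : F) s h t a : ℂ)) = (R : ℂ) ^ (2 * t) -
          ((-1) ^ (n * t) * (R : ℂ) ^ t) -
          (l : ℂ) * ((-1) ^ (n * t) * (R : ℂ) ^ t) * ((-1) ^ n * (R : ℂ) - 1 -
          (u : ℂ) * ((-1) ^ n * (R : ℂ))) := by
          push_cast at hcore
          linear_combination hcore
        exact_mod_cast this
      · rw [if_neg hc2] at hcore ⊢
        have : ((R : ℂ) ^ 2 * S * (NN F K (g : F) s h t a : ℂ)) = (R : ℂ) ^ (2 * t) -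
          ((-1) ^ (n * t) * (R : ℂ) ^ t) -
          (l : ℂ) * ((-1) ^ (n * t) * (R : ℂ) ^ t) * ((-1) ^ n * (R : ℂ) - 1 - 0) := by
          push_cast at hcore
          linear_combination hcore
        exact_mod_cast this
    · have hno : ∀ c : Fˣ, ¬ InC γ S ((kSemi p e n S t : ℤ) - i0)
          (Units.map (algebraMap F E).toMonoidHom (c * Units.mk0 a0 ha0')) := by
        intro c
        obtain ⟨j, rfl⟩ := hg c
        simp only
        rw [hcnd]
        exact cond_neg S t0 l hgcd _ hc j
      rw [Finset.sum_eq_zero (fun c _ => by rw [if_neg (hno c), mul_zero])] at hcore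
      rw [if_neg hc]
      have : ((R : ℂ) ^ 2 * S * (NN F K (g : F) s h t a : ℂ)) = (R : ℂ) ^ (2 * t) -
          ((-1) ^ (n * t) * (R : ℂ) ^ t) - 0 := by
        push_cast at hcore
        linear_combination hcore
      exact_mod_cast this
  have hju : ((j0 : ℤ) ≡ (kSemi p e n u 1 : ℤ) [ZMOD (u : ℤ)]) ↔
      (u : ℤ) ∣ j0 - kSemi p e n u 1 := by
    rw [Int.modEq_iff_dvd, dvd_sub_comm]
  have fin : ∀ X Y : ℝ, (R : ℝ) ^ 2 * S * (NN F K (g : F) s h t a : ℝ) = X →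
      X = (R : ℝ) ^ 2 * Y → (NN F K (g : F) s h t a : ℝ) = 1 / S * Y := by
    intro X Y hX hXY
    rw [hXY, mul_assoc] at hX
    have := mul_left_cancel₀ (pow_ne_zero 2 hRr) hX
    rw [← this]; field_simp
  refine ⟨fun ha hl1 hne => ?_, fun ha hor => ?_, fun ha hne => ?_, fun ha hd1 hu1 hne => ?_,
    fun ha hd1 hor => ?_⟩
  · refine fin _ _ (hA ha) ?_
    rw [if_neg (fun h => hne (hmk.2 h))]
    field_simp
    ring
  · have hc : (l : ℤ) ∣ (kSemi p e n S t : ℤ) - i0 := by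
      rcases hor with h | h
      · rw [h]; simp
      · exact hmk.1 h.2
    refine fin _ _ (hA ha) ?_
    rw [if_pos hc]
    field_simp
    ring
  · refine fin _ _ (hB ha) ?_
    rw [if_neg hne]
    field_simp
    ring
  · refine fin _ _ (hB ha) ?_
    rw [if_pos hd1, if_neg (fun h => hne (hju.2 h))]
    field_simp
    ring
  · have hc : (u : ℤ) ∣ j0 - kSemi p e n u 1 := by
      rcases hor with h | h
      · rw [h]; simp
      · exact hju.1 h
    refine fin _ _ (hB ha) ?_
    rw [if_pos hd1, if_pos hc]
    obtain ⟨n', rfl⟩ : ∃ n', n = n' + 1 := ⟨n - 1, by omega⟩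
    rw [Nat.add_sub_cancel, pow_succ (-1 : ℝ) n']
    field_simp
    ring

end
end
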